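/- arXiv:1606.00272 — 2 statements merged into one kernel-verified Lean document; each statement's English description precedes it below -/
import Mathlib

section
/- Let R be a commutative ring and n ≥ 4 an integer. Then K₂(n,R) := ker(φ : St(n,R) → GL(n,R)) is contained in the center of St(n,R). (This is the centrality of K₂ for the simply-laced root system A_{n−1} of rank ≥ 3.) -/
open scoped commutatorElement

/-- Generators of the Steinberg group: triples (i,j,r) with i ≠ j. -/
abbrev StGen (n : ℕ) (R : Type) : Type := {p : Fin n × Fin n // p.1 ≠ p.2} × R

/-- The Steinberg relations. -/
inductive StRels (n : ℕ) (R : Type) [CommRing R] : FreeGroup (StGen n R) → Prop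
  | add (i j : Fin n) (hij : i ≠ j) (r s : R) :
      StRels n R (FreeGroup.of (⟨(i, j), hij⟩, r) * FreeGroup.of (⟨(i, j), hij⟩, s) *
        (FreeGroup.of (⟨(i, j), hij⟩, r + s))⁻¹)
  | commZero (i j h k : Fin n) (hij : i ≠ j) (hhk : h ≠ k) (hjh : j ≠ h) (hik : i ≠ k) (r s : R) :
      StRels n R ⁅(FreeGroup.of (⟨(i, j), hij⟩, r) : FreeGroup (StGen n R)), FreeGroup.of (⟨(h, k), hhk⟩, s)⁆
  | commAdd (i j k : Fin n) (hij : i ≠ j) (hjk : j ≠ k) (hik : i ≠ k) (r s : R) :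
      StRels n R (⁅(FreeGroup.of (⟨(i, j), hij⟩, r) : FreeGroup (StGen n R)), FreeGroup.of (⟨(j, k), hjk⟩, s)⁆ *
        (FreeGroup.of (⟨(i, k), hik⟩, r * s))⁻¹)

/-- The Steinberg group `St(n, R)`. -/
abbrev SteinbergGroup (n : ℕ) (R : Type) [CommRing R] : Type :=
  PresentedGroup {w | StRels n R w}

/-- The generator `x_{ij}(r)` of the Steinberg group. -/
def stx (n : ℕ) (R : Type) [CommRing R] (i j : Fin n) (hij : i ≠ j) (r : R) :
    SteinbergGroup n R :=
  PresentedGroup.of (⟨(i, j), hij⟩, r)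


namespace StK2

structure SS {ι R G : Type} [CommRing R] [Group G] (x : ι → ι → R → G) : Prop where
  diag : ∀ i r, x i i r = 1
  add : ∀ i j r s, x i j (r + s) = x i j r * x i j s
  c0 : ∀ i j h k r s, j ≠ h → i ≠ k → Commute (x i j r) (x h k s)
  c1 : ∀ i j k r s, i ≠ j → j ≠ k → i ≠ k →
    MulAut.conj (x i j r) (x j k s) = x i k (r * s) * x j k s

theorem cj_iff {G : Type} [Group G] {g a : G} : MulAut.conj g a = a ↔ Commute g a := by
  rw [MulAut.conj_apply, mul_inv_eq_iff_eq_mul]; rfl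

section P
variable {ι R G : Type} [Fintype ι] [DecidableEq ι] [CommRing R] [Group G]

noncomputable def P (f : ι → R → G) (v : ι → R) : G :=
  ((Finset.univ : Finset ι).toList.map (fun j => f j (v j))).prod

theorem P_add (f : ι → R → G) (ha : ∀ i r s, f i (r + s) = f i r * f i s)
    (hc : ∀ i j r s, Commute (f i r) (f j s)) (u v : ι → R) :
    P f (u + v) = P f u * P f v := by
  unfold P
  induction (Finset.univ : Finset ι).toList with
  | nil => simp
  | cons a l ih =>
    simp only [List.map_cons, List.prod_cons, Pi.add_apply] at ih ⊢
    rw [ih, ha]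
    have : Commute (f a (v a)) ((l.map (fun j => f j (u j))).prod) := by
      apply Commute.list_prod_right
      intro y hy
      obtain ⟨j, -, rfl⟩ := List.mem_map.1 hy
      exact hc _ _ _ _
    simp only [mul_assoc]
    rw [← mul_assoc (f a (v a)), this.eq, mul_assoc]

theorem P_single (f : ι → R → G) (h0 : ∀ i, f i 0 = 1) (i : ι) (c : R) :
    P f (Pi.single i c) = f i c := by
  unfold P
  have key : ∀ l : List ι, l.Nodup →
      (l.map (fun j => f j ((Pi.single i c : ι → R) j))).prod = if i ∈ l then f i c else 1 := by
    intro l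
    induction l with
    | nil => simp
    | cons a l ih =>
      intro hl
      rw [List.nodup_cons] at hl
      simp only [List.map_cons, List.prod_cons]
      rw [ih hl.2]
      by_cases h : a = i
      · subst h; simp [hl.1]
      · have h' : i ≠ a := fun e => h e.symm
        simp [h, h', h0]
  rw [key _ (Finset.nodup_toList _)]
  simp

theorem vind (S : ι → Prop) (Q : (ι → R) → Prop) (h0 : Q 0)
    (hs : ∀ i, S i → ∀ c, Q (Pi.single i c))
    (ha : ∀ u v, (∀ i, ¬ S i → u i = 0) → (∀ i, ¬ S i → v i = 0) → Q u → Q v → Q (u + v))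
    (u : ι → R) (hu : ∀ i, ¬ S i → u i = 0) : Q u := by
  rw [← Finset.univ_sum_single u]
  have : ∀ s : Finset ι, Q (∑ i ∈ s, Pi.single i (u i)) ∧
      ∀ i, ¬ S i → (∑ i ∈ s, Pi.single i (u i) : ι → R) i = 0 := by
    intro s
    induction s using Finset.induction_on with
    | empty => simpa using h0
    | insert a s has ih =>
      rw [Finset.sum_insert has]
      by_cases hS : S a
      · have hz : ∀ i, ¬ S i → (Pi.single a (u a) : ι → R) i = 0 := by
          intro i hi
          have : i ≠ a := fun e => hi (e ▸ hS)
          simp [this]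
        refine ⟨ha _ _ hz ih.2 (hs a hS _) ih.1, ?_⟩
        intro i hi
        rw [Pi.add_apply, hz i hi, ih.2 i hi, add_zero]
      · rw [hu a hS, Pi.single_zero, zero_add]; exact ih
  exact (this _).1

end P

section main
variable {ι R G : Type} [Fintype ι] [DecidableEq ι] [CommRing R] [Group G] {x : ι → ι → R → G}

theorem SS.zero (h : SS x) (i j : ι) : x i j 0 = 1 := by
  have := h.add i j 0 0
  rw [add_zero] at this
  exact (mul_eq_left.1 this.symm)

theorem SS.neg (h : SS x) (i j : ι) (r : R) : x i j (-r) = (x i j r)⁻¹ := by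
  apply eq_inv_of_mul_eq_one_left
  rw [← h.add, neg_add_cancel, h.zero]

theorem SS.c2 (h : SS x) (i j k : ι) (r s : R) (hij : i ≠ j) (hjk : j ≠ k) (hik : i ≠ k) :
    MulAut.conj (x j k r) (x i j s) = x i k (-(r * s)) * x i j s := by
  have := h.c1 i j k s r hij hjk hik
  rw [h.neg, mul_comm r s]
  simp only [MulAut.conj_apply] at this ⊢
  rw [mul_inv_eq_iff_eq_mul] at this ⊢
  rw [mul_assoc, this]; group

noncomputable def A (x : ι → ι → R → G) (m : ι) (u : ι → R) : G := P (fun j => x j m) u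
noncomputable def B (x : ι → ι → R → G) (m : ι) (v : ι → R) : G := P (fun j => x m j) v

theorem SS.comm_col (h : SS x) (m i j : ι) (r s : R) : Commute (x i m r) (x j m s) := by
  by_cases hi : i = m
  · subst hi; rw [h.diag]; exact Commute.one_left _
  by_cases hj : j = m
  · subst hj; rw [h.diag]; exact Commute.one_right _
  exact h.c0 _ _ _ _ _ _ (Ne.symm hj) hi

theorem SS.comm_row (h : SS x) (m i j : ι) (r s : R) : Commute (x m i r) (x m j s) := by
  by_cases hi : i = m
  · subst hi; rw [h.diag]; exact Commute.one_left _
  by_cases hj : j = m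
  · subst hj; rw [h.diag]; exact Commute.one_right _
  exact h.c0 _ _ _ _ _ _ hi (Ne.symm hj)

theorem SS.A_add (h : SS x) (m : ι) (u v : ι → R) : A x m (u + v) = A x m u * A x m v :=
  P_add _ (fun _ _ _ => h.add _ _ _ _) (fun _ _ _ _ => h.comm_col _ _ _ _ _) _ _
theorem SS.B_add (h : SS x) (m : ι) (u v : ι → R) : B x m (u + v) = B x m u * B x m v :=
  P_add _ (fun _ _ _ => h.add _ _ _ _) (fun _ _ _ _ => h.comm_row _ _ _ _ _) _ _
theorem SS.A_single (h : SS x) (m i : ι) (c : R) : A x m (Pi.single i c) = x i m c :=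
  P_single _ (fun _ => h.zero _ _) _ _
theorem SS.B_single (h : SS x) (m i : ι) (c : R) : B x m (Pi.single i c) = x m i c :=
  P_single _ (fun _ => h.zero _ _) _ _
theorem SS.A_zero (h : SS x) (m : ι) : A x m 0 = 1 := by
  have := h.A_add m 0 0
  rw [add_zero] at this
  exact (mul_eq_left.1 this.symm)
theorem SS.B_zero (h : SS x) (m : ι) : B x m 0 = 1 := by
  have := h.B_add m 0 0
  rw [add_zero] at this
  exact (mul_eq_left.1 this.symm)
theorem SS.A_neg (h : SS x) (m : ι) (u : ι → R) : A x m (-u) = (A x m u)⁻¹ := by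
  apply eq_inv_of_mul_eq_one_left
  rw [← h.A_add, neg_add_cancel, h.A_zero]
theorem SS.B_neg (h : SS x) (m : ι) (u : ι → R) : B x m (-u) = (B x m u)⁻¹ := by
  apply eq_inv_of_mul_eq_one_left
  rw [← h.B_add, neg_add_cancel, h.B_zero]
theorem SS.A_comm (h : SS x) (m : ι) (u v : ι → R) : Commute (A x m u) (A x m v) := by
  unfold Commute SemiconjBy
  rw [← h.A_add, ← h.A_add, add_comm]
theorem SS.B_comm (h : SS x) (m : ι) (u v : ι → R) : Commute (B x m u) (B x m v) := by
  unfold Commute SemiconjBy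
  rw [← h.B_add, ← h.B_add, add_comm]
theorem SS.xA_comm (h : SS x) (m i : ι) (c : R) (v : ι → R) : Commute (x i m c) (A x m v) := by
  rw [← h.A_single]; exact h.A_comm _ _ _
theorem SS.xB_comm (h : SS x) (m i : ι) (c : R) (v : ι → R) : Commute (x m i c) (B x m v) := by
  rw [← h.B_single]; exact h.B_comm _ _ _

/-- generic commutation by induction -/
theorem SS.comm_A (h : SS x) (g : G) (m : ι) (S : ι → Prop)
    (hg : ∀ i, S i → ∀ c, Commute g (x i m c)) (u : ι → R) (hu : ∀ i, ¬ S i → u i = 0) :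
    Commute g (A x m u) := by
  refine vind S (fun u => Commute g (A x m u)) ?_ ?_ ?_ u hu
  · rw [h.A_zero]; exact Commute.one_right _
  · intro i hi c; rw [h.A_single]; exact hg i hi c
  · intro u v _ _ hu hv; rw [h.A_add]; exact hu.mul_right hv

theorem SS.comm_B (h : SS x) (g : G) (m : ι) (S : ι → Prop)
    (hg : ∀ i, S i → ∀ c, Commute g (x m i c)) (u : ι → R) (hu : ∀ i, ¬ S i → u i = 0) :
    Commute g (B x m u) := by
  refine vind S (fun u => Commute g (B x m u)) ?_ ?_ ?_ u hu
  · rw [h.B_zero]; exact Commute.one_right _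
  · intro i hi c; rw [h.B_single]; exact hg i hi c
  · intro u v _ _ hu hv; rw [h.B_add]; exact hu.mul_right hv

theorem SS.L2A (h : SS x) (m k l : ι) (r : R) (hk : k ≠ m) (hl : l ≠ m) (hkl : k ≠ l) (u : ι → R) :
    MulAut.conj (x k l r) (A x m u) = A x m (u + Pi.single k (r * u l)) := by
  refine vind (fun _ => True) (fun u => MulAut.conj (x k l r) (A x m u) =
    A x m (u + Pi.single k (r * u l))) ?_ ?_ ?_ u (by simp)
  · simp [h.A_zero]
  · intro i _ c
    rw [h.A_add, h.A_single, h.A_single]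
    by_cases hil : i = l
    · subst hil
      rw [h.c1 _ _ _ _ _ hkl hl hk, Pi.single_eq_same]
      exact (h.comm_col _ _ _ _ _)
    · rw [Pi.single_eq_of_ne (Ne.symm hil), mul_zero, h.zero, mul_one, cj_iff]
      by_cases him : i = m
      · subst him; rw [h.diag]; exact Commute.one_right _
      exact h.c0 _ _ _ _ _ _ (Ne.symm hil) hk
  · intro u v _ _ hu hv
    rw [h.A_add, map_mul, hu, hv, ← h.A_add]
    congr 1
    rw [Pi.add_apply, mul_add, Pi.single_add]; abel

theorem SS.L2B (h : SS x) (m k l : ι) (r : R) (hk : k ≠ m) (hl : l ≠ m) (hkl : k ≠ l) (u : ι → R) :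
    MulAut.conj (x k l r) (B x m u) = B x m (u + Pi.single l (-(r * u k))) := by
  refine vind (fun _ => True) (fun u => MulAut.conj (x k l r) (B x m u) =
    B x m (u + Pi.single l (-(r * u k)))) ?_ ?_ ?_ u (by simp)
  · simp [h.B_zero]
  · intro i _ c
    rw [h.B_add, h.B_single, h.B_single]
    by_cases hil : i = k
    · subst hil
      rw [h.c2 _ _ _ _ _ hk.symm hkl hl.symm, Pi.single_eq_same]
      exact (h.comm_row _ _ _ _ _)
    · rw [Pi.single_eq_of_ne (Ne.symm hil), mul_zero, neg_zero, h.zero, mul_one, cj_iff]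
      by_cases him : i = m
      · subst him; rw [h.diag]; exact Commute.one_right _
      exact h.c0 _ _ _ _ _ _ hl (Ne.symm hil)
  · intro u v _ _ hu hv
    rw [h.B_add, map_mul, hu, hv, ← h.B_add]
    congr 1
    rw [Pi.add_apply, mul_add, neg_add, Pi.single_add]; abel

/-- supp condition: zero at m and q -/
def Z (m q : ι) (u : ι → R) : Prop := u m = 0 ∧ u q = 0

theorem Z.supp {m q : ι} {u : ι → R} (hz : Z m q u) : ∀ i, ¬ (i ≠ m ∧ i ≠ q) → u i = 0 := by
  intro i hi
  by_cases h1 : i = m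
  · rw [h1]; exact hz.1
  · by_cases h2 : i = q
    · rw [h2]; exact hz.2
    · exact absurd ⟨h1, h2⟩ hi

theorem Z.symm {m q : ι} {u : ι → R} (hz : Z m q u) : Z q m u := ⟨hz.2, hz.1⟩

theorem Z.smul {m q : ι} {u : ι → R} (r : R) (hz : Z m q u) : Z m q (r • u) := by
  constructor <;> simp [hz.1, hz.2]

theorem Z.neg {m q : ι} {u : ι → R} (hz : Z m q u) : Z m q (-u) := by
  constructor <;> simp [hz.1, hz.2]

theorem SS.AA_comm (h : SS x) {m q : ι} (hmq : m ≠ q) {u v : ι → R} (hu : Z m q u) (hv : Z m q v) :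
    Commute (A x m u) (A x q v) := by
  refine h.comm_A _ q _ ?_ v hv.supp
  intro i hi c
  refine (h.comm_A _ m _ ?_ u hu.supp).symm
  intro j hj d
  exact h.c0 _ _ _ _ _ _ hj.2.symm hi.1

theorem SS.BB_comm (h : SS x) {m q : ι} (hmq : m ≠ q) {u v : ι → R} (hu : Z m q u) (hv : Z m q v) :
    Commute (B x m u) (B x q v) := by
  refine h.comm_B _ q _ ?_ v hv.supp
  intro i hi c
  refine (h.comm_B _ m _ ?_ u hu.supp).symm
  intro j hj d
  exact h.c0 _ _ _ _ _ _ hi.1 hj.2.symm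

theorem SS.L4A (h : SS x) {m q : ι} (hmq : m ≠ q) (r : R) (u : ι → R) (hu : Z m q u) :
    MulAut.conj (x m q r) (A x m u) = A x m u * A x q (-(r • u)) := by
  refine vind (fun i => i ≠ m ∧ i ≠ q) (fun u => MulAut.conj (x m q r) (A x m u) =
    A x m u * A x q (-(r • u))) ?_ ?_ ?_ u hu.supp
  · simp [h.A_zero]
  · intro i hi c
    have : -(r • (Pi.single i c : ι → R)) = Pi.single i (-(r * c)) := by
      rw [← Pi.single_smul, ← Pi.single_neg]; rfl
    rw [this, h.A_single, h.A_single, h.c2 _ _ _ _ _ hi.1 hmq hi.2]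
    exact h.comm_row _ _ _ _ _
  · intro u v hu' hv' hu hv
    have zu : Z m q u := ⟨hu' _ (by simp), hu' _ (by simp)⟩
    have zv : Z m q v := ⟨hv' _ (by simp), hv' _ (by simp)⟩
    rw [smul_add, neg_add, h.A_add, h.A_add, map_mul, hu, hv]
    have := h.AA_comm hmq zv (zu.smul r).neg
    simp only [mul_assoc]
    rw [← mul_assoc (A x m v) (A x q _), this.eq]
    simp only [mul_assoc]

theorem SS.L4B (h : SS x) {m q : ι} (hmq : m ≠ q) (r : R) (u : ι → R) (hu : Z m q u) :
    MulAut.conj (x q m r) (B x m u) = B x m u * B x q (r • u) := by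
  refine vind (fun i => i ≠ m ∧ i ≠ q) (fun u => MulAut.conj (x q m r) (B x m u) =
    B x m u * B x q (r • u)) ?_ ?_ ?_ u hu.supp
  · simp [h.B_zero]
  · intro i hi c
    have : (r • (Pi.single i c : ι → R)) = Pi.single i (r * c) := by
      rw [← Pi.single_smul]; rfl
    rw [this, h.B_single, h.B_single, h.c1 _ _ _ _ _ hmq.symm hi.1.symm hi.2.symm]
    exact h.comm_col _ _ _ _ _
  · intro u v hu' hv' hu hv
    have zu : Z m q u := ⟨hu' _ (by simp), hu' _ (by simp)⟩
    have zv : Z m q v := ⟨hv' _ (by simp), hv' _ (by simp)⟩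
    rw [smul_add, h.B_add, h.B_add, map_mul, hu, hv]
    have := h.BB_comm hmq zv (zu.smul r)
    simp only [mul_assoc]
    rw [← mul_assoc (B x m v) (B x q _), this.eq]
    simp only [mul_assoc]

theorem SS.L5' (h : SS x) {m q : ι} (hmq : m ≠ q) (u v : ι → R) (hu : Z m q u) (hv : Z m q v) :
    MulAut.conj (B x m v) (A x q u) = x m q (v ⬝ᵥ u) * A x q u := by
  refine vind (fun i => i ≠ m ∧ i ≠ q) (fun u => MulAut.conj (B x m v) (A x q u) =
    x m q (v ⬝ᵥ u) * A x q u) ?_ ?_ ?_ u hu.supp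
  · simp [h.A_zero, h.zero]
  · intro i hi c
    refine vind (fun i => i ≠ m ∧ i ≠ q) (fun v =>
      MulAut.conj (B x m v) (A x q (Pi.single i c)) =
      x m q (v ⬝ᵥ Pi.single i c) * A x q (Pi.single i c)) ?_ ?_ ?_ v hv.supp
    · simp [h.B_zero, h.zero]
    · intro j hj d
      rw [h.A_single, h.B_single]
      by_cases hij : j = i
      · subst hij
        rw [h.c1 _ _ _ _ _ hi.1.symm hi.2 hmq]; simp
      · rw [dotProduct_single, Pi.single_eq_of_ne (Ne.symm hij), zero_mul, h.zero, one_mul, cj_iff]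
        exact h.c0 _ _ _ _ _ _ hij hmq
    · intro v w _ _ hv hw
      rw [h.B_add, map_mul, MulAut.mul_apply, hw, map_mul, hv, add_dotProduct, h.add,
        cj_iff.2 (h.xB_comm m q _ v).symm, ← mul_assoc, (h.comm_row _ _ _ _ _).eq]
  · intro u w _ _ hu hw
    rw [h.A_add, map_mul, hu, hw, dotProduct_add, h.add]
    have := h.xA_comm q m (v ⬝ᵥ w) u
    simp only [mul_assoc]
    rw [← mul_assoc (A x q u), ← this.eq]
    simp only [mul_assoc]

theorem SS.L5 (h : SS x) {m q : ι} (hmq : m ≠ q) {u v : ι → R} (hu : Z m q u) (hv : Z m q v)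
    (hvu : v ⬝ᵥ u = 0) : Commute (B x m v) (A x q u) := by
  rw [← cj_iff, h.L5' hmq u v hu hv, hvu, h.zero, one_mul]

theorem cm1 {G : Type} [Group G] {a a' b : G} (h : Commute a' b) : ⁅a * a', b⁆ = ⁅a, b⁆ := by
  simp only [commutatorElement_def, mul_inv_rev, mul_assoc]
  rw [← mul_assoc a' b, h.eq]; group

theorem cm2 {G : Type} [Group G] {a b b' : G} (h : Commute a b') : ⁅a, b * b'⁆ = ⁅a, b⁆ := by
  simp only [commutatorElement_def, mul_inv_rev, mul_assoc]
  rw [← mul_assoc b' a⁻¹, ← h.inv_left.eq]; group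

theorem cm3 {G : Type} [Group G] {a b : G} (h1 : Commute ⁅a, b⁆ a) (h2 : Commute ⁅a, b⁆ b) :
    ⁅a⁻¹, b⁻¹⁆ = ⁅a, b⁆ := by
  have e : ⁅a⁻¹, b⁻¹⁆ = (b * a)⁻¹ * ⁅a, b⁆ * (b * a) := by
    simp only [commutatorElement_def]; group
  rw [e, mul_assoc, (h2.mul_right h1).eq]; group

noncomputable def C (x : ι → ι → R → G) (m : ι) (u v : ι → R) : G := ⁅A x m u, B x m v⁆

theorem SS.C_comm_x1 (h : SS x) {m q : ι} (hmq : m ≠ q) {u v : ι → R} (hu : Z m q u) (hv : Z m q v)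
    (hvu : v ⬝ᵥ u = 0) (r : R) : Commute (x m q r) (C x m u v) := by
  rw [← cj_iff, C, map_commutatorElement, h.L4A hmq r u hu, cj_iff.2 (h.xB_comm m q r v)]
  apply cm1
  refine (h.L5 hmq (hu.smul r).neg hv ?_).symm
  simp [hvu]

theorem SS.C_comm_x2 (h : SS x) {m q : ι} (hmq : m ≠ q) {u v : ι → R} (hu : Z m q u) (hv : Z m q v)
    (hvu : v ⬝ᵥ u = 0) (r : R) : Commute (x q m r) (C x m u v) := by
  rw [← cj_iff, C, map_commutatorElement, h.L4B hmq r v hv, cj_iff.2 (h.xA_comm m q r u)]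
  apply cm2
  refine (h.L5 hmq.symm hu.symm (hv.smul r).symm ?_).symm
  simp [hvu]

theorem SS.C_flip' (h : SS x) {m q : ι} (hmq : m ≠ q) {u v : ι → R} (hu : Z m q u) (hv : Z m q v)
    (hvu : v ⬝ᵥ u = 0) : C x m u v = C x q (-u) (-v) := by
  have e : MulAut.conj (x m q 1) (MulAut.conj (x q m (-1)) (MulAut.conj (x m q 1) (C x m u v)))
      = C x m u v := by
    rw [cj_iff.2 (h.C_comm_x1 hmq hu hv hvu 1), cj_iff.2 (h.C_comm_x2 hmq hu hv hvu (-1)),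
      cj_iff.2 (h.C_comm_x1 hmq hu hv hvu 1)]
  rw [← e, C, C]
  simp only [map_commutatorElement]
  congr 1
  · rw [h.L4A hmq 1 u hu, map_mul, cj_iff.2 (h.xA_comm m q (-1) u), one_smul,
      h.L4A hmq.symm (-1) (-u) hu.neg.symm]
    have : -((-1 : R) • -u) = -u := by simp
    rw [this, (h.AA_comm hmq hu.neg hu.neg).symm.eq, ← mul_assoc, ← h.A_add, add_neg_cancel, h.A_zero,
      one_mul, cj_iff.2 (h.xA_comm q m 1 _)]
  · rw [cj_iff.2 (h.xB_comm m q 1 v), h.L4B hmq (-1) v hv, map_mul, cj_iff.2 (h.xB_comm m q 1 v),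
      neg_one_smul, h.L4B hmq.symm 1 (-v) hv.neg.symm, one_smul,
      (h.BB_comm hmq hv.neg hv.neg).symm.eq, ← mul_assoc, ← h.B_add, add_neg_cancel, h.B_zero,
      one_mul]

theorem SS.C_comm_B (h : SS x) {m q : ι} (hmq : m ≠ q) {u v w : ι → R} (hu : Z m q u) (hv : Z m q v)
    (hw : Z m q w) (hvu : v ⬝ᵥ u = 0) (hwu : w ⬝ᵥ u = 0) : Commute (B x m w) (C x m u v) := by
  rw [h.C_flip' hmq hu hv hvu, ← cj_iff, C, map_commutatorElement,
    cj_iff.2 (h.BB_comm hmq hw hv.neg), cj_iff.2 (h.L5 hmq hu.neg hw (by simp [hwu]))]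

theorem SS.C_comm_A (h : SS x) {m q : ι} (hmq : m ≠ q) {u v w : ι → R} (hu : Z m q u) (hv : Z m q v)
    (hw : Z m q w) (hvu : v ⬝ᵥ u = 0) (hwu : v ⬝ᵥ w = 0) : Commute (A x m w) (C x m u v) := by
  rw [h.C_flip' hmq hu hv hvu, ← cj_iff, C, map_commutatorElement,
    cj_iff.2 (h.AA_comm hmq hw hu.neg),
    cj_iff.2 (h.L5 hmq.symm hw.symm hv.neg.symm (by simp [hwu])).symm]

theorem SS.C_flip (h : SS x) {m q : ι} (hmq : m ≠ q) {u v : ι → R} (hu : Z m q u) (hv : Z m q v)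
    (hvu : v ⬝ᵥ u = 0) : C x m u v = C x q u v := by
  rw [h.C_flip' hmq hu hv hvu, C, h.A_neg, h.B_neg]
  apply cm3
  · exact (h.C_comm_A hmq.symm hu.symm hv.symm hu.symm hvu hvu).symm
  · exact (h.C_comm_B hmq.symm hu.symm hv.symm hv.symm hvu hvu).symm

noncomputable def X (x : ι → ι → R → G) (m : ι) (u v : ι → R) : G := C x m u v * B x m (u m • v)

/-- zero out m and q -/
def zo (m q : ι) (u : ι → R) : ι → R := fun i => if i = m ∨ i = q then 0 else u i

theorem zo_Z (m q : ι) (u : ι → R) : Z m q (zo m q u) := by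
  constructor <;> simp [zo]

theorem zo_symm (m q : ι) (u : ι → R) : zo m q u = zo q m u := by
  ext i; simp [zo, or_comm]

theorem zo_eq {m q : ι} (hmq : m ≠ q) (u : ι → R) :
    u = zo m q u + Pi.single q (u q) + Pi.single m (u m) := by
  ext i
  by_cases h1 : i = m
  · subst h1; simp [zo, hmq]
  · by_cases h2 : i = q
    · subst h2; simp [zo, h1]
    · simp [zo, h1, h2]

theorem zo_dot {m q : ι} (hmq : m ≠ q) {u v : ι → R} (hv : Z m q v) (hvu : v ⬝ᵥ u = 0) :
    v ⬝ᵥ zo m q u = 0 := by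
  rw [zo_eq hmq u] at hvu
  simpa [dotProduct_add, hv.1, hv.2] using hvu

theorem SS.L9 (h : SS x) {m q : ι} (hmq : m ≠ q) {u v : ι → R} (hv : Z m q v)
    (hvu : v ⬝ᵥ u = 0) :
    X x m u v = C x m (zo m q u) v * B x q (u q • v) * B x m (u m • v) := by
  have hz := zo_Z m q u
  have hd := zo_dot hmq hv hvu
  unfold X
  congr 1
  have e : A x m u = x q m (u q) * A x m (zo m q u) := by
    conv_lhs => rw [zo_eq hmq u, h.A_add, h.A_add, h.A_single, h.A_single, h.diag, mul_one]
    exact (h.xA_comm _ _ _ _).symm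
  have e2 : ⁅x q m (u q) * A x m (zo m q u), B x m v⁆ =
      MulAut.conj (x q m (u q)) (C x m (zo m q u) v) *
      (MulAut.conj (x q m (u q)) (B x m v) * (B x m v)⁻¹) := by
    simp only [C, commutatorElement_def, MulAut.conj_apply]; group
  rw [C, e, e2, cj_iff.2 (h.C_comm_x2 hmq hz hv hd _), h.L4B hmq _ v hv,
    (h.BB_comm hmq hv (hv.smul _)).eq]
  group

theorem SS.X_flip (h : SS x) {m q : ι} (hmq : m ≠ q) {u v : ι → R} (hvm : v m = 0) (hvq : v q = 0)
    (hvu : v ⬝ᵥ u = 0) : X x m u v = X x q u v := by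
  have hv : Z m q v := ⟨hvm, hvq⟩
  rw [h.L9 hmq hv hvu, h.L9 hmq.symm hv.symm hvu, h.C_flip hmq (zo_Z _ _ _) hv (zo_dot hmq hv hvu),
    zo_symm, mul_assoc, mul_assoc, (h.BB_comm hmq (hv.smul _) (hv.smul _)).eq]

theorem SS.L10 (h : SS x) (m k l : ι) (r : R) (hk : k ≠ m) (hl : l ≠ m) (hkl : k ≠ l)
    (u v : ι → R) : MulAut.conj (x k l r) (X x m u v) =
      X x m (u + Pi.single k (r * u l)) (v + Pi.single l (-(r * v k))) := by
  unfold X C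
  rw [map_mul, map_commutatorElement, h.L2A m k l r hk hl hkl, h.L2B m k l r hk hl hkl,
    h.L2B m k l r hk hl hkl]
  congr 2
  ext i
  by_cases hi : i = l
  · subst hi; simp [hk.symm]; ring
  · simp [hk.symm, hi]

theorem SS.L11 (h : SS x) {p q : ι} (hpq : p ≠ q) (r : R) {u v : ι → R} (hv : Z p q v)
    (hvu : v ⬝ᵥ u = 0) : MulAut.conj (x p q r) (X x p u v) =
      X x p (u + Pi.single p (r * u q)) v := by
  have hd := zo_dot hpq hv hvu
  have hvu' : v ⬝ᵥ (u + Pi.single p (r * u q)) = 0 := by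
    simp [dotProduct_add, hvu, hv.1]
  have hz : zo p q (u + Pi.single p (r * u q)) = zo p q u := by
    ext i
    by_cases hi : i = p
    · simp [zo, hi]
    · simp [zo, hi]
  rw [h.L9 hpq hv hvu, h.L9 hpq hv hvu', hz, map_mul, map_mul,
    cj_iff.2 (h.C_comm_x1 hpq (zo_Z p q u) hv hd r), cj_iff.2 (h.xB_comm p q r _),
    h.L4B hpq.symm r _ (hv.smul _).symm]
  simp only [mul_assoc]
  rw [← h.B_add]
  congr 3
  · simp [hpq.symm]
  · ext i; simp; ring

theorem SS.L12 (h : SS x) {p q m : ι} (hpq : p ≠ q) (hmp : m ≠ p) (r : R) {u v : ι → R}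
    (hvp : v p = 0) (hvm : v m = 0)
    (hvu : v ⬝ᵥ u = 0) : MulAut.conj (x p q r) (X x p u v) =
      X x p (u + Pi.single p (r * u q)) v := by
  by_cases hmq : m = q
  · subst hmq; exact h.L11 hpq r ⟨hvp, hvm⟩ hvu
  have hvu' : v ⬝ᵥ (u + Pi.single p (r * u q)) = 0 := by
    simp [dotProduct_add, hvu, hvp]
  rw [h.X_flip hmp.symm hvp hvm hvu, h.X_flip hmp.symm hvp hvm hvu',
    h.L10 m p q r hmp.symm (Ne.symm hmq) hpq, hvp]
  simp

theorem SS.L13 (h : SS x) {p m : ι} (hmp : m ≠ p) {u v : ι → R}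
    (hvp : v p = 0) (hvm : v m = 0) (hvu : v ⬝ᵥ u = 0) (w : ι → R) (hw : w p = 0) :
    MulAut.conj (B x p w) (X x p u v) = X x p (u + Pi.single p (w ⬝ᵥ u)) v := by
  have main : ∀ u : ι → R, v ⬝ᵥ u = 0 → MulAut.conj (B x p w) (X x p u v) =
      X x p (u + Pi.single p (w ⬝ᵥ u)) v := by
    have hw' : ∀ i, ¬ (i ≠ p) → w i = 0 := by
      intro i hi; rw [not_not] at hi; rw [hi, hw]
    revert hw'
    clear hw hvu u
    intro hw'
    have Q : ∃ Q : (ι → R) → Prop, ∀ w, Q w ↔ ∀ u : ι → R, v ⬝ᵥ u = 0 →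
      MulAut.conj (B x p w) (X x p u v) = X x p (u + Pi.single p (w ⬝ᵥ u)) v := ⟨_, fun _ => Iff.rfl⟩
    obtain ⟨Q, hQ⟩ := Q
    rw [← hQ]
    refine vind (R := R) (fun i => i ≠ p) Q ?_ ?_ ?_ w hw' <;> simp only [hQ]
    · intro u hu; simp [h.B_zero]
    · intro i hi c u hu
      rw [h.B_single, h.L12 (Ne.symm hi) hmp c hvp hvm hu]; simp
    · intro w w' hw hw' ih ih' u hu
      have hvu' : v ⬝ᵥ (u + Pi.single p (w' ⬝ᵥ u)) = 0 := by
        simp [dotProduct_add, hu, hvp]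
      rw [h.B_add, map_mul, MulAut.mul_apply, ih' u hu, ih _ hvu', dotProduct_add, dotProduct_single,
        hw p (by simp), zero_mul, add_zero, add_dotProduct, Pi.single_add]
      congr 1; abel
  exact main u hvu

theorem SS.L14 (h : SS x) {p m : ι} (hmp : m ≠ p) {u v w : ι → R}
    (hvp : v p = 0) (hvm : v m = 0) (hvu : v ⬝ᵥ u = 0) (hwp : w p = 0) (hwu : w ⬝ᵥ u = 0) :
    X x p u (w + v) = X x p u w * X x p u v := by
  have key : ∀ w, w p = 0 → w ⬝ᵥ u = 0 → MulAut.conj (B x p w) (C x p u v) = C x p u v := by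
    intro w hwp hwu
    have := h.L13 hmp hvp hvm hvu w hwp
    rw [hwu, Pi.single_zero, add_zero, X, map_mul, cj_iff.2 (h.B_comm p w _)] at this
    exact mul_right_cancel this
  have e : C x p u (w + v) = C x p u w * MulAut.conj (B x p w) (C x p u v) := by
    simp only [C, h.B_add, commutatorElement_def, MulAut.conj_apply]; group
  have k2 := cj_iff.1 (key (u p • w) (by simp [hwp]) (by simp [hwu]))
  unfold X
  rw [e, key w hwp hwu, smul_add, h.B_add]
  simp only [mul_assoc]
  rw [← mul_assoc (B x p _) (C x p u v), k2.eq]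
  simp only [mul_assoc]

theorem SS.X_zero (h : SS x) (m : ι) (u : ι → R) : X x m u 0 = 1 := by
  simp [X, C, h.B_zero]

def vv (u : ι → R) (i j : ι) (c : R) : ι → R := Pi.single i (c * u j) - Pi.single j (c * u i)

theorem vv_dot (u : ι → R) (i j : ι) (c : R) : vv u i j c ⬝ᵥ u = 0 := by
  simp [vv, sub_dotProduct]; ring

theorem vv_zero (u : ι → R) {i j m : ι} (c : R) (hi : m ≠ i) (hj : m ≠ j) : vv u i j c m = 0 := by
  simp [vv, hi, hj]

theorem vv_anti (u : ι → R) (i j : ι) (c : R) : vv u i j c = vv u j i (-c) := by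
  simp only [vv, neg_mul, Pi.single_neg]; abel

theorem vv_self (u : ι → R) (i : ι) (c : R) : vv u i i c = 0 := by
  simp [vv]

/-- compatibility of `T` with the two-supported elements at `u` -/
def Good (x : ι → ι → R → G) (u : ι → R) (T : (ι → R) → G) : Prop :=
  ∀ i j c m, m ≠ i → m ≠ j → T (vv u i j c) = X x m u (vv u i j c)

theorem SS.step' (h : SS x) (h4 : ∀ a b c : ι, ∃ m, m ≠ a ∧ m ≠ b ∧ m ≠ c) (u : ι → R)
    (T : (ι → R) → G) (hT : ∀ v w, T (v + w) = T v * T w) (hG : Good x u T)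
    {p q : ι} (hpq : p ≠ q) (r : R) (i j : ι) (c : R) (m : ι) (hmi : m ≠ i) (hmj : m ≠ j)
    (hpj : p ≠ j) (v : ι → R) (hv : v = vv (u + Pi.single p (r * u q)) i j c) :
    MulAut.conj (x p q r) (T (v + Pi.single q (r * v p))) =
      X x m (u + Pi.single p (r * u q)) v := by
  have hvu : v ⬝ᵥ (u + Pi.single p (r * u q)) = 0 := by rw [hv]; exact vv_dot _ _ _ _
  have hflip : ∀ m', m' ≠ i → m' ≠ j → X x m' (u + Pi.single p (r * u q)) v =
      X x m (u + Pi.single p (r * u q)) v := by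
    intro m' h1 h2
    by_cases e : m' = m
    · rw [e]
    · refine h.X_flip e ?_ ?_ hvu
      · rw [hv]; exact vv_zero _ _ h1 h2
      · rw [hv]; exact vv_zero _ _ hmi hmj
  by_cases hpi : p = i
  · subst hpi
    have e1 : v + Pi.single q (r * v p) = vv u p j c + vv u q j (c * r) := by
      rw [hv]
      ext a
      simp only [vv, Pi.add_apply, Pi.sub_apply, Pi.single_apply, hpj, hpj.symm]
      split_ifs <;> subst_vars <;> simp_all <;> ring
    obtain ⟨m', h1, h2, h3⟩ := h4 p j q
    obtain ⟨m0, g1, g2, g3⟩ := h4 q j m'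
    rw [← hflip m' h1 h2]
    have e2 : T (v + Pi.single q (r * v p)) = X x m' u (v + Pi.single q (r * v p)) := by
      rw [e1, hT, hG p j c m' h1 h2, hG q j (c * r) m' h3 h2, h.L14 g3 (vv_zero _ _ h3 h2)
        (vv_zero _ _ g1 g2) (vv_dot _ _ _ _) (vv_zero _ _ h1 h2) (vv_dot _ _ _ _)]
    rw [e2, h.L10 m' p q r h1.symm h3.symm hpq]
    congr 1
    simp [hpq, add_assoc, ← Pi.single_add]
  · have e1 : v = vv u i j c := by
      rw [hv]; simp [vv, Ne.symm hpi, Ne.symm hpj]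
    have hvp : v p = 0 := by rw [e1]; exact vv_zero _ _ hpi hpj
    obtain ⟨m', h1, h2, h3⟩ := h4 i j p
    rw [hvp, mul_zero, Pi.single_zero, add_zero, ← hflip p hpi hpj]
    have e2 : T v = X x p u v := by rw [e1]; exact hG i j c p hpi hpj
    rw [e2]
    refine h.L12 hpq h3 r hvp ?_ ?_
    · rw [e1]; exact vv_zero _ _ h1 h2
    · rw [e1]; exact vv_dot _ _ _ _

theorem SS.step (h : SS x) (h4 : ∀ a b c : ι, ∃ m, m ≠ a ∧ m ≠ b ∧ m ≠ c) (u : ι → R)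
    (T : (ι → R) → G) (hT : ∀ v w, T (v + w) = T v * T w) (hG : Good x u T)
    {p q : ι} (hpq : p ≠ q) (r : R) :
    Good x (u + Pi.single p (r * u q))
      (fun v => MulAut.conj (x p q r) (T (v + Pi.single q (r * v p)))) := by
  intro i j c m hi hj
  by_cases hij : i = j
  · subst hij
    have : T 0 = 1 := by
      have := hT 0 0
      rw [add_zero] at this
      exact (mul_eq_left.1 this.symm)
    simp [vv_self, h.X_zero, this]
  by_cases hpj : p = j
  · have hpi : p ≠ i := fun e => hij (e.symm.trans hpj)
    rw [vv_anti]
    exact h.step' h4 u T hT hG hpq r j i (-c) m hj hi hpi _ rfl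
  · exact h.step' h4 u T hT hG hpq r i j c m hi hj hpj _ rfl

open Matrix in
theorem SS.all (h : SS x) (h4 : ∀ a b c : ι, ∃ m, m ≠ a ∧ m ≠ b ∧ m ≠ c)
    (hgen : Subgroup.closure {g | ∃ p q r, p ≠ q ∧ g = x p q r} = ⊤)
    (φ : G →* Matrix ι ι R) (hφ : ∀ p q r, p ≠ q → φ (x p q r) = 1 + Matrix.single p q r)
    (k : ι) (g : G) :
    Good x (φ g *ᵥ Pi.single k 1) (fun v => MulAut.conj g (B x k (v ᵥ* φ g))) := by
  have hstep : ∀ p q r, p ≠ q → ∀ y,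
      Good x (φ y *ᵥ Pi.single k 1) (fun v => MulAut.conj y (B x k (v ᵥ* φ y))) →
      Good x (φ (x p q r * y) *ᵥ Pi.single k 1)
        (fun v => MulAut.conj (x p q r * y) (B x k (v ᵥ* φ (x p q r * y)))) := by
    intro p q r hpq y hy
    have := h.step h4 _ _ (by intro v w; simp only [add_vecMul, h.B_add, map_mul]) hy hpq r
    have e1 : φ (x p q r * y) *ᵥ Pi.single k 1 = φ y *ᵥ Pi.single k 1 +
        Pi.single p (r * (φ y *ᵥ Pi.single k 1) q) := by
      rw [map_mul, hφ _ _ _ hpq, ← mulVec_mulVec, add_mulVec, one_mulVec, single_mulVec]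
      rfl
    have e2 : ∀ v : ι → R, v ᵥ* φ (x p q r * y) = (v + Pi.single q (r * v p)) ᵥ* φ y := by
      intro v
      rw [map_mul, hφ _ _ _ hpq, ← vecMul_vecMul, vecMul_add, vecMul_one]
      congr 2
      ext a
      simp [vecMul, dotProduct, Matrix.single_apply, Pi.single_apply, mul_comm, eq_comm, ite_and]
    rw [e1]
    simp only [e2, map_mul (MulAut.conj), MulAut.mul_apply]
    exact this
  have hg : g ∈ Subgroup.closure {g | ∃ p q r, p ≠ q ∧ g = x p q r} := by rw [hgen]; trivial
  induction hg using Subgroup.closure_induction_left with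
  | one =>
    intro i j c m hi hj
    have hd := vv_dot (Pi.single k 1 : ι → R) i j c
    have hm := vv_zero (Pi.single k 1 : ι → R) c hi hj
    simp only [map_one, one_mulVec, vecMul_one, MulAut.one_apply]
    set v := vv (Pi.single k 1 : ι → R) i j c
    have hk : v k = 0 := by simpa using hd
    have e : X x m (Pi.single k 1) v = X x k (Pi.single k 1) v := by
      by_cases hmk : m = k
      · rw [hmk]
      · exact h.X_flip hmk hm hk hd
    rw [e, X, C, h.A_single, h.diag]; simp
  | mul_left a ha y hy ih =>
    obtain ⟨p, q, r, hpq, rfl⟩ := ha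
    exact hstep p q r hpq y ih
  | inv_mul_cancel a ha y hy ih =>
    obtain ⟨p, q, r, hpq, rfl⟩ := ha
    rw [← h.neg]
    exact hstep p q (-r) hpq y ih

theorem SS.final (h : SS x) (h4 : ∀ a b c : ι, ∃ m, m ≠ a ∧ m ≠ b ∧ m ≠ c)
    (hgen : Subgroup.closure {g | ∃ p q r, p ≠ q ∧ g = x p q r} = ⊤)
    (φ : G →* Matrix ι ι R) (hφ : ∀ p q r, p ≠ q → φ (x p q r) = 1 + Matrix.single p q r)
    (g : G) (hg : φ g = 1) : g ∈ Subgroup.center G := by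
  have key : ∀ p q r, p ≠ q → Commute g (x p q r) := by
    intro p q r hpq
    obtain ⟨m, h1, h2, -⟩ := h4 p q p
    have a1 := h.all h4 hgen φ hφ p g q p r m h2 h1
    have a2 := h.all h4 hgen φ hφ p 1 q p r m h2 h1
    have e : vv (Pi.single p 1 : ι → R) q p r = Pi.single q r := by
      simp [vv, hpq.symm]
    simp only [hg, map_one, Matrix.one_mulVec, Matrix.vecMul_one, MulAut.one_apply, e,
      h.B_single] at a1 a2
    rw [← cj_iff, a1, ← a2]
  have : Subgroup.closure {g | ∃ p q r, p ≠ q ∧ g = x p q r} ≤ Subgroup.centralizer {g} := by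
    rw [Subgroup.closure_le]
    rintro _ ⟨p, q, r, hpq, rfl⟩
    rw [SetLike.mem_coe, Subgroup.mem_centralizer_singleton_iff]
    exact (key p q r hpq).symm
  rw [hgen] at this
  rw [Subgroup.mem_center_iff]
  intro y
  exact Subgroup.mem_centralizer_singleton_iff.1 (this (Subgroup.mem_top y))

end main

end StK2

theorem stmt0 (n : ℕ) (hn : 4 ≤ n) (R : Type) [CommRing R]
    (φ : SteinbergGroup n R →* Matrix.GeneralLinearGroup (Fin n) R)
    (hφ : ∀ (i j : Fin n) (hij : i ≠ j) (r : R),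
      (φ (stx n R i j hij r) : Matrix (Fin n) (Fin n) R) = 1 + Matrix.single i j r) :
    φ.ker ≤ Subgroup.center (SteinbergGroup n R) := by
  classical
  let x : Fin n → Fin n → R → SteinbergGroup n R :=
    fun i j r => if hij : i ≠ j then stx n R i j hij r else 1
  have hx : ∀ i j (hij : i ≠ j) r, x i j r = stx n R i j hij r := by
    intro i j hij r; simp only [x]; rw [dif_pos hij]
  have hd : ∀ i r, x i i r = 1 := by intro i r; simp [x]
  have rel : ∀ w, StRels n R w → (PresentedGroup.mk {w | StRels n R w} w) = 1 := by
    intro w hw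
    exact PresentedGroup.one_of_mem hw
  have h : StK2.SS x := by
    refine ⟨hd, ?_, ?_, ?_⟩
    · intro i j r s
      by_cases hij : i = j
      · subst hij; simp [hd]
      · rw [hx _ _ hij, hx _ _ hij, hx _ _ hij]
        have := rel _ (StRels.add i j hij r s)
        rw [map_mul, map_mul, map_inv, mul_inv_eq_one] at this
        exact this.symm
    · intro i j a k r s hja hik
      by_cases hij : i = j
      · subst hij; rw [hd]; exact Commute.one_left _
      by_cases hak : a = k
      · subst hak; rw [hd]; exact Commute.one_right _
      rw [hx _ _ hij, hx _ _ hak]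
      have := rel _ (StRels.commZero i j a k hij hak hja hik r s)
      rw [map_commutatorElement, commutatorElement_eq_one_iff_commute] at this
      exact this
    · intro i j k r s hij hjk hik
      rw [hx _ _ hij, hx _ _ hjk, hx _ _ hik]
      have := rel _ (StRels.commAdd i j k hij hjk hik r s)
      rw [map_mul, map_inv, mul_inv_eq_one, map_commutatorElement, commutatorElement_def,
        mul_inv_eq_iff_eq_mul] at this
      exact this
  have h4 : ∀ a b c : Fin n, ∃ m, m ≠ a ∧ m ≠ b ∧ m ≠ c := by
    intro a b c
    have : ∃ m, m ∉ ({a, b, c} : Finset (Fin n)) := by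
      by_contra hcon
      push Not at hcon
      have h1 : (Finset.univ : Finset (Fin n)) ⊆ {a, b, c} := fun m _ => hcon m
      have h2 := Finset.card_le_card h1
      have h3 := Finset.card_le_three (a := a) (b := b) (c := c)
      rw [Finset.card_univ, Fintype.card_fin] at h2
      omega
    obtain ⟨m, hm⟩ := this
    simp only [Finset.mem_insert, Finset.mem_singleton, not_or] at hm
    exact ⟨m, hm⟩
  have hgen : Subgroup.closure {g | ∃ p q r, p ≠ q ∧ g = x p q r} = ⊤ := by
    rw [eq_top_iff, ← PresentedGroup.closure_range_of, Subgroup.closure_le]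
    rintro _ ⟨⟨⟨⟨p, q⟩, hpq⟩, r⟩, rfl⟩
    exact Subgroup.subset_closure ⟨p, q, r, hpq, (hx p q hpq r).symm⟩
  intro g hg
  refine h.final h4 hgen ((Units.coeHom _).comp φ) ?_ g ?_
  · intro p q r hpq
    rw [hx p q hpq]
    exact hφ p q hpq r
  · rw [MonoidHom.mem_ker] at hg
    simp [hg]
end

section
/- Let R be a commutative ring and n ≥ 4 an integer. Let g ∈ St(n, R[X]) satisfy (ev_{X=0})_*(g) = 1 ∈ St(n,R). Then g = 1 in St(n, R[X]) if and only if (λ_M)_*(g) = 1 ∈ St(n, R_M[X]) for every maximal ideal M of R, where λ_M : R → R_M is the localisation map. (Quillen local–global principle for K₂ in type A_{n−1}.) -/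
open scoped commutatorElement

namespace StLG
set_option linter.unusedSimpArgs false
set_option linter.unusedVariables false
open Matrix

section basics
variable {n : ℕ} {B : Type} [CommRing B]

/-- total version of the generator -/
def x (i j : Fin n) (r : B) : SteinbergGroup n B :=
  if h : i ≠ j then stx n B i j h r else 1

theorem x_of_ne {i j : Fin n} (h : i ≠ j) (r : B) : x i j r = stx n B i j h r := by
  simp [x, h]

theorem x_self (i : Fin n) (r : B) : x i i r = 1 := by simp [x]

theorem rel_one {w : FreeGroup (StGen n B)} (h : StRels n B w) :
    (PresentedGroup.mk {w | StRels n B w} w) = 1 :=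
  PresentedGroup.one_of_mem h

theorem x_add (i j : Fin n) (r s : B) : x i j (r + s) = x i j r * x i j s := by
  by_cases h : i = j
  · subst h; simp [x_self]
  · have := rel_one (StRels.add i j h r s)
    simp only [map_mul, map_inv] at this
    rw [x_of_ne h, x_of_ne h, x_of_ne h]
    exact (mul_inv_eq_one.mp this).symm

theorem x_zero (i j : Fin n) : x i j (0 : B) = 1 := by
  have := x_add i j (0 : B) 0
  simpa using this

theorem x_neg (i j : Fin n) (r : B) : x i j (-r) = (x i j r)⁻¹ := by
  rw [eq_inv_iff_mul_eq_one, ← x_add]; simp [x_zero]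

theorem x_comm {i j h k : Fin n} (hjh : j ≠ h) (hik : i ≠ k) (r s : B) :
    Commute (x i j r) (x h k s) := by
  by_cases hij : i = j
  · subst hij; simp [x_self]
  by_cases hhk : h = k
  · subst hhk; simp [x_self]
  have := rel_one (StRels.commZero i j h k hij hhk hjh hik r s)
  rw [map_commutatorElement, commutatorElement_eq_one_iff_mul_comm] at this
  rw [x_of_ne hij, x_of_ne hhk]
  exact this

theorem x_mul {i j k : Fin n} (hij : i ≠ j) (hjk : j ≠ k) (hik : i ≠ k) (r s : B) :
    x i j r * x j k s = x i k (r * s) * x j k s * x i j r := by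
  have := rel_one (StRels.commAdd i j k hij hjk hik r s)
  rw [map_mul, map_commutatorElement, map_inv, mul_inv_eq_one, commutatorElement_def] at this
  rw [x_of_ne hij, x_of_ne hjk, x_of_ne hik]
  have h2 : stx n B i k hik (r * s) = stx n B i j hij r * stx n B j k hjk s *
    (stx n B i j hij r)⁻¹ * (stx n B j k hjk s)⁻¹ := this.symm
  rw [h2]; group

/-- universal property -/
theorem exists_lift {G : Type*} [Group G] (y : ∀ i j : Fin n, i ≠ j → B → G)
    (hadd : ∀ i j (h : i ≠ j) r s, y i j h (r + s) = y i j h r * y i j h s)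
    (hcomm : ∀ i j h k (hij : i ≠ j) (hhk : h ≠ k), j ≠ h → i ≠ k → ∀ r s,
      y i j hij r * y h k hhk s = y h k hhk s * y i j hij r)
    (hmul : ∀ i j k (hij : i ≠ j) (hjk : j ≠ k) (hik : i ≠ k) r s,
      y i j hij r * y j k hjk s = y i k hik (r * s) * y j k hjk s * y i j hij r) :
    ∃ φ : SteinbergGroup n B →* G, ∀ i j (h : i ≠ j) r, φ (x i j r) = y i j h r := by
  have key : ∀ w ∈ {w | StRels n B w},
      FreeGroup.lift (fun g : StGen n B => y g.1.1.1 g.1.1.2 g.1.2 g.2) w = 1 := by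
    rintro w (⟨i, j, hij, r, s⟩ | ⟨i, j, h, k, hij, hhk, hjh, hik, r, s⟩ |
      ⟨i, j, k, hij, hjk, hik, r, s⟩)
    · simp [hadd]
    · simp only [map_commutatorElement, FreeGroup.lift_apply_of]
      rw [commutatorElement_eq_one_iff_mul_comm]
      exact hcomm i j h k hij hhk hjh hik r s
    · simp only [map_commutatorElement, map_mul, map_inv, FreeGroup.lift_apply_of]
      rw [mul_inv_eq_one, commutatorElement_def, hmul i j k hij hjk hik]
      group
  refine ⟨PresentedGroup.toGroup key, fun i j h r => ?_⟩
  rw [x_of_ne h]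
  exact PresentedGroup.toGroup.of key

theorem hom_ext {G : Type*} [Group G] {φ ψ : SteinbergGroup n B →* G}
    (h : ∀ i j (_ : i ≠ j) r, φ (x i j r) = ψ (x i j r)) : φ = ψ := by
  apply PresentedGroup.ext
  rintro ⟨⟨⟨i, j⟩, hij⟩, r⟩
  have := h i j hij r
  rw [x_of_ne hij] at this
  exact this

theorem st_ind {P : SteinbergGroup n B → Prop} (h1 : P 1)
    (hx : ∀ i j (_ : i ≠ j) r g, P g → P (x i j r * g)) (g : SteinbergGroup n B) : P g := by
  have hmul : ∀ w : FreeGroup (StGen n B), ∀ g, P g →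
      P (PresentedGroup.mk {w | StRels n B w} w * g) := by
    intro w
    induction w using FreeGroup.induction_on with
    | C1 => intro g hg; simpa using hg
    | of p =>
      obtain ⟨⟨⟨i, j⟩, hij⟩, r⟩ := p
      intro g hg
      have := hx i j hij r g hg
      rw [x_of_ne hij] at this
      exact this
    | inv_of p _ =>
      obtain ⟨⟨⟨i, j⟩, hij⟩, r⟩ := p
      intro g hg
      have := hx i j hij (-r) g hg
      rw [x_neg, x_of_ne hij] at this
      exact this
    | mul a b ha hb =>
      intro g hg
      rw [map_mul, mul_assoc]
      exact ha _ (hb _ hg)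
  induction g using PresentedGroup.induction_on with
  | _ z => simpa using hmul z 1 h1

/-- functoriality -/
theorem exists_map {B' : Type} [CommRing B'] (f : B →+* B') :
    ∃ φ : SteinbergGroup n B →* SteinbergGroup n B', ∀ i j r, φ (x i j r) = x i j (f r) := by
  obtain ⟨φ, hφ⟩ := exists_lift (n := n) (B := B) (G := SteinbergGroup n B')
    (fun i j _ r => x i j (f r)) (by intros; simp [x_add])
    (by intro i j h k _ _ h1 h2 r s; exact x_comm h1 h2 _ _)
    (by intro i j k h1 h2 h3 r s; rw [x_mul h1 h2 h3, map_mul])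
  refine ⟨φ, fun i j r => ?_⟩
  by_cases h : i = j
  · subst h; simp [x_self]
  · exact hφ i j h r

noncomputable def stmap {B' : Type} [CommRing B'] (f : B →+* B') :
    SteinbergGroup n B →* SteinbergGroup n B' := (exists_map f).choose

theorem stmap_x {B' : Type} [CommRing B'] (f : B →+* B') (i j : Fin n) (r : B) :
    stmap f (x i j r) = x i j (f r) := (exists_map f).choose_spec i j r

theorem stmap_comp {B' B'' : Type} [CommRing B'] [CommRing B''] (f : B →+* B') (f' : B' →+* B'')
    (g : SteinbergGroup n B) : stmap f' (stmap f g) = stmap (f'.comp f) g := by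
  have : (stmap f').comp (stmap f) = stmap (n := n) (f'.comp f) := by
    apply hom_ext; intros; simp [stmap_x]
  exact DFunLike.congr_fun this g

/-- elementary unit matrices -/
def tv (i j : Fin n) (h : i ≠ j) (r : B) : (Matrix (Fin n) (Fin n) B)ˣ where
  val := transvection i j r
  inv := transvection i j (-r)
  val_inv := by rw [transvection_mul_transvection_same _ _ h]; simp
  inv_val := by rw [transvection_mul_transvection_same _ _ h]; simp

theorem exists_pi : ∃ φ : SteinbergGroup n B →* (Matrix (Fin n) (Fin n) B)ˣ,
    ∀ i j (h : i ≠ j) r, φ (x i j r) = tv i j h r := by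
  apply exists_lift
  · intro i j h r s
    ext1
    exact (transvection_mul_transvection_same _ _ h r s).symm
  · intro i j h k hij hhk hjh hik r s
    ext1
    simp [tv, transvection, mul_add, add_mul, Matrix.single_mul_single_of_ne, hjh, hik.symm]
    abel
  · intro i j k hij hjk hik r s
    ext1
    simp [tv, transvection, mul_add, add_mul, Matrix.single_mul_single_of_ne, hjk, hik.symm,
      hij.symm, hjk.symm]
    abel

noncomputable def piu : SteinbergGroup n B →* (Matrix (Fin n) (Fin n) B)ˣ := exists_pi.choose

theorem piu_x {i j : Fin n} (h : i ≠ j) (r : B) : piu (x i j r) = tv i j h r :=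
  exists_pi.choose_spec i j h r

noncomputable def pi (g : SteinbergGroup n B) : Matrix (Fin n) (Fin n) B := (piu g).val

theorem pi_mul (g h : SteinbergGroup n B) : pi (g * h) = pi g * pi h := by simp [pi]
theorem pi_one : pi (1 : SteinbergGroup n B) = 1 := by simp [pi]

theorem pi_x {i j : Fin n} (h : i ≠ j) (r : B) : pi (x i j r) = 1 + Matrix.single i j r := by
  simp [pi, piu_x h, tv, transvection]

theorem pi_x_mulVec {i j : Fin n} (h : i ≠ j) (r : B) (f : Fin n → B) :
    pi (x i j r) *ᵥ f = f + Pi.single i (r * f j) := by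
  rw [pi_x h, add_mulVec, one_mulVec, Matrix.single_mulVec]
  congr 1

theorem pi_x_vecMul {i j : Fin n} (h : i ≠ j) (r : B) (f : Fin n → B) :
    f ᵥ* pi (x i j r) = f + Pi.single j (f i * r) := by
  rw [pi_x h, vecMul_add, vecMul_one]
  congr 1
  ext q
  simp [Matrix.vecMul, dotProduct, Matrix.single_apply, Pi.single_apply]
  by_cases hq : j = q <;> simp [hq, eq_comm]

theorem pi_inv_mul (g : SteinbergGroup n B) : pi g⁻¹ * pi g = 1 := by rw [← pi_mul]; simp [pi_one]
theorem pi_mul_inv (g : SteinbergGroup n B) : pi g * pi g⁻¹ = 1 := by rw [← pi_mul]; simp [pi_one]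

/-! columns and rows -/

theorem vec_ind {P : (Fin n → B) → Prop} (h0 : P 0) (hadd : ∀ f g, P f → P g → P (f + g))
    (f : Fin n → B) (hs : ∀ q, P (Pi.single q (f q))) : P f := by
  have : f = ∑ q, Pi.single q (f q) := (Finset.univ_sum_single f).symm
  rw [this]
  exact Finset.sum_induction _ P hadd h0 (fun q _ => hs q)

def xh (i j : Fin n) : Multiplicative B →* SteinbergGroup n B where
  toFun r := x i j r.toAdd
  map_one' := x_zero i j
  map_mul' r s := x_add i j _ _

theorem colc (l : Fin n) : Pairwise fun q q' => ∀ (r s : Multiplicative B),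
    Commute (xh (B := B) q l r) (xh q' l s) := by
  intro q q' _ r s
  by_cases h1 : l = q'
  · subst h1; simp [xh, x_self]
  by_cases h2 : q = l
  · subst h2; simp [xh, x_self]
  exact x_comm h1 h2 _ _

theorem rowc (l : Fin n) : Pairwise fun q q' => ∀ (r s : Multiplicative B),
    Commute (xh (B := B) l q r) (xh l q' s) := by
  intro q q' _ r s
  by_cases h1 : l = q'
  · subst h1; simp [xh, x_self]
  by_cases h2 : q = l
  · subst h2; simp [xh, x_self]
  exact x_comm h2 h1 _ _

noncomputable def col (l : Fin n) (f : Fin n → B) : SteinbergGroup n B :=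
  MonoidHom.noncommPiCoprod (fun q => xh (B := B) q l) (colc l)
    (fun q => Multiplicative.ofAdd (f q))

noncomputable def row (l : Fin n) (f : Fin n → B) : SteinbergGroup n B :=
  MonoidHom.noncommPiCoprod (fun q => xh (B := B) l q) (rowc l)
    (fun q => Multiplicative.ofAdd (f q))

theorem col_add (l : Fin n) (f g : Fin n → B) : col l (f + g) = col l f * col l g := by
  rw [col, col, col, ← map_mul]; rfl

theorem row_add (l : Fin n) (f g : Fin n → B) : row l (f + g) = row l f * row l g := by
  rw [row, row, row, ← map_mul]; rfl

theorem col_zero (l : Fin n) : col l (0 : Fin n → B) = 1 := by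
  simpa using col_add l (0 : Fin n → B) 0
theorem row_zero (l : Fin n) : row l (0 : Fin n → B) = 1 := by
  simpa using row_add l (0 : Fin n → B) 0

theorem col_neg (l : Fin n) (f : Fin n → B) : col l (-f) = (col l f)⁻¹ := by
  rw [eq_inv_iff_mul_eq_one, ← col_add]; simp [col_zero]
theorem row_neg (l : Fin n) (f : Fin n → B) : row l (-f) = (row l f)⁻¹ := by
  rw [eq_inv_iff_mul_eq_one, ← row_add]; simp [row_zero]

theorem ofAdd_single (q : Fin n) (b : B) :
    (fun q' => Multiplicative.ofAdd ((Pi.single q b : Fin n → B) q')) =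
      Pi.mulSingle q (Multiplicative.ofAdd b) := by
  ext q'
  by_cases h : q' = q
  · subst h; simp
  · simp [Pi.single_eq_of_ne h, Pi.mulSingle_eq_of_ne h]

theorem col_single (l q : Fin n) (b : B) : col l (Pi.single q b) = x q l b := by
  rw [col, ofAdd_single]
  exact MonoidHom.noncommPiCoprod_mulSingle (N := fun _ => Multiplicative B) (ϕ := fun q => xh (B := B) q l) (hcomm := colc l) _ _

theorem row_single (l q : Fin n) (b : B) : row l (Pi.single q b) = x l q b := by
  rw [row, ofAdd_single]
  exact MonoidHom.noncommPiCoprod_mulSingle (N := fun _ => Multiplicative B) (ϕ := fun q => xh (B := B) l q) (hcomm := rowc l) _ _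

theorem col_comm (l : Fin n) (f g : Fin n → B) : Commute (col l f) (col l g) := by
  rw [Commute, SemiconjBy, ← col_add, ← col_add, add_comm]
theorem row_comm (l : Fin n) (f g : Fin n → B) : Commute (row l f) (row l g) := by
  rw [Commute, SemiconjBy, ← row_add, ← row_add, add_comm]

attribute [irreducible] col row x

theorem x_conj_col {l h k : Fin n} (hhk : h ≠ k) (hl : h ≠ l) (hkl : k ≠ l) (s : B)
    (f : Fin n → B) : x h k s * col l f = col l (f + Pi.single h (s * f k)) * x h k s := by
  refine vec_ind (P := fun f => x h k s * col l f = col l (f + Pi.single h (s * f k)) * x h k s)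
    ?_ ?_ f ?_
  · simp [col_zero]
  · intro f g hf hg
    have : f + g + Pi.single h (s * (f + g) k) =
      (f + Pi.single h (s * f k)) + (g + Pi.single h (s * g k)) := by
      rw [Pi.add_apply, mul_add, Pi.single_add]; abel
    rw [this, col_add l f, col_add, ← mul_assoc, hf, mul_assoc, hg, ← mul_assoc]
  · intro q
    rw [col_add, col_single, col_single]
    by_cases hq : q = k
    · subst hq
      rw [x_mul hhk hkl hl, Pi.single_eq_same]
      rw [(x_comm hl.symm hkl _ _ : Commute (x q l _) (x h l _)).eq]
    · rw [Pi.single_eq_of_ne (Ne.symm hq)]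
      simp only [mul_zero, x_zero, mul_one]
      exact x_comm (Ne.symm hq) hl _ _

theorem row_conj_x {l h k : Fin n} (hhk : h ≠ k) (hl : h ≠ l) (hkl : k ≠ l) (s : B)
    (f : Fin n → B) : row l f * x h k s = x h k s * row l (f + Pi.single k (f h * s)) := by
  refine vec_ind (P := fun f => row l f * x h k s = x h k s * row l (f + Pi.single k (f h * s)))
    ?_ ?_ f ?_
  · simp [row_zero]
  · intro f g hf hg
    have : f + g + Pi.single k ((f + g) h * s) =
      (f + Pi.single k (f h * s)) + (g + Pi.single k (g h * s)) := by
      rw [Pi.add_apply, add_mul, Pi.single_add]; abel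
    rw [this, row_add l f, row_add l (_ + _), mul_assoc, hg, ← mul_assoc, hf, mul_assoc]
  · intro q
    rw [row_add, row_single, row_single]
    by_cases hq : q = h
    · subst hq
      rw [x_mul hl.symm hhk hkl.symm, Pi.single_eq_same]
      rw [(x_comm hl hkl.symm  _ _ : Commute (x l q _) (x l k _)).eq, ← mul_assoc,
        ← (x_comm hkl hhk _ _ : Commute (x q k _) (x l k _)).eq]
    · rw [Pi.single_eq_of_ne (Ne.symm hq)]
      simp only [zero_mul, x_zero, mul_one]
      exact x_comm hq hkl.symm _ _

/-- elements acting on the `l`-th column and row groups through their matrix -/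
def N (l : Fin n) (g : SteinbergGroup n B) : Prop :=
  ∀ f : Fin n → B, g * col l f = col l (pi g *ᵥ f) * g ∧ row l f * g = g * row l (f ᵥ* pi g)

theorem N_one (l : Fin n) : N l (1 : SteinbergGroup n B) := by
  intro f; simp [pi_one]

theorem N_mul {l : Fin n} {g h : SteinbergGroup n B} (hg : N l g) (hh : N l h) : N l (g * h) := by
  intro f
  constructor
  · rw [mul_assoc, (hh f).1, ← mul_assoc, (hg _).1, pi_mul, mulVec_mulVec, mul_assoc]
  · rw [← mul_assoc, (hg f).2, mul_assoc, (hh _).2, pi_mul, vecMul_vecMul, mul_assoc]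

theorem N_x {l h k : Fin n} (hl : h ≠ l) (hkl : k ≠ l) (s : B) : N l (x h k s) := by
  by_cases hhk : h = k
  · subst hhk; rw [x_self]; exact N_one l
  intro f
  rw [pi_x_mulVec hhk, pi_x_vecMul hhk]
  exact ⟨x_conj_col hhk hl hkl s f, row_conj_x hhk hl hkl s f⟩

theorem N_col {l m : Fin n} (hlm : l ≠ m) (f : Fin n → B) (hf : f l = 0) : N l (col m f) := by
  refine vec_ind (P := fun f => N l (col m f)) ?_ ?_ f ?_
  · rw [col_zero]; exact N_one l
  · intro f g hf hg; rw [col_add]; exact N_mul hf hg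
  · intro q
    rw [col_single]
    by_cases hq : q = l
    · subst hq; rw [hf, x_zero]; exact N_one _
    · exact N_x hq hlm.symm _

theorem N_row {l m : Fin n} (hlm : l ≠ m) (f : Fin n → B) (hf : f l = 0) : N l (row m f) := by
  refine vec_ind (P := fun f => N l (row m f)) ?_ ?_ f ?_
  · rw [row_zero]; exact N_one l
  · intro f g hf hg; rw [row_add]; exact N_mul hf hg
  · intro q
    rw [row_single]
    by_cases hq : q = l
    · subst hq; rw [hf, x_zero]; exact N_one _
    · exact N_x hlm.symm hq _

theorem pi_col (l : Fin n) (f : Fin n → B) (hf : f l = 0) :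
    pi (col l f) = 1 + vecMulVec f (Pi.single l 1) := by
  refine (vec_ind (P := fun f => f l = 0 ∧ pi (col l f) = 1 + vecMulVec f (Pi.single l 1))
    ?_ ?_ f ?_).2
  · simp [col_zero, pi_one]
  · rintro f g ⟨hf, hf'⟩ ⟨hg, hg'⟩
    refine ⟨by simp [hf, hg], ?_⟩
    rw [col_add, pi_mul, hf', hg', add_mul, mul_add, mul_add, vecMulVec_mul_vecMulVec]
    simp [hg, add_vecMulVec]
    abel
  · intro q
    by_cases hq : q = l
    · subst hq; simp [hf, col_zero, pi_one]
    · refine ⟨Pi.single_eq_of_ne (Ne.symm hq) _, ?_⟩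
      rw [col_single, pi_x hq]
      congr 1
      ext a b
      by_cases h1 : a = q <;> by_cases h2 : b = l <;>
        simp [vecMulVec_apply, Matrix.single_apply, Pi.single_apply, h1, h2]
      all_goals grind

theorem pi_row (l : Fin n) (f : Fin n → B) (hf : f l = 0) :
    pi (row l f) = 1 + vecMulVec (Pi.single l 1) f := by
  refine (vec_ind (P := fun f => f l = 0 ∧ pi (row l f) = 1 + vecMulVec (Pi.single l 1) f)
    ?_ ?_ f ?_).2
  · simp [row_zero, pi_one]
  · rintro f g ⟨hf, hf'⟩ ⟨hg, hg'⟩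
    refine ⟨by simp [hf, hg], ?_⟩
    rw [row_add, pi_mul, hf', hg', add_mul, mul_add, mul_add, vecMulVec_mul_vecMulVec]
    simp [hf, vecMulVec_add]
    abel
  · intro q
    by_cases hq : q = l
    · subst hq; simp [hf, row_zero, pi_one]
    · refine ⟨Pi.single_eq_of_ne (Ne.symm hq) _, ?_⟩
      rw [row_single, pi_x (Ne.symm hq)]
      congr 1
      ext a b
      by_cases h1 : a = l <;> by_cases h2 : b = q <;>
        simp [vecMulVec_apply, Matrix.single_apply, Pi.single_apply, h1, h2]
      all_goals grind

end basics
end StLG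


namespace StLG
open Matrix
set_option linter.unusedSimpArgs false
set_option linter.unusedVariables false

section grp
variable {G : Type*} [Group G]

theorem sc_comm {a x x' y y' : G} (h1 : SemiconjBy a x x') (h2 : SemiconjBy a y y') :
    SemiconjBy a ⁅x, y⁆ ⁅x', y'⁆ := by
  simp only [commutatorElement_def]
  exact ((h1.mul_right h2).mul_right h1.inv_right).mul_right h2.inv_right

theorem cG4_aux (c a b : G) : ⁅c, a * b⁆ = ⁅c, a⁆ * (a * ⁅c, b⁆ * a⁻¹) := by
  simp only [commutatorElement_def]; group

theorem cG1 {c r1 r2 : G} (h : Commute c r2) (h' : Commute r1 r2) : ⁅c, r1 * r2⁆ = ⁅c, r1⁆ := by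
  rw [cG4_aux, commutatorElement_eq_one_iff_commute.mpr h]; group

theorem cG2 {c1 c2 r : G} (h : Commute c1 r) (h' : Commute c1 c2) : ⁅c1 * c2, r⁆ = ⁅c2, r⁆ := by
  rw [h'.eq, commutatorElement_def, commutatorElement_def]
  have : c2 * c1 * r = c2 * r * c1 := by rw [mul_assoc, h.eq, mul_assoc]
  rw [this]; group

theorem cG3 (a b r : G) : ⁅a * b, r⁆ = a * ⁅b, r⁆ * a⁻¹ * ⁅a, r⁆ := by
  simp only [commutatorElement_def]; group

theorem cG4 (c a b : G) : ⁅c, a * b⁆ = ⁅c, a⁆ * (a * ⁅c, b⁆ * a⁻¹) := by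
  simp only [commutatorElement_def]; group

theorem cG5 (a b : G) : ⁅a, b⁆ * (b * a) = a * b := by
  simp only [commutatorElement_def]; group

theorem conj_of_comm {a b : G} (h : Commute a b) : a * b * a⁻¹ = b := by
  rw [h.eq]; group

theorem sc_eq {a x y : G} (h : SemiconjBy a x y) (h' : Commute a x) : x = y := by
  have := h.eq.symm.trans h'.eq
  exact (mul_right_cancel this).symm
end grp

section two
variable {n : ℕ} {B : Type} [CommRing B]

noncomputable def Y (l : Fin n) (f v : Fin n → B) : SteinbergGroup n B := ⁅col l f, row l v⁆

theorem pi_Y {l : Fin n} {f v : Fin n → B} (hf : f l = 0) (hv : v l = 0) (h : v ⬝ᵥ f = 0) :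
    pi (Y l f v) = 1 + vecMulVec f v := by
  have h1 := congrArg pi (cG5 (col l f) (row l v))
  rw [pi_mul, pi_mul, pi_mul, pi_col l f hf, pi_row l v hv] at h1
  have h2 : (1 + vecMulVec f v) * ((1 + vecMulVec (Pi.single l 1) v) *
      (1 + vecMulVec f (Pi.single l 1))) =
      (1 + vecMulVec f (Pi.single l 1)) * (1 + vecMulVec (Pi.single l 1) v) := by
    simp only [add_mul, mul_add, vecMulVec_mul_vecMulVec, one_mul, mul_one, h, zero_smul, smul_zero]
    simp [hv, h]
    try abel
  rw [← h2] at h1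
  have h3 := pi_mul_inv (row l v * col l f)
  rw [pi_mul, pi_col l f hf, pi_row l v hv] at h3
  have h4 := congrArg (· * pi (row l v * col l f)⁻¹) h1
  simp only [mul_assoc] at h4 h3
  rw [h3, mul_one, mul_one] at h4
  exact h4

theorem N_Y {l m : Fin n} (hlm : l ≠ m) {f v : Fin n → B} (hf : f l = 0) (hv : v l = 0) :
    N l (Y m f v) := by
  rw [Y, commutatorElement_def, ← col_neg, ← row_neg]
  exact N_mul (N_mul (N_mul (N_col hlm f hf) (N_row hlm v hv)) (N_col hlm _ (by simp [hf])))
    (N_row hlm _ (by simp [hv]))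

theorem mv1 (f v h : Fin n → B) : (1 + vecMulVec f v) *ᵥ h = h + (v ⬝ᵥ h) • f := by
  rw [add_mulVec, one_mulVec, vecMulVec_mulVec]
  congr 1
  ext q; simp [mul_comm]

theorem vm1 (f v h : Fin n → B) : h ᵥ* (1 + vecMulVec f v) = h + (h ⬝ᵥ f) • v := by
  rw [vecMul_add, vecMul_one, vecMul_vecMulVec]

theorem Y_col {l m : Fin n} (hlm : l ≠ m) {f v : Fin n → B} (hfl : f l = 0) (hvl : v l = 0)
    (hfm : f m = 0) (hvm : v m = 0) (h : v ⬝ᵥ f = 0) (w : Fin n → B) :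
    SemiconjBy (Y m f v) (col l w) (col l (w + (v ⬝ᵥ w) • f)) := by
  have := (N_Y hlm hfl hvl w).1
  rwa [pi_Y hfm hvm h, mv1] at this

theorem Y_row {l m : Fin n} (hlm : l ≠ m) {f v : Fin n → B} (hfl : f l = 0) (hvl : v l = 0)
    (hfm : f m = 0) (hvm : v m = 0) (h : v ⬝ᵥ f = 0) (w : Fin n → B) :
    row l w * Y m f v = Y m f v * row l (w + (w ⬝ᵥ f) • v) := by
  have := (N_Y hlm hfl hvl w).2
  rwa [pi_Y hfm hvm h, vm1] at this

theorem Y_row' {l m : Fin n} (hlm : l ≠ m) {f v : Fin n → B} (hfl : f l = 0) (hvl : v l = 0)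
    (hfm : f m = 0) (hvm : v m = 0) (h : v ⬝ᵥ f = 0) (w : Fin n → B) :
    SemiconjBy (Y m f v) (row l w) (row l (w - (w ⬝ᵥ f) • v)) := by
  have := Y_row hlm hfl hvl hfm hvm h (w - (w ⬝ᵥ f) • v)
  rw [sub_dotProduct, smul_dotProduct, h, smul_zero, sub_zero, sub_add_cancel] at this
  exact this.symm

theorem col_col {l m : Fin n} (hlm : l ≠ m) {f : Fin n → B} (hfm : f m = 0) (hfl : f l = 0)
    (h : Fin n → B) : SemiconjBy (col l f) (col m h) (col m (h + h l • f)) := by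
  have := (N_col hlm.symm f hfm h).1
  rw [pi_col l f hfl, mv1, single_dotProduct, one_mul] at this
  exact this

theorem row_row {l m : Fin n} (hlm : l ≠ m) {v : Fin n → B} (hvm : v m = 0) (hvl : v l = 0)
    (h : Fin n → B) : row m h * row l v = row l v * row m (h + h l • v) := by
  have := (N_row hlm.symm v hvm h).2
  rw [pi_row l v hvl, vm1] at this
  simpa using this

theorem row_col {l m : Fin n} (hlm : l ≠ m) {v : Fin n → B} (hvm : v m = 0) (hvl : v l = 0)
    (h : Fin n → B) : SemiconjBy (row l v) (col m h) (col m (h + (v ⬝ᵥ h) • Pi.single l 1)) := by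
  have := (N_row hlm.symm v hvm h).1
  rwa [pi_row l v hvl, mv1] at this

theorem col_col_comm {l m : Fin n} (hlm : l ≠ m) {f g : Fin n → B} (hfm : f m = 0) (hfl : f l = 0)
    (hgl : g l = 0) : Commute (col l f) (col m g) := by
  have := col_col hlm hfm hfl g
  rwa [hgl, zero_smul, add_zero] at this

theorem row_row_comm {l m : Fin n} (hlm : l ≠ m) {f g : Fin n → B} (hfm : f m = 0) (hfl : f l = 0)
    (hgl : g l = 0) : Commute (row l f) (row m g) := by
  have := row_row hlm hfm hfl g
  rw [hgl, zero_smul, add_zero] at this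
  exact this.symm

theorem row_col_comm {l m : Fin n} (hlm : l ≠ m) {v f : Fin n → B} (hvm : v m = 0) (hvl : v l = 0)
    (h : v ⬝ᵥ f = 0) : Commute (row l v) (col m f) := by
  have := row_col hlm hvm hvl f
  rwa [h, zero_smul, add_zero] at this

theorem LemA {l m : Fin n} (hlm : l ≠ m) {f v : Fin n → B} (hfl : f l = 0) (hvl : v l = 0)
    (hfm : f m = 0) (hvm : v m = 0) (h : v ⬝ᵥ f = 0) (s : B) :
    Y m (s • f) v = Y l f (s • v) := by
  have hsf : (s • f) l = 0 := by simp [hfl]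
  have hsf' : (s • f) m = 0 := by simp [hfm]
  have hsv : (s • v) m = 0 := by simp [hvm]
  have hsv' : (s • v) l = 0 := by simp [hvl]
  have hd : v ⬝ᵥ (s • f) = 0 := by simp [h]
  have c1 : Commute (col l f) (row m v) := (row_col_comm hlm.symm hvl hvm h).symm
  have c2 : Commute (col l f) (col m (s • f)) := col_col_comm hlm hfm hfl hsf
  have e1 : ⁅col l f * col m (s • f), row m v⁆ = Y m (s • f) v := cG2 c1 c2
  have s1 : SemiconjBy (x l m s) (col l f * col m (s • f)) (col l f) := by
    have := (col_col hlm hfm hfl (Pi.single l s)).eq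
    rw [Pi.single_eq_same, col_add, col_single] at this
    have c3 : Commute (x l m s) (col m (s • f)) := by
      rw [← col_single]; exact col_comm _ _ _
    rw [SemiconjBy, this, c2.eq, mul_assoc]
  have s2 : SemiconjBy (x l m s) (row m v) (row l (s • v) * row m v) := by
    have := row_row hlm.symm hvl hvm (Pi.single m s)
    rw [Pi.single_eq_same, row_add, row_single] at this
    have c3 : Commute (x l m s) (row l (s • v)) := by
      rw [← row_single]; exact row_comm _ _ _
    have c4 : Commute (row m v) (row l (s • v)) := row_row_comm hlm.symm hvl hvm hsv
    rw [SemiconjBy, this, c3.eq, ← mul_assoc, c4.eq]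
  have s3 := sc_comm s1 s2
  rw [e1, cG1 c1 (row_row_comm hlm hsv hsv' hvl)] at s3
  refine sc_eq s3 ?_
  have := Y_row hlm hsf hvl hsf' hvm hd (Pi.single m s)
  rw [single_dotProduct, hsf', mul_zero, zero_smul, add_zero, row_single] at this
  exact this

theorem Yswap {l m : Fin n} (hlm : l ≠ m) {f v : Fin n → B} (hfl : f l = 0) (hvl : v l = 0)
    (hfm : f m = 0) (hvm : v m = 0) (h : v ⬝ᵥ f = 0) : Y m f v = Y l f v := by
  simpa using LemA hlm hfl hvl hfm hvm h 1

theorem Yscale {l m : Fin n} (hlm : l ≠ m) {f v : Fin n → B} (hfl : f l = 0) (hvl : v l = 0)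
    (hfm : f m = 0) (hvm : v m = 0) (h : v ⬝ᵥ f = 0) (s : B) : Y l (s • f) v = Y l f (s • v) := by
  rw [← LemA hlm hfl hvl hfm hvm h s, Yswap hlm (by simp [hfl]) hvl (by simp [hfm]) hvm
    (by simp [h])]

/-- zero out a coordinate -/
def z (u : Fin n → B) (l : Fin n) : Fin n → B := Function.update u l 0

theorem z_same (u : Fin n → B) (l : Fin n) : z u l l = 0 := by simp [z]
theorem z_ne (u : Fin n → B) {l q : Fin n} (h : q ≠ l) : z u l q = u q := by simp [z, h]
theorem z_zero (u : Fin n → B) {l q : Fin n} (h : u q = 0) : z u l q = 0 := by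
  by_cases hq : q = l
  · subst hq; exact z_same _ _
  · rw [z_ne u hq, h]
theorem z_decomp (u : Fin n → B) (l : Fin n) : u = z u l + Pi.single l (u l) := by
  ext q
  by_cases h : q = l
  · subst h; simp [z]
  · simp [z, h]
theorem z_dot (u v : Fin n → B) (l : Fin n) (hv : v l = 0) : v ⬝ᵥ z u l = v ⬝ᵥ u := by
  conv_rhs => rw [z_decomp u l]
  simp [dotProduct_add, hv]
theorem z_z (u : Fin n → B) (l m : Fin n) : z (z u l) m = z (z u m) l := by
  ext q; simp only [z, Function.update_apply]; grind

noncomputable def Xl (l : Fin n) (u v : Fin n → B) : SteinbergGroup n B :=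
  Y l (z u l) v * row l (u l • v)

theorem Ytwo {l m : Fin n} (hlm : l ≠ m) {u v : Fin n → B} (hvl : v l = 0) (hvm : v m = 0)
    (h : v ⬝ᵥ u = 0) : Y l (z u l) v = Y l (z (z u l) m) v * row m (u m • v) := by
  set f := z (z u l) m with hf
  have hfl : f l = 0 := z_zero _ (z_same _ _)
  have hfm : f m = 0 := z_same _ _
  have hd : v ⬝ᵥ f = 0 := by rw [hf, z_dot _ _ _ hvm, z_dot _ _ _ hvl, h]
  have e : z u l = f + Pi.single m (u m) := by
    have := z_decomp (z u l) m
    rwa [z_ne u hlm.symm] at this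
  have hsv : (u m • v) m = 0 := by simp [hvm]
  have hsv' : (u m • v) l = 0 := by simp [hvl]
  have e2 : ⁅x m l (u m), row l v⁆ = row m (u m • v) := by
    have := row_row hlm hvm hvl (Pi.single l (u m))
    rw [Pi.single_eq_same, row_add, row_single] at this
    have c3 : Commute (x m l (u m)) (row m (u m • v)) := by
      rw [← row_single]; exact row_comm _ _ _
    have c4 : Commute (row l v) (row m (u m • v)) := row_row_comm hlm hvm hvl hsv'
    rw [commutatorElement_def, this, c3.eq, ← mul_assoc, c4.eq]; group
  have c5 : Commute (col l f) (row m (u m • v)) := 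
    (row_col_comm hlm.symm hsv' hsv (by simp [hd])).symm
  have c6 : Commute (Y l f v) (row m (u m • v)) := by
    have := Y_row' hlm.symm hfm hvm hfl hvl hd (u m • v)
    rw [smul_dotProduct, hd, smul_zero, zero_smul, sub_zero] at this
    exact this
  rw [Y, e, col_add, col_single, cG3, e2, conj_of_comm c5]
  exact c6.symm.eq

theorem Xl_two {l m : Fin n} (hlm : l ≠ m) {u v : Fin n → B} (hvl : v l = 0) (hvm : v m = 0)
    (h : v ⬝ᵥ u = 0) :
    Xl l u v = Y l (z (z u l) m) v * row m (u m • v) * row l (u l • v) := by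
  rw [Xl, Ytwo hlm hvl hvm h]

theorem Xl_swap {l m : Fin n} {u v : Fin n → B} (hvl : v l = 0) (hvm : v m = 0)
    (h : v ⬝ᵥ u = 0) : Xl l u v = Xl m u v := by
  by_cases hlm : l = m
  · rw [hlm]
  rw [Xl_two hlm hvl hvm h, Xl_two (Ne.symm hlm) hvm hvl h, mul_assoc, mul_assoc,
    (row_row_comm hlm (by simp [hvm]) (by simp [hvl]) (by simp [hvl]) :
      Commute (row l (u l • v)) (row m (u m • v))).eq, z_z u l m]
  congr 1
  refine (Yswap hlm (z_same _ _) hvl (z_zero _ (z_same _ _)) hvm ?_).symm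
  rw [z_dot _ _ _ hvl, z_dot _ _ _ hvm, h]

def Good (l : Fin n) (u w : Fin n → B) : Prop :=
  w l = 0 ∧ w ⬝ᵥ u = 0 ∧ N l (Y l (z u l) w)

theorem good_two {l m : Fin n} (hlm : l ≠ m) {u v : Fin n → B} (hvl : v l = 0) (hvm : v m = 0)
    (h : v ⬝ᵥ u = 0) : Good l u v := by
  refine ⟨hvl, h, ?_⟩
  rw [Ytwo hlm hvl hvm h, ← Yswap hlm (z_zero _ (z_same _ _)) hvl (z_same _ _) hvm
    (by rw [z_dot _ _ _ hvm, z_dot _ _ _ hvl, h])]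
  exact N_mul (N_Y hlm (z_zero _ (z_same _ _)) hvl) (N_row hlm _ (by simp [hvl]))

theorem Y_good {l : Fin n} {u w : Fin n → B} (hw : Good l u w) {v : Fin n → B} (hvl : v l = 0)
    (h : v ⬝ᵥ u = 0) : Commute (Y l (z u l) w) (row l v) := by
  have := (hw.2.2 v).2
  rw [pi_Y (z_same _ _) hw.1 (by rw [z_dot _ _ _ hw.1, hw.2.1]), vm1, z_dot _ _ _ hvl, h,
    zero_smul, add_zero] at this
  exact this.symm

theorem Y_add {l : Fin n} {u w : Fin n → B} (hw : Good l u w) {v : Fin n → B} (hvl : v l = 0)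
    (h : v ⬝ᵥ u = 0) : Y l (z u l) (v + w) = Y l (z u l) v * Y l (z u l) w := by
  rw [Y, row_add, cG4]
  congr 1
  exact conj_of_comm (Y_good hw hvl h).symm

theorem good_add {l : Fin n} {u v w : Fin n → B} (hv : Good l u v) (hw : Good l u w) :
    Good l u (v + w) := by
  refine ⟨by simp [hv.1, hw.1], by rw [add_dotProduct, hv.2.1, hw.2.1, add_zero], ?_⟩
  rw [Y_add hw hv.1 hv.2.1]
  exact N_mul hv.2.2 hw.2.2

theorem Xl_add {l : Fin n} {u v w : Fin n → B} (hv : v l = 0) (hv' : v ⬝ᵥ u = 0)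
    (hw : Good l u w) : Xl l u (v + w) = Xl l u v * Xl l u w := by
  rw [Xl, Xl, Xl, Y_add hw hv hv', smul_add, row_add]
  have : Commute (Y l (z u l) w) (row l (u l • v)) := Y_good hw (by simp [hv]) (by simp [hv'])
  calc _ = Y l (z u l) v * (Y l (z u l) w * row l (u l • v)) * row l (u l • w) := by group
    _ = _ := by rw [this.eq]; group

theorem Xl_comm {l : Fin n} {u v w : Fin n → B} (hv : Good l u v)
    (hw : Good l u w) : Commute (Xl l u v) (Xl l u w) := by
  rw [Commute, SemiconjBy, ← Xl_add hv.1 hv.2.1 hw, ← Xl_add hw.1 hw.2.1 hv, add_comm]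

theorem pi_Xl {l : Fin n} {u v : Fin n → B} (hv : v l = 0) (hv' : v ⬝ᵥ u = 0) :
    pi (Xl l u v) = 1 + vecMulVec u v := by
  rw [Xl, pi_mul, pi_Y (z_same _ _) hv (by rw [z_dot _ _ _ hv, hv']), pi_row l _ (by simp [hv])]
  conv_rhs => rw [z_decomp u l]
  rw [mul_add, add_mul, add_mul, vecMulVec_mul_vecMulVec]
  simp only [one_mul, mul_one, dotProduct_single, hv, zero_mul, zero_smul, add_zero,
    add_vecMulVec, add_assoc]
  simp
  ext a b; simp [vecMulVec_apply, Pi.single_apply]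

theorem Xl_conj {l h k : Fin n} (hhk : h ≠ k) (hl : h ≠ l) (hkl : k ≠ l) (s : B)
    (u v : Fin n → B) : SemiconjBy (x h k s) (Xl l u v)
      (Xl l (u + Pi.single h (s * u k)) (v - Pi.single k (s * v h))) := by
  have hc := fun f => x_conj_col hhk hl hkl s f
  have hr : ∀ f, SemiconjBy (x h k s) (row l f) (row l (f - Pi.single k (s * f h))) := by
    intro f
    have := row_conj_x hhk hl hkl s (f - Pi.single k (s * f h))
    simp only [Pi.sub_apply, Pi.single_eq_of_ne hhk, sub_zero, mul_comm (f h) s,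
      sub_add_cancel] at this
    exact this.symm
  rw [Xl, Xl]
  have e1 : z (u + Pi.single h (s * u k)) l = z u l + Pi.single h (s * (z u l) k) := by
    rw [z_ne u hkl]
    ext q; simp only [z, Function.update_apply, Pi.single_apply, Pi.add_apply]; grind
  have e2 : (u + Pi.single h (s * u k) : Fin n → B) l = u l := by simp [hl.symm]
  rw [e1, e2]
  refine SemiconjBy.mul_right (sc_comm (hc _) (hr _)) ?_
  have e3 : u l • (v - Pi.single k (s * v h)) = u l • v - Pi.single k (s * (u l • v) h) := by
    ext q; simp only [Pi.single_apply, Pi.sub_apply, Pi.smul_apply, smul_eq_mul]; grind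
  rw [e3]
  exact hr _

end two
end StLG


namespace StLG
open Matrix
set_option linter.unusedSimpArgs false
set_option linter.unusedVariables false

section three
variable {n : ℕ} {B : Type} [CommRing B]

theorem exists_avoid [hn : Fact (4 ≤ n)] (a b c : Fin n) : ∃ l, l ≠ a ∧ l ≠ b ∧ l ≠ c := by
  have : ∃ l, l ∉ ({a, b, c} : Finset (Fin n)) := by
    by_contra h
    push Not at h
    have h1 : ({a, b, c} : Finset (Fin n)) = Finset.univ := Finset.eq_univ_iff_forall.mpr h
    have h2 := congrArg Finset.card h1
    have h3 := Finset.card_le_three (a := a) (b := b) (c := c)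
    have := hn.out
    simp at h2
    omega
  simpa using this

theorem z_of_zero {u : Fin n → B} {l : Fin n} (h : u l = 0) : z u l = u := by
  ext q; simp only [z, Function.update_apply]; grind

theorem z_smul (u : Fin n → B) (l : Fin n) (t : B) : z (t • u) l = t • z u l := by
  ext q; simp only [z, Function.update_apply, Pi.smul_apply, smul_eq_mul]; grind

theorem z_add (u v : Fin n → B) (l : Fin n) : z (u + v) l = z u l + z v l := by
  ext q; simp only [z, Function.update_apply, Pi.add_apply]; grind

theorem Y_zero (l : Fin n) (f : Fin n → B) : Y l f 0 = 1 := by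
  simp [Y, row_zero]

theorem Xl_zero (l : Fin n) (f : Fin n → B) : Xl l f 0 = 1 := by
  simp [Xl, Y_zero, row_zero]

def kz (u : Fin n → B) (p m : Fin n) (c : B) : Fin n → B :=
  Pi.single p (c * u m) - Pi.single m (c * u p)

theorem kz_dot (u : Fin n → B) (p m : Fin n) (c : B) : kz u p m c ⬝ᵥ u = 0 := by
  simp only [kz, sub_dotProduct, single_dotProduct]; ring

theorem kz_ne (u : Fin n → B) {p m q : Fin n} (hp : q ≠ p) (hm : q ≠ m) (c : B) :
    kz u p m c q = 0 := by simp [kz, hp, hm]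

theorem kz_add (u : Fin n → B) (p m : Fin n) (c d : B) :
    kz u p m (c + d) = kz u p m c + kz u p m d := by
  simp only [kz, add_mul, Pi.single_add]; abel

theorem kz_self (u : Fin n → B) (p : Fin n) (c : B) : kz u p p c = 0 := by simp [kz]

theorem kz_anti (u : Fin n → B) (p m : Fin n) (c : B) : kz u p m c = kz u m p (-c) := by
  simp [kz, sub_eq_add_neg, add_comm, Pi.single_neg]

theorem kz_smul (u : Fin n → B) (p m : Fin n) (c s : B) : s • kz u p m c = kz u p m (s * c) := by
  ext q; simp only [kz, Pi.smul_apply, Pi.sub_apply, Pi.single_apply, smul_eq_mul]; grind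

theorem kz_smul' (u : Fin n → B) (p m : Fin n) (c s : B) : kz (s • u) p m c = kz u p m (s * c) := by
  ext q; simp only [kz, Pi.smul_apply, Pi.sub_apply, Pi.single_apply, smul_eq_mul]; grind

open Classical in
noncomputable def E (u : Fin n → B) (p m : Fin n) (c : B) : SteinbergGroup n B :=
  if h : ∃ l, l ≠ p ∧ l ≠ m then Xl h.choose u (kz u p m c) else 1

theorem E_eq {l p m : Fin n} (hp : l ≠ p) (hm : l ≠ m) (u : Fin n → B) (c : B) :
    E u p m c = Xl l u (kz u p m c) := by
  have h : ∃ l, l ≠ p ∧ l ≠ m := ⟨l, hp, hm⟩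
  rw [E, dif_pos h]
  exact Xl_swap (kz_ne _ h.choose_spec.1 h.choose_spec.2 _) (kz_ne _ hp hm _) (kz_dot _ _ _ _)

variable [hn : Fact (4 ≤ n)]

theorem kz_good {l p m : Fin n} (hp : l ≠ p) (hm : l ≠ m) (u : Fin n → B) (c : B) :
    Good l u (kz u p m c) := by
  obtain ⟨q, h1, h2, h3⟩ := exists_avoid l p m
  exact good_two h1.symm (kz_ne _ hp hm _) (kz_ne _ h2 h3 _) (kz_dot _ _ _ _)

theorem E_add (u : Fin n → B) (p m : Fin n) (c d : B) :
    E u p m (c + d) = E u p m c * E u p m d := by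
  obtain ⟨l, hp, hm, _⟩ := exists_avoid p m m
  rw [E_eq hp hm, E_eq hp hm, E_eq hp hm, kz_add,
    Xl_add (kz_ne _ hp hm _) (kz_dot _ _ _ _) (kz_good hp hm _ _)]

theorem E_zero (u : Fin n → B) (p m : Fin n) : E u p m 0 = 1 := by
  simpa using E_add u p m 0 0

theorem E_self (u : Fin n → B) (p : Fin n) (c : B) : E u p p c = 1 := by
  obtain ⟨l, hp, hm, _⟩ := exists_avoid p p p
  rw [E_eq hp hm, kz_self, Xl_zero]

theorem E_anti (u : Fin n → B) (p m : Fin n) (c : B) : E u p m c = E u m p (-c) := by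
  obtain ⟨l, hp, hm, _⟩ := exists_avoid p m m
  rw [E_eq hp hm, E_eq hm hp, kz_anti]

theorem pi_E (u : Fin n → B) (p m : Fin n) (c : B) :
    pi (E u p m c) = 1 + vecMulVec u (kz u p m c) := by
  obtain ⟨l, hp, hm, _⟩ := exists_avoid p m m
  rw [E_eq hp hm, pi_Xl (kz_ne _ hp hm _) (kz_dot _ _ _ _)]

theorem E_rel3 (u : Fin n → B) (p m q : Fin n) (c : B) :
    E u p q (c * u m) * E u m q (-(c * u p)) = E u p m (c * u q) := by
  obtain ⟨l, hp, hm, hq⟩ := exists_avoid p m q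
  rw [E_eq hp hq, E_eq hm hq, E_eq hp hm,
    ← Xl_add (kz_ne _ hp hq _) (kz_dot _ _ _ _) (kz_good hm hq _ _)]
  congr 1
  ext a; simp only [kz, Pi.add_apply, Pi.sub_apply, Pi.single_apply]; grind

omit hn in
theorem Xl_smul {l m : Fin n} (hlm : l ≠ m) {u v : Fin n → B} (hvl : v l = 0) (hvm : v m = 0)
    (h : v ⬝ᵥ u = 0) (s : B) : Xl l (s • u) v = Xl l u (s • v) := by
  rw [Xl_two hlm hvl hvm (by simp [h]), Xl_two hlm (by simp [hvl]) (by simp [hvm]) (by simp [h])]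
  rw [z_smul, z_smul, Yscale hlm (z_zero _ (z_same _ _)) hvl (z_same _ _) hvm
    (by rw [z_dot _ _ _ hvm, z_dot _ _ _ hvl, h])]
  simp only [Pi.smul_apply, smul_eq_mul, smul_smul, mul_comm]

theorem E_smul (u : Fin n → B) (p m : Fin n) (c s : B) :
    E (s • u) p m c = E u p m (s * (s * c)) := by
  obtain ⟨l, hp, hm, _⟩ := exists_avoid p m m
  obtain ⟨q, hl', hp', hm'⟩ := exists_avoid l p m
  rw [E_eq hp hm, E_eq hp hm, kz_smul', Xl_smul hl'.symm (kz_ne _ hp hm _) (kz_ne _ hp' hm' _)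
    (kz_dot _ _ _ _), kz_smul]

/-! conjugation -/
theorem E_conj1 {h k p m : Fin n} (hhk : h ≠ k) (hp : h ≠ p) (hm : h ≠ m) (u : Fin n → B)
    (c s : B) : SemiconjBy (x h k s) (E u p m c) (E (u + Pi.single h (s * u k)) p m c) := by
  have e : kz (u + Pi.single h (s * u k)) p m c = kz u p m c := by
    simp [kz, hp.symm, hm.symm]
  have hg := kz_good hp hm u c
  rw [E_eq hp hm, E_eq hp hm, e, Xl, Xl]
  have e1 : z (u + Pi.single h (s * u k)) h = z u h := by
    ext q; simp only [z, Function.update_apply, Pi.single_apply, Pi.add_apply]; grind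
  have e2 : (u + Pi.single h (s * u k) : Fin n → B) h = u h + s * u k := by simp
  rw [e1, e2, add_smul, row_add]
  set v := kz u p m c
  have h1 := (hg.2.2 (Pi.single k s)).2
  rw [pi_Y (z_same _ _) hg.1 (by rw [z_dot _ _ _ hg.1, hg.2.1]), vm1, single_dotProduct,
    z_ne u hhk.symm, row_add, row_single] at h1
  have c1 : ∀ f, Commute (x h k s) (row h f) := by
    intro f; rw [← row_single]; exact row_comm _ _ _
  rw [SemiconjBy, ← mul_assoc, h1, mul_assoc, mul_assoc, (row_comm h _ (u h • v)).eq,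
    ← row_add, (c1 _).eq, row_add]
  group

theorem E_conj2 {p k m : Fin n} (hhk : p ≠ k) (hm : p ≠ m) (u : Fin n → B)
    (c s : B) : SemiconjBy (x p k s) (E u p m c)
      (E (u + Pi.single p (s * u k)) p m c * E (u + Pi.single p (s * u k)) m k (c * s)) := by
  obtain ⟨l, hlp, hlm, hlk⟩ := exists_avoid p m k
  rw [E_eq hlp hlm, E_eq hlp hlm, E_eq hlm hlk,
    ← Xl_add (kz_ne _ hlp hlm _) (kz_dot _ _ _ _) (kz_good hlm hlk _ _)]
  have := Xl_conj hhk hlp.symm hlk.symm s u (kz u p m c)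
  have e : kz u p m c - Pi.single k (s * kz u p m c p) =
      kz (u + Pi.single p (s * u k)) p m c + kz (u + Pi.single p (s * u k)) m k (c * s) := by
    ext a; simp only [kz, Pi.add_apply, Pi.sub_apply, Pi.single_apply]; grind
  rwa [e] at this

/-! the commutation -/
omit hn in
theorem Zform {i j : Fin n} (hij : i ≠ j) {g w : Fin n → B} (hgi : g i = 0) (hgj : g j = 0)
    (hwi : w i = 0) (hwj : w j = 0) (h : w ⬝ᵥ g = 0) (α β γ δ : B) :
    ⁅col i (α • g) * col j (β • g), row i (γ • w) * row j (δ • w)⁆ =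
      Y i g ((α * γ + β * δ) • w) := by
  have cc : Commute (col i (α • g)) (col j (β • g)) :=
    col_col_comm hij (by simp [hgj]) (by simp [hgi]) (by simp [hgi])
  have rr : Commute (row i (γ • w)) (row j (δ • w)) :=
    row_row_comm hij (by simp [hwj]) (by simp [hwi]) (by simp [hwi])
  have cr : Commute (col i (α • g)) (row j (δ • w)) :=
    (row_col_comm hij.symm (by simp [hwi]) (by simp [hwj]) (by simp [h])).symm
  have rc : Commute (col j (β • g)) (row i (γ • w)) :=
    (row_col_comm hij (by simp [hwj]) (by simp [hwi]) (by simp [h])).symm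
  rw [cG3, cG1 cr rr, rr.eq, cG1 rc rr.symm]
  have c3 : Commute (col i (α • g)) ⁅col j (β • g), row j (δ • w)⁆ := sc_comm cc cr
  rw [conj_of_comm c3]
  change Y j (β • g) (δ • w) * Y i (α • g) (γ • w) = _
  rw [LemA hij hgi (by simp [hwi]) hgj (by simp [hwj]) (by simp [h]), smul_smul,
    Yscale hij hgi (by simp [hwi]) hgj (by simp [hwj]) (by simp [h]), smul_smul,
    add_comm, add_smul]
  have := Y_add (l := i) (u := g) (w := (α * γ) • w) (v := (β * δ) • w)
    (good_two hij (by simp [hwi]) (by simp [hwj]) (by simp [h])) (by simp [hwi]) (by simp [h])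
  rw [z_of_zero hgi] at this
  exact this.symm

omit hn in
theorem vec_two {k l : Fin n} (hkl : k ≠ l) {b : Fin n → B} (hb : ∀ q, q ≠ k → q ≠ l → b q = 0) :
    b = Pi.single k (b k) + Pi.single l (b l) := by
  ext q; simp only [Pi.add_apply, Pi.single_apply]; grind

omit hn in
theorem Tform {i j k l : Fin n} (hij : i ≠ j) (hkl : k ≠ l) (hlj : l ≠ j) (hik : i ≠ k)
    {a b : Fin n → B}
    (ha : ∀ q, q ≠ i → q ≠ j → a q = 0) (hb : ∀ q, q ≠ k → q ≠ l → b q = 0) :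
    row i (a i • b) * row j (a j • b) = col k (b k • a) * col l (b l • a) := by
  have h1 : ∀ q s, row q (s • b) = x q k (s * b k) * x q l (s * b l) := by
    intro q s
    conv_lhs => rw [vec_two hkl hb, smul_add, row_add, ← Pi.single_smul, ← Pi.single_smul,
      row_single, row_single]
    rfl
  have h2 : ∀ q s, col q (s • a) = x i q (s * a i) * x j q (s * a j) := by
    intro q s
    conv_lhs => rw [vec_two hij ha, smul_add, col_add, ← Pi.single_smul, ← Pi.single_smul,
      col_single, col_single]
    rfl
  rw [h1, h1, h2, h2]
  have c : Commute (x i l (a i * b l)) (x j k (a j * b k)) := x_comm hlj hik _ _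
  calc _ = x i k (a i * b k) * (x i l (a i * b l) * x j k (a j * b k)) * x j l (a j * b l) := by
        group
    _ = _ := by rw [c.eq, mul_comm (b k), mul_comm (b k), mul_comm (b l), mul_comm (b l)]; group

structure Quad (i j k l : Fin n) (f g v w : Fin n → B) : Prop where
  hij : i ≠ j
  hik : i ≠ k
  hil : i ≠ l
  hjk : j ≠ k
  hjl : j ≠ l
  hkl : k ≠ l
  hf : ∀ q, q ≠ i → q ≠ j → f q = 0
  hv : ∀ q, q ≠ i → q ≠ j → v q = 0
  hg : ∀ q, q ≠ k → q ≠ l → g q = 0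
  hw : ∀ q, q ≠ k → q ≠ l → w q = 0
  hvf : v ⬝ᵥ f = 0
  hwg : w ⬝ᵥ g = 0

omit hn in
theorem Quad.symm {i j k l : Fin n} {f g v w : Fin n → B} (Q : Quad i j k l f g v w) :
    Quad k l i j g f w v :=
  ⟨Q.hkl, Q.hik.symm, Q.hjk.symm, Q.hil.symm, Q.hjl.symm, Q.hij, Q.hg, Q.hw, Q.hf, Q.hv,
    Q.hwg, Q.hvf⟩

section quad
omit hn
variable {i j k l : Fin n} {f g v w : Fin n → B} (Q : Quad i j k l f g v w)
include Q

theorem Quad.Ysw : Y k f v = Y l f v := 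
  Yswap Q.hkl.symm (Q.hf _ Q.hil.symm Q.hjl.symm) (Q.hv _ Q.hil.symm Q.hjl.symm)
    (Q.hf _ Q.hik.symm Q.hjk.symm) (Q.hv _ Q.hik.symm Q.hjk.symm) Q.hvf

theorem Quad.YcK (h : Fin n → B) : SemiconjBy (Y k f v) (col k h) (col k (h + (v ⬝ᵥ h) • f)) := by
  rw [Q.Ysw]
  exact Y_col Q.hkl (Q.hf _ Q.hik.symm Q.hjk.symm) (Q.hv _ Q.hik.symm Q.hjk.symm)
    (Q.hf _ Q.hil.symm Q.hjl.symm) (Q.hv _ Q.hil.symm Q.hjl.symm) Q.hvf _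

theorem Quad.YcL (h : Fin n → B) : SemiconjBy (Y k f v) (col l h) (col l (h + (v ⬝ᵥ h) • f)) :=
  Y_col Q.hkl.symm (Q.hf _ Q.hil.symm Q.hjl.symm) (Q.hv _ Q.hil.symm Q.hjl.symm)
    (Q.hf _ Q.hik.symm Q.hjk.symm) (Q.hv _ Q.hik.symm Q.hjk.symm) Q.hvf _

theorem Quad.YrK (h : Fin n → B) : SemiconjBy (Y k f v) (row k h) (row k (h - (h ⬝ᵥ f) • v)) := by
  rw [Q.Ysw]
  exact Y_row' Q.hkl (Q.hf _ Q.hik.symm Q.hjk.symm) (Q.hv _ Q.hik.symm Q.hjk.symm)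
    (Q.hf _ Q.hil.symm Q.hjl.symm) (Q.hv _ Q.hil.symm Q.hjl.symm) Q.hvf _

theorem Quad.YrL (h : Fin n → B) : SemiconjBy (Y k f v) (row l h) (row l (h - (h ⬝ᵥ f) • v)) :=
  Y_row' Q.hkl.symm (Q.hf _ Q.hil.symm Q.hjl.symm) (Q.hv _ Q.hil.symm Q.hjl.symm)
    (Q.hf _ Q.hik.symm Q.hjk.symm) (Q.hv _ Q.hik.symm Q.hjk.symm) Q.hvf _

theorem Quad.YS : Commute (Y k f v) (row i (f i • w) * row j (f j • w)) := by
  rw [Tform Q.hij Q.hkl Q.hjl.symm Q.hik Q.hf Q.hw]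
  have h1 := Q.YcK (w k • f)
  have h2 := Q.YcL (w l • f)
  rw [dotProduct_smul, Q.hvf, smul_zero, zero_smul, add_zero] at h1 h2
  exact Commute.mul_right h1 h2

theorem Quad.RS (h : v ⬝ᵥ f = 0) : Commute (row k (g k • v) * row l (g l • v))
    (row i (f i • w) * row j (f j • w)) := by
  rw [Tform Q.hkl Q.hij Q.hjl Q.hik.symm Q.hg Q.hv]
  rw [← commutatorElement_eq_one_iff_commute,
    Zform Q.hij (Q.hg _ Q.hik Q.hil) (Q.hg _ Q.hjk Q.hjl) (Q.hw _ Q.hik Q.hil)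
      (Q.hw _ Q.hjk Q.hjl) Q.hwg]
  have : v i * f i + v j * f j = 0 := by
    rw [← h, vec_two Q.hij Q.hv]
    simp [Q.hij, Q.hij.symm, add_dotProduct]
  rw [this, zero_smul, Y_zero]

theorem Quad.YY : Commute (Y k f v) (Y i g w) := by
  have e1 : col k f = row i (f i • Pi.single k 1) * row j (f j • Pi.single k 1) := by
    rw [Tform (b := Pi.single k 1) Q.hij Q.hkl Q.hjl.symm Q.hik Q.hf
      (by intro q hq _; simp [hq])]
    simp [Q.hkl.symm, col_zero]
  have e2 : row k v = col i (v i • Pi.single k 1) * col j (v j • Pi.single k 1) := by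
    rw [← Tform (a := Pi.single k 1) Q.hkl Q.hij Q.hjl Q.hik.symm
      (by intro q hq _; simp [hq]) Q.hv]
    simp [Q.hkl.symm, row_zero]
  have s1 : SemiconjBy (Y i g w) (col k f)
      (col k ((1 - g k * w k) • f) * col l ((- (g k * w l)) • f)) := by
    have := Tform (b := Pi.single k 1 - g k • w) Q.hij Q.hkl Q.hjl.symm Q.hik Q.hf
      (by intro q hq hq'; simp [hq, Q.hw q hq hq'])
    simp only [Pi.sub_apply, Pi.single_eq_same, Pi.smul_apply, smul_eq_mul,
      Pi.single_eq_of_ne Q.hkl.symm, zero_sub] at this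
    rw [e1, ← this]
    have h1 := Q.symm.YrK (f i • Pi.single k 1)
    have h2 := Q.symm.YrL (f j • Pi.single k 1)
    rw [smul_dotProduct, single_dotProduct, one_mul, smul_assoc, ← smul_sub] at h1 h2
    exact h1.mul_right h2
  have s2 : SemiconjBy (Y i g w) (row k v)
      (row k ((1 + w k * g k) • v) * row l ((w k * g l) • v)) := by
    have := Tform (a := Pi.single k 1 + w k • g) Q.hkl Q.hij Q.hjl Q.hik.symm
      (by intro q hq hq'; simp [hq, Q.hg q hq hq']) Q.hv
    simp only [Pi.add_apply, Pi.single_eq_same, Pi.smul_apply, smul_eq_mul,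
      Pi.single_eq_of_ne Q.hkl.symm, zero_add] at this
    rw [e2, this]
    have h1 := Q.symm.YcK (v i • Pi.single k 1)
    have h2 := Q.symm.YcL (v j • Pi.single k 1)
    rw [dotProduct_smul, dotProduct_single, mul_one, smul_assoc, ← smul_add] at h1 h2
    exact h1.mul_right h2
  have s3 := sc_comm s1 s2
  have e3 : g k * w k + g l * w l = 0 := by
    have := Q.hwg
    rw [vec_two Q.hkl Q.hw] at this
    simp [Q.hkl, Q.hkl.symm, add_dotProduct] at this
    rw [← this]; ring
  have e4 : (1 - g k * w k) * (1 + w k * g k) + -(g k * w l) * (w k * g l) = 1 := by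
    linear_combination (- (g k * w k)) * e3
  rw [Zform Q.hkl (Q.hf _ Q.hik.symm Q.hjk.symm) (Q.hf _ Q.hil.symm Q.hjl.symm)
    (Q.hv _ Q.hik.symm Q.hjk.symm) (Q.hv _ Q.hil.symm Q.hjl.symm) Q.hvf, e4, one_smul] at s3
  exact Commute.symm s3
end quad

theorem E_comm (u : Fin n → B) (i j k l : Fin n) (c d : B) : Commute (E u i j c) (E u k l d) := by
  by_cases hex : ∃ q, q ≠ i ∧ q ≠ j ∧ q ≠ k ∧ q ≠ l
  · obtain ⟨q, hi, hj, hk, hl⟩ := hex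
    rw [E_eq hi hj, E_eq hk hl]
    exact Xl_comm (kz_good hi hj _ _) (kz_good hk hl _ _)
  push Not at hex
  have av := fun a b c => exists_avoid (n := n) a b c
  have hij : i ≠ j := by rintro rfl; obtain ⟨q, h⟩ := av i k l; have := hex q; tauto
  have hik : i ≠ k := by rintro rfl; obtain ⟨q, h⟩ := av i j l; have := hex q; tauto
  have hil : i ≠ l := by rintro rfl; obtain ⟨q, h⟩ := av i j k; have := hex q; tauto
  have hjk : j ≠ k := by rintro rfl; obtain ⟨q, h⟩ := av i j l; have := hex q; tauto
  have hjl : j ≠ l := by rintro rfl; obtain ⟨q, h⟩ := av i j k; have := hex q; tauto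
  have hkl : k ≠ l := by rintro rfl; obtain ⟨q, h⟩ := av i j k; have := hex q; tauto
  set f := z (z u k) l with hf
  set g := z (z u i) j with hg
  set v := kz u i j c with hv
  set w := kz u k l d with hw
  have hfi : f i = u i := by rw [hf, z_ne _ hil, z_ne _ hik]
  have hfj : f j = u j := by rw [hf, z_ne _ hjl, z_ne _ hjk]
  have hgk : g k = u k := by rw [hg, z_ne _ hjk.symm, z_ne _ hik.symm]
  have hgl : g l = u l := by rw [hg, z_ne _ hjl.symm, z_ne _ hil.symm]
  have hvk : v k = 0 := kz_ne _ hik.symm hjk.symm _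
  have hvl : v l = 0 := kz_ne _ hil.symm hjl.symm _
  have hwi : w i = 0 := kz_ne _ hik hil _
  have hwj : w j = 0 := kz_ne _ hjk hjl _
  have hfk : f k = 0 := z_zero _ (z_same _ _)
  have hfl : f l = 0 := z_same _ _
  have hgi : g i = 0 := z_zero _ (z_same _ _)
  have hgj : g j = 0 := z_same _ _
  have Q : Quad i j k l f g v w := by
    refine ⟨hij, hik, hil, hjk, hjl, hkl, ?_, ?_, ?_, ?_, ?_, ?_⟩
    · intro q h1 h2; have := hex q h1 h2; grind
    · intro q h1 h2; exact kz_ne _ h1 h2 _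
    · intro q h1 h2; have := hex q; grind
    · intro q h1 h2; exact kz_ne _ h1 h2 _
    · rw [hf, z_dot _ _ _ hvl, z_dot _ _ _ hvk]; exact kz_dot _ _ _ _
    · rw [hg, z_dot _ _ _ hwj, z_dot _ _ _ hwi]; exact kz_dot _ _ _ _
  have eP : E u i j c = Y k f v * (row k (g k • v) * row l (g l • v)) := by
    rw [E_eq hik.symm hjk.symm, Xl_two hkl hvk hvl (kz_dot _ _ _ _), mul_assoc, hgk, hgl,
      (row_row_comm hkl (by simp [hvl]) (by simp [hvk]) (by simp [hvk]) :
        Commute (row k (u k • v)) (row l (u l • v))).eq]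
  have eQ : E u k l d = Y i g w * (row i (f i • w) * row j (f j • w)) := by
    rw [E_eq hik hil, Xl_two hij hwi hwj (kz_dot _ _ _ _), mul_assoc, hfi, hfj,
      (row_row_comm hij (by simp [hwj]) (by simp [hwi]) (by simp [hwi]) :
        Commute (row i (u i • w)) (row j (u j • w))).eq]
  rw [eP, eQ]
  exact Commute.mul_left (Commute.mul_right Q.YY Q.YS)
    (Commute.mul_right Q.symm.YS.symm (Q.RS Q.hvf))

/-! additivity in the first variable -/
structure KG (l : Fin n) (u v : Fin n → B) : Prop where
  g : ∀ t : B, Good l (t • u) v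
  g' : ∀ t : B, Good l u (t • v)
  y : ∀ t : B, Y l (z (t • u) l) v = Y l (z u l) (t • v)

omit hn in
theorem KG_two {l m : Fin n} (hlm : l ≠ m) {u v : Fin n → B} (hvl : v l = 0) (hvm : v m = 0)
    (h : v ⬝ᵥ u = 0) : KG l u v := by
  refine ⟨fun t => good_two hlm hvl hvm (by simp [h]),
    fun t => good_two hlm (by simp [hvl]) (by simp [hvm]) (by simp [h]), fun t => ?_⟩
  rw [Ytwo hlm hvl hvm (by simp [h]), Ytwo hlm (by simp [hvl]) (by simp [hvm]) (by simp [h]),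
    z_smul, z_smul, Yscale hlm (z_zero _ (z_same _ _)) hvl (z_same _ _) hvm
    (by rw [z_dot _ _ _ hvm, z_dot _ _ _ hvl, h])]
  simp only [Pi.smul_apply, smul_eq_mul, smul_smul, mul_comm]

omit hn in
theorem KG_add {l : Fin n} {u v w : Fin n → B} (hv : KG l u v) (hw : KG l u w) :
    KG l u (v + w) := by
  refine ⟨fun t => good_add (hv.g t) (hw.g t), fun t => by
    rw [smul_add]; exact good_add (hv.g' t) (hw.g' t), fun t => ?_⟩
  rw [smul_add, Y_add (hw.g t) (hv.g t).1 (hv.g t).2.1, Y_add (hw.g' t) (hv.g' t).1 (hv.g' t).2.1,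
    hv.y, hw.y]

theorem kz_KG {l p m : Fin n} (hp : l ≠ p) (hm : l ≠ m) (u : Fin n → B) (c : B) :
    KG l u (kz u p m c) := by
  obtain ⟨q, h1, h2, h3⟩ := exists_avoid l p m
  exact KG_two h1.symm (kz_ne _ hp hm _) (kz_ne _ h2 h3 _) (kz_dot _ _ _ _)

omit hn in
theorem Xl_uadd {l : Fin n} {a b V : Fin n → B} (ha : KG l a V) (hb : KG l b V) (t : B) :
    Xl l (b + t • a) V = Xl l a (t • V) * Xl l b V := by
  have gb : Good l b V := by simpa using hb.g 1
  have c1 : Commute (Y l (z a l) (t • V)) (col l (z b l)) := by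
    have := ((ha.g' t).2.2 (z b l)).1
    rw [pi_Y (z_same _ _) (ha.g' t).1 (by rw [z_dot _ _ _ (ha.g' t).1, (ha.g' t).2.1]), mv1,
      z_dot _ _ _ (ha.g' t).1, smul_dotProduct, gb.2.1, smul_zero, zero_smul, add_zero] at this
    exact this
  have c2 : Commute (Y l (z b l) V) (row l (a l • (t • V))) := by
    have ga := ha.g' t
    refine Y_good gb (by simp [gb.1]) (by simp [gb.2.1])
  rw [Xl, Xl, Xl, z_add, Y, col_add, cG3]
  have e : ⁅col l (z (t • a) l), row l V⁆ = Y l (z a l) (t • V) := ha.y t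
  rw [e, conj_of_comm c1.symm]
  have e2 : (b + t • a : Fin n → B) l • V = a l • (t • V) + b l • V := by
    simp only [Pi.add_apply, Pi.smul_apply, smul_eq_mul, smul_smul, add_smul]
    rw [add_comm, mul_comm]
  rw [e2, row_add]
  change Y l (z a l) (t • V) * Y l (z b l) V * _ = _
  calc _ = Y l (z a l) (t • V) * (Y l (z b l) V * row l (a l • (t • V))) * row l (b l • V) := by
        group
    _ = _ := by rw [c2.eq]; group

noncomputable def E3 (u : Fin n → B) (p m q : Fin n) (α β γ : B) : SteinbergGroup n B :=
  E u p m α * E u p q β * E u m q γ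

def kz3 (u : Fin n → B) (p m q : Fin n) (α β γ : B) : Fin n → B :=
  kz u p m α + kz u p q β + kz u m q γ

theorem E3_eq {l p m q : Fin n} (hp : l ≠ p) (hm : l ≠ m) (hq : l ≠ q) (u : Fin n → B)
    (α β γ : B) : E3 u p m q α β γ = Xl l u (kz3 u p m q α β γ) ∧
      KG l u (kz3 u p m q α β γ) := by
  have g1 := good_add (kz_good hp hm u α) (kz_good hp hq u β)
  constructor
  · rw [E3, kz3, Xl_add g1.1 g1.2.1 (kz_good hm hq u γ), Xl_add (kz_ne _ hp hm _)
      (kz_dot _ _ _ _) (kz_good hp hq u β), E_eq hp hm, E_eq hp hq, E_eq hm hq]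
  · exact KG_add (KG_add (kz_KG hp hm _ _) (kz_KG hp hq _ _)) (kz_KG hm hq _ _)

theorem E_uadd (a b : Fin n → B) (p m q : Fin n) (c t : B) :
    E3 (b + t • a) p m q (-(c * a q)) (c * a m) (-(c * a p)) =
      E3 a p m q (t * (c * b q)) (-(t * (c * b m))) (t * (c * b p)) *
      E3 b p m q (-(c * a q)) (c * a m) (-(c * a p)) := by
  obtain ⟨l, hp, hm, hq⟩ := exists_avoid p m q
  have e1 : kz3 (b + t • a) p m q (-(c * a q)) (c * a m) (-(c * a p)) =
      kz3 b p m q (-(c * a q)) (c * a m) (-(c * a p)) := by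
    ext i; simp only [kz3, kz, Pi.add_apply, Pi.sub_apply, Pi.single_apply, Pi.smul_apply,
      smul_eq_mul]; grind
  have e2 : kz3 a p m q (c * b q) (-(c * b m)) (c * b p) =
      kz3 b p m q (-(c * a q)) (c * a m) (-(c * a p)) := by
    ext i; simp only [kz3, kz, Pi.add_apply, Pi.sub_apply, Pi.single_apply]; grind
  have e3 : kz3 a p m q (t * (c * b q)) (-(t * (c * b m))) (t * (c * b p)) =
      t • kz3 a p m q (c * b q) (-(c * b m)) (c * b p) := by
    simp only [kz3, smul_add, kz_smul, mul_neg]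
  have k1 := (E3_eq hp hm hq a (c * b q) (-(c * b m)) (c * b p)).2
  rw [(E3_eq hp hm hq _ _ _ _).1, (E3_eq hp hm hq _ _ _ _).1, (E3_eq hp hm hq _ _ _ _).1, e1, e3,
    ← e2]
  exact Xl_uadd k1 (by rw [e2]; exact (E3_eq hp hm hq _ _ _ _).2) t

end three
end StLG


namespace StLG
open Matrix
set_option linter.unusedSimpArgs false
set_option linter.unusedVariables false

section four
variable {n : ℕ} {B : Type} [CommRing B]

structure Dv (S : Submonoid B) (I : Ideal B) : Prop where
  ex : ∀ s ∈ S, ∀ b ∈ I, ∃ c ∈ I, s * c = b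
  inj : ∀ s ∈ S, ∀ c ∈ I, s * c = 0 → c = 0

theorem Dv.exv {S : Submonoid B} {I : Ideal B} (D : Dv S I) {s : B} (hs : s ∈ S)
    {v : Fin n → B} (hv : ∀ q, v q ∈ I) : ∃ v' : Fin n → B, (∀ q, v' q ∈ I) ∧ s • v' = v := by
  choose c hc hc' using fun q => D.ex s hs (v q) (hv q)
  exact ⟨c, hc, funext hc'⟩

theorem Dv.injv {S : Submonoid B} {I : Ideal B} (D : Dv S I) {s : B} (hs : s ∈ S)
    {v w : Fin n → B} (hv : ∀ q, v q ∈ I) (hw : ∀ q, w q ∈ I) (h : s • v = s • w) : v = w := by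
  ext q
  have := congrFun h q
  simp only [Pi.smul_apply, smul_eq_mul] at this
  exact sub_eq_zero.mp (D.inj s hs _ (I.sub_mem (hv q) (hw q)) (by rw [mul_sub, this, sub_self]))

theorem dot_mem {I : Ideal B} {v u : Fin n → B} (hv : ∀ q, v q ∈ I) : v ⬝ᵥ u ∈ I :=
  I.sum_mem fun q _ => I.mul_mem_right _ (hv q)

theorem pi_inv_of {g : SteinbergGroup n B} {u v : Fin n → B} (h : pi g = 1 + vecMulVec u v)
    (hv : v ⬝ᵥ u = 0) : pi g⁻¹ = 1 + vecMulVec u (-v) := by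
  have h1 : pi g * (1 + vecMulVec u (-v)) = 1 := by
    rw [h, mul_add, add_mul, add_mul, vecMulVec_mul_vecMulVec, hv, zero_smul, vecMulVec_neg]
    simp
  calc pi g⁻¹ = pi g⁻¹ * (pi g * (1 + vecMulVec u (-v))) := by rw [h1, mul_one]
    _ = _ := by rw [← mul_assoc, pi_inv_mul, one_mul]

inductive Lift (I : Ideal B) (u : Fin n → B) : (Fin n → B) → SteinbergGroup n B → Prop
  | zero : Lift I u 0 1
  | add {v : Fin n → B} {g : SteinbergGroup n B} (p m : Fin n) (c : B) (hc : c ∈ I)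
      (h : Lift I u v g) : Lift I u (kz u p m c + v) (E u p m c * g)

variable [hn : Fact (4 ≤ n)] {I : Ideal B} {S : Submonoid B}

omit hn in
theorem Lift.single (u : Fin n → B) (p m : Fin n) {c : B} (hc : c ∈ I) :
    Lift I u (kz u p m c) (E u p m c) := by
  simpa using Lift.add p m c hc (Lift.zero (I := I) (u := u))

omit hn in
theorem Lift.mul {u v w : Fin n → B} {g h : SteinbergGroup n B} (hv : Lift I u v g)
    (hw : Lift I u w h) : Lift I u (v + w) (g * h) := by
  induction hv with
  | zero => simpa using hw
  | add p m c hc _ ih => rw [add_assoc, mul_assoc]; exact Lift.add p m c hc ih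

omit hn in
theorem Lift.mem {u v : Fin n → B} {g : SteinbergGroup n B} (hv : Lift I u v g) (q : Fin n) :
    v q ∈ I := by
  induction hv with
  | zero => simp
  | add p m c hc _ ih =>
    refine I.add_mem (I.sub_mem ?_ ?_) ih
    · simp only [Pi.single_apply]; split_ifs
      exacts [I.mul_mem_right _ hc, I.zero_mem]
    · simp only [Pi.single_apply]; split_ifs
      exacts [I.mul_mem_right _ hc, I.zero_mem]

omit hn in
theorem Lift.dot {u v : Fin n → B} {g : SteinbergGroup n B} (hv : Lift I u v g) : v ⬝ᵥ u = 0 := by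
  induction hv with
  | zero => simp
  | add p m c hc _ ih => rw [add_dotProduct, kz_dot, ih, add_zero]

theorem Lift.pi {u v : Fin n → B} {g : SteinbergGroup n B} (hv : Lift I u v g) :
    pi g = 1 + vecMulVec u v := by
  induction hv with
  | zero => simp [pi_one]
  | add p m c hc _ ih =>
    rw [pi_mul, ih, pi_E, mul_add, add_mul, add_mul, vecMulVec_mul_vecMulVec, kz_dot, zero_smul,
      vecMulVec_zero, vecMulVec_add]
    simp [add_assoc]

theorem Lift.conj_x {u v : Fin n → B} {g : SteinbergGroup n B} (hv : Lift I u v g)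
    {h k : Fin n} (hhk : h ≠ k) (s : B) :
    Lift I (u + Pi.single h (s * u k)) (v - Pi.single k (s * v h)) (x h k s * g * (x h k s)⁻¹) := by
  induction hv with
  | zero => simpa using Lift.zero
  | @add v g p m c hc _ ih =>
    have key : Lift I (u + Pi.single h (s * u k))
        (kz u p m c - Pi.single k (s * kz u p m c h)) (x h k s * E u p m c * (x h k s)⁻¹) := by
      by_cases hpm : p = m
      · subst hpm; simpa [kz_self, E_self] using Lift.zero
      by_cases h1 : h = p
      · subst h1
        rw [(E_conj2 hhk hpm u c s).eq, mul_inv_cancel_right]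
        have e : kz u h m c - Pi.single k (s * kz u h m c h) =
          kz (u + Pi.single h (s * u k)) h m c + kz (u + Pi.single h (s * u k)) m k (c * s) := by
          ext a; simp only [kz, Pi.add_apply, Pi.sub_apply, Pi.single_apply]; grind
        rw [e]
        exact (Lift.single _ _ _ hc).mul (Lift.single _ _ _ (I.mul_mem_right _ hc))
      by_cases h2 : h = m
      · subst h2
        rw [E_anti, kz_anti, (E_conj2 hhk (Ne.symm hpm) u (-c) s).eq, mul_inv_cancel_right]
        have e : kz u h p (-c) - Pi.single k (s * kz u h p (-c) h) =
          kz (u + Pi.single h (s * u k)) h p (-c) + 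
            kz (u + Pi.single h (s * u k)) p k (-c * s) := by
          ext a; simp only [kz, Pi.add_apply, Pi.sub_apply, Pi.single_apply]; grind
        rw [e]
        exact (Lift.single _ _ _ (I.neg_mem hc)).mul
          (Lift.single _ _ _ (I.mul_mem_right _ (I.neg_mem hc)))
      · rw [(E_conj1 hhk h1 h2 u c s).eq, mul_inv_cancel_right]
        have e : kz u p m c - Pi.single k (s * kz u p m c h) =
            kz (u + Pi.single h (s * u k)) p m c := by
          ext a; simp only [kz, Pi.add_apply, Pi.sub_apply, Pi.single_apply]; grind
        rw [e]
        exact Lift.single _ _ _ hc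
    have := key.mul ih
    have e : kz u p m c + v - Pi.single k (s * (kz u p m c + v) h) =
      kz u p m c - Pi.single k (s * kz u p m c h) + (v - Pi.single k (s * v h)) := by
      simp only [Pi.add_apply, mul_add, Pi.single_add]; abel
    rw [e]
    convert this using 1
    group

theorem Lift.conj {u v : Fin n → B} {g : SteinbergGroup n B} (hv : Lift I u v g)
    (k : SteinbergGroup n B) : Lift I (StLG.pi k *ᵥ u) (v ᵥ* StLG.pi k⁻¹) (k * g * k⁻¹) := by
  refine st_ind (P := fun k => Lift I (StLG.pi k *ᵥ u) (v ᵥ* StLG.pi k⁻¹) (k * g * k⁻¹))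
    (by simpa [pi_one] using hv) ?_ k
  intro i j hij r k ih
  have := ih.conj_x hij r
  have e1 : x i j r * (k * g * k⁻¹) * (x i j r)⁻¹ = x i j r * k * g * (x i j r * k)⁻¹ := by group
  rw [e1] at this
  have e2 : (x i j r * k)⁻¹ = k⁻¹ * x i j (-r) := by rw [x_neg]; group
  rw [pi_mul, ← mulVec_mulVec, pi_x_mulVec hij]
  have e3 : v ᵥ* StLG.pi (x i j r * k)⁻¹ = v ᵥ* StLG.pi k⁻¹ - Pi.single j (r * (v ᵥ* StLG.pi k⁻¹) i) := by
    rw [e2, pi_mul, ← vecMul_vecMul, pi_x_vecMul hij, mul_neg, Pi.single_neg, sub_eq_add_neg,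
      mul_comm r]
  rw [e3]
  exact this

theorem Lift.smul {u v : Fin n → B} {g : SteinbergGroup n B} {s : B} (hv : Lift I (s • u) v g) :
    Lift I u (s • v) g := by
  induction hv with
  | zero => simpa using Lift.zero
  | add p m c hc _ ih =>
    rw [smul_add, kz_smul', kz_smul, E_smul]
    exact Lift.add p m _ (I.mul_mem_left _ (I.mul_mem_left _ hc)) ih

/-! uniqueness -/
noncomputable def Eh (u : Fin n → B) (p : Fin n × Fin n) : Multiplicative B →* SteinbergGroup n B where
  toFun r := E u p.1 p.2 r.toAdd
  map_one' := E_zero u _ _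
  map_mul' r s := E_add u _ _ _ _

theorem Ehc (u : Fin n → B) : Pairwise fun p q => ∀ (r s : Multiplicative B),
    Commute (Eh u p r) (Eh u q s) := by
  intro p q _ r s
  exact E_comm _ _ _ _ _ _ _

noncomputable def Ph (u : Fin n → B) (F : Fin n × Fin n → B) : SteinbergGroup n B :=
  MonoidHom.noncommPiCoprod (fun q => Eh u q) (Ehc u) (fun q => Multiplicative.ofAdd (F q))

theorem Ph_add (u : Fin n → B) (F G : Fin n × Fin n → B) : Ph u (F + G) = Ph u F * Ph u G := by
  rw [Ph, Ph, Ph, ← map_mul]; rfl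

theorem Ph_zero (u : Fin n → B) : Ph u 0 = 1 := by simpa using Ph_add u 0 0

theorem Ph_single (u : Fin n → B) (p m : Fin n) (b : B) :
    Ph u (Pi.single (p, m) b) = E u p m b := by
  have e : (fun q' => Multiplicative.ofAdd ((Pi.single (p, m) b : Fin n × Fin n → B) q')) =
      Pi.mulSingle (p, m) (Multiplicative.ofAdd b) := by
    ext q'
    by_cases h : q' = (p, m)
    · subst h; simp
    · simp [Pi.single_eq_of_ne h, Pi.mulSingle_eq_of_ne h]
  rw [Ph, e]
  exact MonoidHom.noncommPiCoprod_mulSingle (N := fun _ => Multiplicative B)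
    (ϕ := fun q => Eh u q) (hcomm := Ehc u) _ _

theorem Ph_kz (u y : Fin n → B) (p m : Fin n) (c : B) :
    Ph u (fun a => kz u p m c a.1 * y a.2) = E u p m (c * (y ⬝ᵥ u)) := by
  have key : ∀ T : Finset (Fin n), Ph u (∑ b ∈ T, (Pi.single (p, b) (c * u m * y b) +
      Pi.single (m, b) (-(c * u p * y b)))) = E u p m (∑ b ∈ T, c * (y b * u b)) := by
    intro T
    induction T using Finset.induction_on with
    | empty => simp [Ph_zero, E_zero]
    | insert b T hb ih =>
      rw [Finset.sum_insert hb, Finset.sum_insert hb, Ph_add, E_add, ih, Ph_add, Ph_single,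
        Ph_single]
      congr 1
      have := E_rel3 u p m b (c * y b)
      convert this using 2
      · congr 1; ring
      · congr 1; ring
      · ring
  have h1 := key Finset.univ
  rw [← Finset.mul_sum] at h1
  rw [show y ⬝ᵥ u = ∑ b, y b * u b from rfl, ← h1]
  congr 1
  ext ⟨a, b⟩
  simp only [Finset.sum_apply, Pi.add_apply, Pi.single_apply, Prod.mk.injEq, kz, Pi.sub_apply]
  rw [Finset.sum_add_distrib]
  simp only [ite_and]
  by_cases h1 : a = p <;> by_cases h2 : a = m <;> simp [h1, h2] <;> grind

def Unim (S : Submonoid B) (u : Fin n → B) : Prop := ∃ y : Fin n → B, y ⬝ᵥ u ∈ S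

theorem Lift.eq_Ph (D : Dv S I) {u v y : Fin n → B} (hy : y ⬝ᵥ u ∈ S) {g : SteinbergGroup n B}
    (h : Lift I u v g) : ∀ v' : Fin n → B, (∀ q, v' q ∈ I) → (y ⬝ᵥ u) • v' = v →
      g = Ph u (fun a => v' a.1 * y a.2) := by
  induction h with
  | zero =>
    intro v' h1 h2
    have : v' = 0 := D.injv hy h1 (by simp) (by rw [h2, smul_zero])
    rw [this]
    simp only [Pi.zero_apply, zero_mul]
    exact (Ph_zero u).symm
  | @add v g p m c hc _ ih =>
    intro v' h1 h2
    obtain ⟨c', hc', e⟩ := D.ex _ hy c hc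
    have hk : ∀ q, kz u p m c' q ∈ I := (Lift.single u p m hc').mem
    have h3 := ih (v' - kz u p m c') (fun q => I.sub_mem (h1 q) (hk q)) (by
      rw [smul_sub, h2, kz_smul, e]; abel)
    have e1 : (fun a : Fin n × Fin n => v' a.1 * y a.2) = (fun a => kz u p m c' a.1 * y a.2) +
        (fun a => (v' - kz u p m c') a.1 * y a.2) := by
      ext a; simp only [Pi.add_apply, Pi.sub_apply]; ring
    rw [e1, Ph_add, ← h3, Ph_kz, mul_comm, e]

theorem Lift.unique (D : Dv S I) {u v : Fin n → B} (hu : Unim S u) {g g' : SteinbergGroup n B}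
    (h : Lift I u v g) (h' : Lift I u v g') : g = g' := by
  obtain ⟨y, hy⟩ := hu
  obtain ⟨v', h1, h2⟩ := D.exv hy h.mem
  rw [h.eq_Ph D hy v' h1 h2, h'.eq_Ph D hy v' h1 h2]

omit hn in
theorem Lift.sum {ι : Type*} (u : Fin n → B) (T : Finset ι) (V : ι → Fin n → B)
    (h : ∀ i ∈ T, ∃ g, Lift I u (V i) g) : ∃ g, Lift I u (∑ i ∈ T, V i) g :=
  Finset.sum_induction V (fun v => ∃ g, Lift I u v g)
    (fun _ _ ⟨g, hg⟩ ⟨g', hg'⟩ => ⟨g * g', hg.mul hg'⟩) ⟨1, Lift.zero⟩ h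

omit hn in
theorem Lift.exists (D : Dv S I) {u v : Fin n → B} (hu : Unim S u) (hv : ∀ q, v q ∈ I)
    (hd : v ⬝ᵥ u = 0) : ∃ g, Lift I u v g := by
  obtain ⟨y, hy⟩ := hu
  obtain ⟨v', h1, h2⟩ := D.exv hy hv
  have h3 : v' ⬝ᵥ u = 0 := D.inj _ hy _ (dot_mem h1) (by
    rw [← smul_eq_mul, ← smul_dotProduct, h2, hd])
  have e : v = ∑ p, ∑ m, kz u p m (v' p * y m) := by
    ext q
    have e1 : ∀ p m, kz u p m (v' p * y m) = Pi.single p (v' p * (y m * u m)) -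
        Pi.single m (y m * (v' p * u p)) := by
      intro p m; rw [kz]; congr 2 <;> ring
    simp only [e1, Finset.sum_sub_distrib, Finset.sum_apply, Pi.sub_apply, Pi.single_apply,
      Finset.sum_ite_eq, Finset.mem_univ, if_true]
    rw [Finset.sum_comm]
    simp only [Finset.sum_ite_eq, Finset.mem_univ, if_true, ← Finset.mul_sum]
    change v q = v' q * (y ⬝ᵥ u) - y q * (v' ⬝ᵥ u)
    rw [h3, ← h2]; simp [mul_comm]
  rw [e]
  refine Lift.sum _ _ _ fun p _ => Lift.sum _ _ _ fun m _ => ⟨_, Lift.single u p m ?_⟩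
  exact I.mul_mem_right _ (h1 p)

theorem Lift.act {a b v' v : Fin n → B} {g g' : SteinbergGroup n B} (h' : Lift I a v' g')
    (h : Lift I b v g) :
    Lift I (a + (v ⬝ᵥ a) • b) (v' - (v' ⬝ᵥ b) • v) (g * g' * g⁻¹) := by
  have := h'.conj g
  rw [h.pi, mv1, pi_inv_of h.pi h.dot, vm1, smul_neg, ← sub_eq_add_neg] at this
  exact this

theorem Lift.commute (D : Dv S I) {a b v' v : Fin n → B} {g g' : SteinbergGroup n B}
    (h' : Lift I a v' g') (h : Lift I b v g) (hva : v ⬝ᵥ a = 0) (hvb : v' ⬝ᵥ b = 0)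
    (ha : Unim S a) : Commute g g' := by
  have := h'.act h
  rw [hva, hvb, zero_smul, zero_smul, add_zero, sub_zero] at this
  have := this.unique D ha h'
  exact mul_inv_eq_iff_eq_mul.mp this

theorem Lift.pair (D : Dv S I) {a b y1 y2 v : Fin n → B} {t : B}
    (hd : (y1 ⬝ᵥ a) * (y2 ⬝ᵥ b) - (y1 ⬝ᵥ b) * (y2 ⬝ᵥ a) ∈ S) {g1 g2 : SteinbergGroup n B}
    (hva : v ⬝ᵥ a = 0) (h1 : Lift I a (t • v) g1) (h2 : Lift I b v g2) :
    Lift I (b + t • a) v (g1 * g2) := by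
  have ua : Unim S a := ⟨(y2 ⬝ᵥ b) • y1 - (y1 ⬝ᵥ b) • y2, by
    rw [sub_dotProduct, smul_dotProduct, smul_dotProduct, smul_eq_mul, smul_eq_mul]
    convert hd using 1; ring⟩
  have ub : Unim S b := ⟨(y1 ⬝ᵥ a) • y2 - (y2 ⬝ᵥ a) • y1, by
    rw [sub_dotProduct, smul_dotProduct, smul_dotProduct, smul_eq_mul, smul_eq_mul]
    convert hd using 1; ring⟩
  let P : (Fin n → B) → Prop := fun v => v ⬝ᵥ a = 0 ∧ ∃ g1 g2, Lift I a (t • v) g1 ∧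
    Lift I b v g2 ∧ Lift I (b + t • a) v (g1 * g2)
  have P0 : P 0 := ⟨by simp, 1, 1, by simpa using Lift.zero, Lift.zero, by simpa using Lift.zero⟩
  have Padd : ∀ v w, P v → P w → P (v + w) := by
    rintro v w ⟨hv, g1, g2, l1, l2, l3⟩ ⟨hw, k1, k2, m1, m2, m3⟩
    refine ⟨by rw [add_dotProduct, hv, hw, add_zero], g1 * k1, g2 * k2, ?_, l2.mul m2, ?_⟩
    · rw [smul_add]; exact l1.mul m1
    · have c : Commute g2 k1 := m1.commute D l2 hv (by rw [smul_dotProduct, m2.dot, smul_zero]) ua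
      have e : g1 * k1 * (g2 * k2) = g1 * g2 * (k1 * k2) := by
        calc _ = g1 * (k1 * g2) * k2 := by group
          _ = _ := by rw [← c.eq]; group
      rw [e]
      exact l3.mul m3
  have Pw : ∀ p m q c, c ∈ I → P (kz3 b p m q (-(c * a q)) (c * a m) (-(c * a p))) := by
    intro p m q c hc
    have e2 : kz3 a p m q (c * b q) (-(c * b m)) (c * b p) =
        kz3 b p m q (-(c * a q)) (c * a m) (-(c * a p)) := by
      ext i; simp only [kz3, kz, Pi.add_apply, Pi.sub_apply, Pi.single_apply]; grind
    have e1 : kz3 (b + t • a) p m q (-(c * a q)) (c * a m) (-(c * a p)) =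
      kz3 b p m q (-(c * a q)) (c * a m) (-(c * a p)) := by
      ext i; simp only [kz3, kz, Pi.add_apply, Pi.sub_apply, Pi.single_apply, Pi.smul_apply,
        smul_eq_mul]; grind
    have e3 : kz3 a p m q (t * (c * b q)) (-(t * (c * b m))) (t * (c * b p)) =
        t • kz3 a p m q (c * b q) (-(c * b m)) (c * b p) := by
      simp only [kz3, smul_add, kz_smul, mul_neg]
    have L3 : ∀ (u : Fin n → B) (α β γ : B), α ∈ I → β ∈ I → γ ∈ I →
        Lift I u (kz3 u p m q α β γ) (E3 u p m q α β γ) := fun u α β γ h1 h2 h3 =>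
      ((Lift.single _ _ _ h1).mul (Lift.single _ _ _ h2)).mul (Lift.single _ _ _ h3)
    have hm : ∀ r, c * r ∈ I := fun r => I.mul_mem_right _ hc
    have hm' : ∀ r, t * (c * r) ∈ I := fun r => I.mul_mem_left _ (hm r)
    refine ⟨?_, E3 a p m q (t * (c * b q)) (-(t * (c * b m))) (t * (c * b p)),
      E3 b p m q (-(c * a q)) (c * a m) (-(c * a p)), ?_, ?_, ?_⟩
    · rw [← e2]; simp only [kz3, add_dotProduct, kz_dot, add_zero]
    · rw [← e2, ← e3]
      exact L3 _ _ _ _ (hm' _) (I.neg_mem (hm' _)) (hm' _)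
    · exact L3 _ _ _ _ (I.neg_mem (hm _)) (hm _) (I.neg_mem (hm _))
    · rw [← E_uadd, ← e1]
      exact L3 _ _ _ _ (I.neg_mem (hm _)) (hm _) (I.neg_mem (hm _))
  obtain ⟨v1, hv1, ev⟩ := D.exv hd h2.mem
  have k1 : v1 ⬝ᵥ a = 0 := D.inj _ hd _ (dot_mem hv1) (by
    rw [← smul_eq_mul, ← smul_dotProduct, ev, hva])
  have k2 : v1 ⬝ᵥ b = 0 := D.inj _ hd _ (dot_mem hv1) (by
    rw [← smul_eq_mul, ← smul_dotProduct, ev, h2.dot])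
  have e : v = ∑ p, ∑ m, ∑ q, kz3 b p m q (-(y1 p * y2 m * v1 q * a q)) (y1 p * y2 m * v1 q * a m)
      (-(y1 p * y2 m * v1 q * a p)) := by
    have e1 : ∀ p m q, kz3 b p m q (-(y1 p * y2 m * v1 q * a q)) (y1 p * y2 m * v1 q * a m)
      (-(y1 p * y2 m * v1 q * a p)) = 
      (y1 p * ((y2 m * a m) * (v1 q * b q) - (v1 q * a q) * (y2 m * b m))) • Pi.single p 1 +
      (y2 m * ((v1 q * a q) * (y1 p * b p) - (y1 p * a p) * (v1 q * b q))) • Pi.single m 1 + 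
      (v1 q * ((y1 p * a p) * (y2 m * b m) - (y2 m * a m) * (y1 p * b p))) • Pi.single q 1 := by
      intro p m q
      ext i; simp only [kz3, kz, Pi.add_apply, Pi.sub_apply, Pi.single_apply, Pi.smul_apply,
        smul_eq_mul]
      grind
    ext i
    simp only [e1, Finset.sum_apply, Pi.add_apply, Pi.smul_apply, Pi.single_apply, smul_eq_mul,
      mul_ite, mul_one, mul_zero, Finset.sum_add_distrib]
    have s1 : ∑ q, v1 q * a q = 0 := k1
    have s2 : ∑ q, v1 q * b q = 0 := k2
    simp only [Finset.sum_ite_eq, Finset.mem_univ, if_true]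
    have z1 : ∀ p m, (∑ q, if i = p then y1 p * (y2 m * a m * (v1 q * b q) - v1 q * a q * (y2 m * b m)) else 0) = 0 := by
      intro p m
      split_ifs
      · rw [← Finset.mul_sum, Finset.sum_sub_distrib, ← Finset.mul_sum, ← Finset.sum_mul, s1, s2]
        simp
      · simp
    have z2 : ∀ p m, (∑ q, if i = m then y2 m * (v1 q * a q * (y1 p * b p) - y1 p * a p * (v1 q * b q)) else 0) = 0 := by
      intro p m
      split_ifs
      · rw [← Finset.mul_sum, Finset.sum_sub_distrib, ← Finset.mul_sum, ← Finset.sum_mul, s1, s2]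
        simp
      · simp
    simp only [z1, z2, Finset.sum_const_zero, zero_add, ← Finset.mul_sum, Finset.sum_sub_distrib,
      ← Finset.sum_mul]
    rw [← ev]
    simp only [Pi.smul_apply, smul_eq_mul]
    rw [mul_comm]
    simp only [dotProduct]
    ring
  have Pv : P v := by
    rw [e]
    refine Finset.sum_induction _ P Padd P0 fun p _ => Finset.sum_induction _ P Padd P0 fun m _ =>
      Finset.sum_induction _ P Padd P0 fun q _ => Pw p m q _ ?_
    exact I.mul_mem_left _ (hv1 q)
  obtain ⟨_, k1, k2, l1, l2, l3⟩ := Pv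
  rw [h1.unique D ua l1, h2.unique D ub l2]
  exact l3

end four
end StLG


namespace StLG
open Matrix
set_option linter.unusedSimpArgs false
set_option linter.unusedVariables false
set_option linter.unusedSectionVars false

section liftc
variable {n : ℕ} {B C : Type} [CommRing B] [CommRing C] [Algebra B C]

/-- apply the algebra map to a vector -/
def iv (C : Type) [CommRing C] [Algebra B C] (w : Fin n → B) : Fin n → C :=
  fun q => algebraMap B C (w q)

theorem iv_add (v w : Fin n → B) : iv C (v + w) = iv C v + iv C w := by
  ext q; simp [iv]

theorem iv_smul (s : B) (w : Fin n → B) : iv C (s • w) = algebraMap B C s • iv C w := by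
  ext q; simp [iv]

theorem iv_dot (v w : Fin n → B) : algebraMap B C (v ⬝ᵥ w) = iv C v ⬝ᵥ iv C w := by
  simp [dotProduct, iv]

theorem iv_single (i : Fin n) (b : B) :
    iv C (Pi.single i b) = Pi.single i (algebraMap B C b) := by
  ext q; by_cases h : q = i
  · subst h; simp [iv]
  · simp [iv, h]

theorem iv_mulVec (M : Matrix (Fin n) (Fin n) B) (w : Fin n → B) :
    iv C (M *ᵥ w) = M.map (algebraMap B C) *ᵥ iv C w := by
  ext q; simp [iv, mulVec, dotProduct]

theorem iv_vecMul (M : Matrix (Fin n) (Fin n) B) (w : Fin n → B) :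
    iv C (w ᵥ* M) = iv C w ᵥ* M.map (algebraMap B C) := by
  ext q; simp [iv, vecMul, dotProduct]

theorem lift_x [hn : Fact (4 ≤ n)] {I : Ideal B} {i j : Fin n} (hij : i ≠ j) {b : B} (hb : b ∈ I) :
    Lift I (Pi.single i 1) (Pi.single j b) (x i j b) := by
  have := Lift.single (Pi.single i (1 : B)) j i hb
  obtain ⟨l, hl1, hl2, -⟩ := exists_avoid j i i
  rw [E_eq hl1 hl2] at this
  have e : kz (Pi.single i (1 : B)) j i b = Pi.single j b := by
    simp [kz, hij.symm]
  have e2 : z (Pi.single i (1 : B)) l = Pi.single i (1 : B) := by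
    ext q; simp only [z, Function.update_apply, Pi.single_apply]; grind
  rw [e, Xl, e2, Y, Pi.single_eq_of_ne hl2, zero_smul] at this
  have e3 : row l (0 : Fin n → B) = 1 := by simpa using row_add l (0 : Fin n → B) 0
  rw [e3, col_single, row_single, commutatorElement_def, mul_one, x_mul hl2.symm hl1 hij] at this
  simpa using this

variable {S : Submonoid B} {I : Ideal B} [hn : Fact (4 ≤ n)]

def LiftC (S : Submonoid B) (I : Ideal B) (u v : Fin n → C) (g : SteinbergGroup n B) : Prop :=
  (∃ y : Fin n → C, y ⬝ᵥ u = 1) ∧ ∃ w : Fin n → B, ∃ s ∈ S, ∃ v0 : Fin n → B,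
    iv C w = algebraMap B C s • u ∧ v = algebraMap B C s • iv C v0 ∧ Lift I w v0 g

variable [IsLocalization S C]

omit hn in
theorem clear (S : Submonoid B) [IsLocalization S C] {T : Type} [Finite T] (f : T → C) :
    ∃ s ∈ S, ∃ w : T → B, ∀ q, algebraMap B C (w q) = algebraMap B C s * f q := by
  obtain ⟨b, hb⟩ := IsLocalization.exist_integer_multiples_of_finite S f
  choose w hw using hb
  exact ⟨b, b.2, w, fun q => by rw [hw, Algebra.smul_def]⟩

omit hn in
theorem clearv (S : Submonoid B) [IsLocalization S C] (u : Fin n → C) :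
    ∃ s ∈ S, ∃ w : Fin n → B, iv C w = algebraMap B C s • u := by
  obtain ⟨s, hs, w, h⟩ := clear S u
  exact ⟨s, hs, w, funext h⟩

omit hn in
theorem inS (C : Type) [CommRing C] [Algebra B C] [IsLocalization S C] {b s : B} (hs : s ∈ S)
    (h : algebraMap B C b = algebraMap B C s) : ∃ t ∈ S, t * b ∈ S := by
  obtain ⟨t, ht⟩ := IsLocalization.exists_of_eq (M := S) h
  exact ⟨t, t.2, ht ▸ S.mul_mem t.2 hs⟩

omit hn in
theorem unim_of {w : Fin n → B} {u : Fin n → C} {s : B} (hs : s ∈ S)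
    (hu : ∃ y : Fin n → C, y ⬝ᵥ u = 1) (hw : iv C w = algebraMap B C s • u) : Unim S w := by
  obtain ⟨y, hy⟩ := hu
  obtain ⟨r, hr, y', hy'⟩ := clearv S y
  obtain ⟨t, ht, h⟩ := inS (S := S) C (b := y' ⬝ᵥ w) (s := r * s) (S.mul_mem hr hs)
    (by rw [iv_dot, hy', hw, smul_dotProduct, dotProduct_smul, hy, map_mul]; simp only [smul_eq_mul]; ring)
  exact ⟨t • y', by simpa using h⟩

omit hn in
theorem Dv.ker (D : Dv S I) (C : Type) [CommRing C] [Algebra B C] [IsLocalization S C]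
    {b : B} (hb : b ∈ I) (h : algebraMap B C b = 0) : b = 0 := by
  obtain ⟨t, ht⟩ := (IsLocalization.map_eq_zero_iff S C b).1 h
  exact D.inj t t.2 b hb ht

omit hn in
theorem Dv.ivinj (D : Dv S I) {v w : Fin n → B} (hv : ∀ q, v q ∈ I) (hw : ∀ q, w q ∈ I)
    (h : iv C v = iv C w) : v = w := by
  ext q
  have := D.ker C (I.sub_mem (hv q) (hw q)) (by rw [map_sub, sub_eq_zero]; exact congrFun h q)
  exact sub_eq_zero.1 this

theorem LiftC.rep (D : Dv S I) {u v : Fin n → C} {g : SteinbergGroup n B} (h : LiftC S I u v g)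
    {w v0 : Fin n → B} {s : B} (hs : s ∈ S) (hw : iv C w = algebraMap B C s • u)
    (hv0 : ∀ q, v0 q ∈ I) (hv : v = algebraMap B C s • iv C v0) : Lift I w v0 g := by
  obtain ⟨hu, w1, s1, hs1, v1, hw1, hv1, h1⟩ := h
  have : ∃ t ∈ S, (t * s) • w1 = (t * s1) • w := by
    have h2 : ∀ q, ∃ t : S, (t : B) * (s * w1 q) = t * (s1 * w q) := fun q => by
      apply IsLocalization.exists_of_eq (M := S) (S := C)
      have a := congrFun hw q
      have b := congrFun hw1 q
      simp only [iv, Pi.smul_apply, smul_eq_mul] at a b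
      rw [map_mul, map_mul, a, b]; ring
    choose t ht using h2
    refine ⟨∏ q, (t q : B), S.prod_mem fun q _ => (t q).2, ?_⟩
    ext q
    simp only [Pi.smul_apply, smul_eq_mul]
    rw [← Finset.mul_prod_erase Finset.univ (fun q => (t q : B)) (Finset.mem_univ q)]
    linear_combination (∏ x ∈ Finset.univ.erase q, (t x : B)) * ht q
  obtain ⟨t, ht, hW⟩ := this
  have hts := S.mul_mem ht hs
  have hts1 := S.mul_mem ht hs1
  obtain ⟨v2, hv2, e2⟩ := D.exv hts h1.mem
  have hUW : Unim S ((t * s) • w1) := unim_of (C := C) (u := u) (S.mul_mem hts hs1) hu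
    (by rw [iv_smul, hw1, smul_smul, map_mul _ (t * s)])
  obtain ⟨g2, h2⟩ := Lift.exists D hUW hv2
    (by rw [dotProduct_smul, ← smul_dotProduct, e2]; exact h1.dot)
  have h3 := h2.smul
  rw [e2] at h3
  have e3 := Lift.unique D (unim_of (C := C) hs1 hu hw1) h1 h3
  subst e3
  rw [hW] at h2
  have h4 := h2.smul
  have : (t * s1) • v2 = v0 := by
    apply D.injv hs (fun q => I.mul_mem_left _ (hv2 q)) hv0
    apply D.ivinj (C := C) (fun q => I.mul_mem_left _ (I.mul_mem_left _ (hv2 q)))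
      (fun q => I.mul_mem_left _ (hv0 q))
    change iv C (s • ((t * s1) • v2)) = iv C (s • v0)
    rw [iv_smul, iv_smul, iv_smul, ← hv, hv1, ← e2, iv_smul, smul_smul, smul_smul]
    congr 1; simp only [map_mul]; ring
  rwa [this] at h4

theorem LiftC.mem {u v : Fin n → C} {g : SteinbergGroup n B} (h : LiftC S I u v g) (q : Fin n) :
    ∃ b ∈ I, algebraMap B C b = v q := by
  obtain ⟨hu, w1, s1, hs1, v1, hw1, hv1, h1⟩ := h
  exact ⟨s1 * v1 q, I.mul_mem_left _ (h1.mem q), by rw [hv1]; simp [iv]⟩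

omit hn in
theorem Dv.exC (D : Dv S I) {v : Fin n → C} (hv : ∀ q, ∃ b ∈ I, algebraMap B C b = v q) {s : B}
    (hs : s ∈ S) : ∃ v0 : Fin n → B, (∀ q, v0 q ∈ I) ∧ v = algebraMap B C s • iv C v0 := by
  choose b hb hb' using hv
  obtain ⟨v', h1, h2⟩ := D.exv hs hb
  exact ⟨v', h1, by rw [← iv_smul, h2]; exact funext fun q => (hb' q).symm⟩

theorem LiftC.unique (D : Dv S I) {u v : Fin n → C} {g g' : SteinbergGroup n B}
    (h : LiftC S I u v g) (h' : LiftC S I u v g') : g = g' := by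
  obtain ⟨s, hs, w, hw⟩ := clearv S u
  obtain ⟨v0, hv0, e⟩ := D.exC h.mem hs
  exact Lift.unique D (unim_of hs h.1 hw) (h.rep D hs hw hv0 e) (h'.rep D hs hw hv0 e)

theorem LiftC.exists (D : Dv S I) {u v : Fin n → C} (hu : ∃ y : Fin n → C, y ⬝ᵥ u = 1)
    (hv : ∀ q, ∃ b ∈ I, algebraMap B C b = v q) (hd : v ⬝ᵥ u = 0) :
    ∃ g, LiftC S I u v g := by
  obtain ⟨s, hs, w, hw⟩ := clearv S u
  obtain ⟨v0, hv0, e⟩ := D.exC hv hs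
  obtain ⟨g, hg⟩ := Lift.exists D (unim_of hs hu hw) hv0 (by
    apply D.ker C (dot_mem hv0)
    rw [iv_dot, hw, dotProduct_smul, ← smul_dotProduct, ← e, hd])
  exact ⟨g, hu, w, s, hs, v0, hw, e, hg⟩

theorem LiftC.mul (D : Dv S I) {u v v' : Fin n → C} {g g' : SteinbergGroup n B}
    (h : LiftC S I u v g) (h' : LiftC S I u v' g') : LiftC S I u (v + v') (g * g') := by
  obtain ⟨s, hs, w, hw⟩ := clearv S u
  obtain ⟨v0, hv0, e⟩ := D.exC h.mem hs
  obtain ⟨v0', hv0', e'⟩ := D.exC h'.mem hs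
  exact ⟨h.1, w, s, hs, v0 + v0', hw, by rw [iv_add, smul_add, ← e, ← e'],
    (h.rep D hs hw hv0 e).mul (h'.rep D hs hw hv0' e')⟩

omit hn in
theorem map_mul_inv (k : SteinbergGroup n B) :
    (pi k⁻¹).map (algebraMap B C) * (pi k).map (algebraMap B C) = 1 := by
  rw [← Matrix.map_mul, ← pi_mul, inv_mul_cancel, pi_one, Matrix.map_one _ (map_zero _) (map_one _)]

theorem LiftC.conj {u v : Fin n → C} {g : SteinbergGroup n B} (h : LiftC S I u v g)
    (k : SteinbergGroup n B) : LiftC S I ((StLG.pi k).map (algebraMap B C) *ᵥ u)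
      (v ᵥ* (StLG.pi k⁻¹).map (algebraMap B C)) (k * g * k⁻¹) := by
  obtain ⟨⟨y, hy⟩, w1, s1, hs1, v1, hw1, hv1, h1⟩ := h
  refine ⟨⟨y ᵥ* (StLG.pi k⁻¹).map (algebraMap B C), ?_⟩, _, s1, hs1, _, ?_, ?_, h1.conj k⟩
  · rw [← dotProduct_mulVec, mulVec_mulVec, map_mul_inv, one_mulVec, hy]
  · rw [iv_mulVec, hw1, mulVec_smul]
  · rw [iv_vecMul, hv1, smul_vecMul]

theorem LiftC.pi {u v : Fin n → C} {g : SteinbergGroup n B} (h : LiftC S I u v g) :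
    (StLG.pi g).map (algebraMap B C) = 1 + vecMulVec u v := by
  obtain ⟨⟨y, hy⟩, w1, s1, hs1, v1, hw1, hv1, h1⟩ := h
  rw [h1.pi]
  ext a b
  have := congrFun hw1 a
  simp only [iv, Pi.smul_apply, smul_eq_mul] at this
  simp only [map_apply, Matrix.add_apply, vecMulVec_apply, map_add, map_mul, this, hv1, Pi.smul_apply,
    smul_eq_mul, iv]
  congr 1
  · by_cases hab : a = b
    · subst hab; simp
    · simp [hab]
  · ring

theorem LiftC.dot (D : Dv S I) {u v : Fin n → C} {g : SteinbergGroup n B} (h : LiftC S I u v g) :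
    v ⬝ᵥ u = 0 := by
  obtain ⟨s, hs, w, hw⟩ := clearv S u
  obtain ⟨v0, hv0, e⟩ := D.exC h.mem hs
  have := (h.rep D hs hw hv0 e).dot
  rw [e, smul_dotProduct, ← dotProduct_smul, ← hw, ← iv_dot, this, map_zero]

theorem LiftC.inv (D : Dv S I) {u v : Fin n → C} {g : SteinbergGroup n B}
    (h : LiftC S I u v g) : LiftC S I u (-v) g⁻¹ := by
  obtain ⟨g', h'⟩ := LiftC.exists (S := S) (I := I) (v := -v) D h.1 (fun q => by
    obtain ⟨b, hb, e⟩ := h.mem q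
    exact ⟨-b, I.neg_mem hb, by simp [e]⟩) (by simp [h.dot D])
  have h0 : LiftC S I u 0 (1 : SteinbergGroup n B) := by
    obtain ⟨s, hs, w, hw⟩ := clearv S u
    exact ⟨h.1, w, s, hs, 0, hw, by ext; simp [iv], Lift.zero⟩
  have := h.mul D h'
  rw [add_neg_cancel] at this
  rw [inv_eq_of_mul_eq_one_right (this.unique D h0)]
  exact h'

theorem LiftC.act (D : Dv S I) {a b v' v : Fin n → C} {g g' : SteinbergGroup n B}
    (h' : LiftC S I a v' g') (h : LiftC S I b v g) :
    LiftC S I (a + (v ⬝ᵥ a) • b) (v' - (v' ⬝ᵥ b) • v) (g * g' * g⁻¹) := by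
  have := h'.conj g
  rw [h.pi, (h.inv D).pi, mv1, vm1, smul_neg, ← sub_eq_add_neg] at this
  exact this

theorem LiftC.pair (D : Dv S I) {a b y1 y2 v : Fin n → C} {t : C}
    (hd : (y1 ⬝ᵥ a) * (y2 ⬝ᵥ b) - (y1 ⬝ᵥ b) * (y2 ⬝ᵥ a) = 1) {g1 g2 : SteinbergGroup n B}
    (hva : v ⬝ᵥ a = 0) (h1 : LiftC S I a (t • v) g1) (h2 : LiftC S I b v g2) :
    LiftC S I (b + t • a) v (g1 * g2) := by
  obtain ⟨s, hs, f, hf⟩ := clear S (Sum.elim a (Sum.elim b (Sum.elim y1 (Sum.elim y2 (fun _ : Unit => t)))))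
  let a' : Fin n → B := fun q => f (Sum.inl q)
  let b' : Fin n → B := fun q => f (Sum.inr (Sum.inl q))
  let z1 : Fin n → B := fun q => f (Sum.inr (Sum.inr (Sum.inl q)))
  let z2 : Fin n → B := fun q => f (Sum.inr (Sum.inr (Sum.inr (Sum.inl q))))
  let t' : B := f (Sum.inr (Sum.inr (Sum.inr (Sum.inr ()))))
  have ha : iv C a' = algebraMap B C s • a := funext fun q => hf (Sum.inl q)
  have hb : iv C b' = algebraMap B C s • b := funext fun q => hf (Sum.inr (Sum.inl q))
  have hz1 : iv C z1 = algebraMap B C s • y1 := funext fun q => hf (Sum.inr (Sum.inr (Sum.inl q)))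
  have hz2 : iv C z2 = algebraMap B C s • y2 :=
    funext fun q => hf (Sum.inr (Sum.inr (Sum.inr (Sum.inl q))))
  have ht' : algebraMap B C t' = algebraMap B C s * t := hf (Sum.inr (Sum.inr (Sum.inr (Sum.inr ()))))
  clear_value a' b' z1 z2 t'
  have hss := S.mul_mem hs hs
  obtain ⟨v0, hv0, e⟩ := D.exC h2.mem hss
  have H1 : Lift I a' (t' • v0) g1 := h1.rep D hs ha (fun q => I.mul_mem_left _ (hv0 q)) (by
    rw [e, iv_smul, ht', smul_smul, smul_smul]; congr 1; rw [map_mul]; ring)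
  have H2 : Lift I (s • b') v0 g2 := h2.rep D hss (by rw [iv_smul, hb, smul_smul, map_mul]) hv0 e
  obtain ⟨r, hr, hd'⟩ := inS (S := S) C (b := (z1 ⬝ᵥ a') * (z2 ⬝ᵥ (s • b')) - (z1 ⬝ᵥ (s • b')) * (z2 ⬝ᵥ a'))
    (s := s * s * s * s * s) (S.mul_mem (S.mul_mem (S.mul_mem hss hs) hs) hs) (by
      rw [map_sub, map_mul, map_mul, iv_dot, iv_dot, iv_dot, iv_dot, iv_smul, ha, hb, hz1, hz2]
      simp only [dotProduct_smul, smul_dotProduct, smul_eq_mul, map_mul]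
      linear_combination (algebraMap B C s) ^ 5 * hd)
  have H3 := Lift.pair D (y1 := r • z1) (y2 := z2) (by
    simp only [smul_dotProduct, smul_eq_mul] at hd' ⊢
    convert hd' using 1; ring) (v := v0) (by
      apply D.ker C (dot_mem hv0)
      have hu : IsUnit (algebraMap B C (s * s)) := IsLocalization.map_units C (⟨s * s, hss⟩ : S)
      apply hu.mul_left_cancel
      rw [mul_zero, ← smul_eq_mul, iv_dot, ← smul_dotProduct, ← e, ha, dotProduct_smul, hva,
        smul_zero]) H1 H2
  refine ⟨?_, _, s * s, hss, v0, ?_, e, H3⟩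
  · refine ⟨(y1 ⬝ᵥ a) • y2 - (y2 ⬝ᵥ a) • y1, ?_⟩
    simp only [sub_dotProduct, smul_dotProduct, dotProduct_add, dotProduct_smul, smul_eq_mul]
    linear_combination hd
  · rw [iv_add, iv_smul, iv_smul, ha, hb, ht', smul_add, smul_smul, smul_smul, smul_smul, map_mul]
    congr 2; ring

theorem LiftC.x {i j : Fin n} (hij : i ≠ j) {b : B} (hb : b ∈ I) :
    LiftC S I (Pi.single i (1 : C)) (Pi.single j (algebraMap B C b)) (x i j b) :=
  ⟨⟨Pi.single i 1, by simp⟩, Pi.single i 1, 1, S.one_mem, Pi.single j b,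
    by simp [iv_single], by simp [iv_single], lift_x hij hb⟩

end liftc
end StLG


namespace StLG
open Matrix
set_option linter.unusedSimpArgs false
set_option linter.unusedVariables false
set_option linter.unusedSectionVars false

section UV
variable {n : ℕ} {C : Type} [CommRing C]

def Uc (M : (Matrix (Fin n) (Fin n) C)ˣ) (i : Fin n) : Fin n → C := M.val *ᵥ Pi.single i 1
def Vr (M : (Matrix (Fin n) (Fin n) C)ˣ) (j : Fin n) : Fin n → C := Pi.single j 1 ᵥ* (M⁻¹).val

theorem Vr_Uc (M : (Matrix (Fin n) (Fin n) C)ˣ) (j i : Fin n) :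
    Vr M j ⬝ᵥ Uc M i = if i = j then 1 else 0 := by
  rw [Vr, Uc, ← dotProduct_mulVec, mulVec_mulVec, Units.inv_mul, one_mulVec, single_dotProduct]
  by_cases h : i = j
  · subst h; simp
  · simp [h, Ne.symm h]

theorem Uc_ne (M : (Matrix (Fin n) (Fin n) C)ˣ) {h k i : Fin n} (hhk : h ≠ k) (hi : i ≠ k) (a : C) :
    Uc (M * piu (x h k a)) i = Uc M i := by
  rw [Uc, Units.val_mul, ← mulVec_mulVec]
  change M.val *ᵥ (pi (x h k a) *ᵥ _) = _
  rw [pi_x_mulVec hhk, Pi.single_eq_of_ne hi.symm, mul_zero, Pi.single_zero, add_zero, Uc]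

theorem Uc_eq (M : (Matrix (Fin n) (Fin n) C)ˣ) {h k : Fin n} (hhk : h ≠ k) (a : C) :
    Uc (M * piu (x h k a)) k = Uc M k + a • Uc M h := by
  rw [Uc, Units.val_mul, ← mulVec_mulVec]
  change M.val *ᵥ (pi (x h k a) *ᵥ _) = _
  rw [pi_x_mulVec hhk, Pi.single_eq_same, mul_one, mulVec_add, Uc, Uc, ← mulVec_smul,
    ← Pi.single_smul', smul_eq_mul, mul_one]

theorem Vr_aux (M : (Matrix (Fin n) (Fin n) C)ˣ) (h k j : Fin n) (a : C) :
    Vr (M * piu (x h k a)) j = (Pi.single j 1 ᵥ* pi (x h k (-a))) ᵥ* (M⁻¹).val := by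
  rw [Vr, _root_.mul_inv_rev, Units.val_mul, ← vecMul_vecMul, ← map_inv, ← x_neg]; rfl

theorem Vr_ne (M : (Matrix (Fin n) (Fin n) C)ˣ) {h k j : Fin n} (hhk : h ≠ k) (hj : j ≠ h) (a : C) :
    Vr (M * piu (x h k a)) j = Vr M j := by
  rw [Vr_aux, pi_x_vecMul hhk, Pi.single_eq_of_ne hj.symm, zero_mul, Pi.single_zero, add_zero, Vr]

theorem Vr_eq (M : (Matrix (Fin n) (Fin n) C)ˣ) {h k : Fin n} (hhk : h ≠ k) (a : C) :
    Vr (M * piu (x h k a)) h = Vr M h - a • Vr M k := by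
  rw [Vr_aux, pi_x_vecMul hhk, Pi.single_eq_same, one_mul, add_vecMul, Vr, Vr, ← smul_vecMul,
    ← Pi.single_smul', smul_eq_mul, mul_one, Pi.single_neg, neg_vecMul, sub_eq_add_neg]

end UV

section psi
variable {n : ℕ} {B C : Type} [CommRing B] [CommRing C] [Algebra B C]
  {S : Submonoid B} {I : Ideal B} [hn : Fact (4 ≤ n)] [IsLocalization S C]

def InJ (I : Ideal B) (c : C) : Prop := ∃ b ∈ I, algebraMap B C b = c

theorem InJ.mul (D : Dv S I) {c : C} (h : InJ I c) (d : C) : InJ I (c * d) := by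
  obtain ⟨b, hb, rfl⟩ := h
  obtain ⟨⟨f, s⟩, hf⟩ := IsLocalization.surj S d
  obtain ⟨b', hb', rfl⟩ := D.ex s s.2 b hb
  refine ⟨b' * f, I.mul_mem_right _ hb', ?_⟩
  rw [map_mul, ← hf, map_mul]; ring

theorem LiftC.ex' (D : Dv S I) {u v : Fin n → C} {c : C} (hu : ∃ y : Fin n → C, y ⬝ᵥ u = 1)
    (hc : InJ I c) (hd : v ⬝ᵥ u = 0) : ∃ g, LiftC S I u (c • v) g :=
  LiftC.exists D hu (fun q => InJ.mul D hc (v q)) (by rw [smul_dotProduct, hd, smul_zero])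

theorem LiftC.commute (D : Dv S I) {a b v' v : Fin n → C} {g g' : SteinbergGroup n B}
    (h' : LiftC S I a v' g') (h : LiftC S I b v g) (hva : v ⬝ᵥ a = 0) (hvb : v' ⬝ᵥ b = 0) :
    g * g' = g' * g := by
  have := h'.act D h
  rw [hva, hvb, zero_smul, zero_smul, add_zero, sub_zero] at this
  exact mul_inv_eq_iff_eq_mul.1 (this.unique D h')

theorem LiftC.rel (D : Dv S I) {ui uj vi vj vk : Fin n → C} {r s a b : C}
    (ii : vi ⬝ᵥ ui = 1) (jj : vj ⬝ᵥ uj = 1) (ij : vi ⬝ᵥ uj = 0) (ji : vj ⬝ᵥ ui = 0)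
    (ki : vk ⬝ᵥ ui = 0) (kj : vk ⬝ᵥ uj = 0) (hr : InJ I (r - a)) (hs : InJ I (s - b))
    {A W P Q Z : SteinbergGroup n B}
    (hA : LiftC S I ui ((r - a) • vj) A) (hW : LiftC S I (uj + a • ui) ((s - b) • vk) W)
    (hP : LiftC S I ui ((r * s - a * b) • vk) P) (hQ : LiftC S I uj ((s - b) • vk) Q)
    (hZ : LiftC S I ui ((r - a) • (vj - b • vk)) Z) : A * W = P * (Q * Z) := by
  have hui : ∃ y : Fin n → C, y ⬝ᵥ ui = 1 := ⟨_, ii⟩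
  have hd : (vi ⬝ᵥ ui) * (vj ⬝ᵥ uj) - (vi ⬝ᵥ uj) * (vj ⬝ᵥ ui) = 1 := by rw [ii, jj, ij, ji]; ring
  have z1 : ((s - b) • vk) ⬝ᵥ ui = 0 := by rw [smul_dotProduct, ki, smul_zero]
  obtain ⟨K1, h1⟩ := LiftC.ex' D hui (InJ.mul D hs a) ki
  obtain ⟨K2, h2⟩ := LiftC.ex' D hui (InJ.mul D hs (r - a)) ki
  obtain ⟨N, hN⟩ := LiftC.ex' D hui (InJ.mul D hr (-b)) ki
  have e1 : W = K1 * Q := hW.unique D (LiftC.pair D hd z1 (by rwa [smul_smul, mul_comm a]) hQ)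
  have e2 : A * Q * A⁻¹ = K2 * Q := by
    have := hQ.act D hA
    rw [smul_dotProduct, jj, z1, zero_smul, sub_zero, smul_eq_mul, mul_one] at this
    exact this.unique D (LiftC.pair D hd z1 (by rwa [smul_smul, mul_comm (r - a)]) hQ)
  have e3 : Z = N * A := hZ.unique D (by
    convert hN.mul D hA using 1
    rw [smul_sub, smul_smul, mul_neg, neg_smul]; abel)
  have e4 : P * N = K1 * K2 := by
    refine (hP.mul D hN).unique D ?_
    convert h1.mul D h2 using 1
    rw [← add_smul, ← add_smul]; congr 1; ring
  have c1 : N * Q = Q * N := LiftC.commute D hQ hN (by rw [smul_dotProduct, kj, smul_zero]) z1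
  have c2 : A * K1 = K1 * A := LiftC.commute D h1 hA (by rw [smul_dotProduct, ji, smul_zero])
    (by rw [smul_dotProduct, ki, smul_zero])
  rw [e1, e3, ← mul_assoc, c2, mul_assoc, mul_inv_eq_iff_eq_mul.1 e2, ← mul_assoc Q, ← c1,
    ← mul_assoc, ← mul_assoc, ← mul_assoc, ← mul_assoc, e4, mul_assoc, mul_assoc]

open Classical in
noncomputable def XC (S : Submonoid B) (I : Ideal B) (u v : Fin n → C) : SteinbergGroup n B :=
  if h : ∃ g, LiftC S I u v g then h.choose else 1

theorem XC_spec {u v : Fin n → C} (h : ∃ g, LiftC S I u v g) : LiftC S I u v (XC S I u v) := by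
  rw [XC, dif_pos h]; exact h.choose_spec

/-- the right translation action -/
def rt (n : ℕ) (B C : Type) [CommRing B] [CommRing C] : (Matrix (Fin n) (Fin n) C)ˣ →*
    MulAut ((Matrix (Fin n) (Fin n) C)ˣ → SteinbergGroup n B) where
  toFun t :=
    { toFun := fun F M => F (M * t)
      invFun := fun F M => F (M * t⁻¹)
      left_inv := fun F => by ext M; simp
      right_inv := fun F => by ext M; simp
      map_mul' := fun F G => rfl }
  map_one' := by ext F M; simp
  map_mul' t t' := by ext F M; simp [mul_assoc]

noncomputable def Fx (S : Submonoid B) (I : Ideal B) (e : C →+* C) (i j : Fin n) (c : C) :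
    (Matrix (Fin n) (Fin n) C)ˣ → SteinbergGroup n B :=
  fun M => XC S I (Uc M i) ((c - e c) • Vr M j)

theorem Fx_spec (D : Dv S I) {e : C →+* C} (he : ∀ c, InJ I (c - e c)) {i j : Fin n} (hij : i ≠ j)
    (c : C) (M : (Matrix (Fin n) (Fin n) C)ˣ) :
    LiftC S I (Uc M i) ((c - e c) • Vr M j) (Fx S I e i j c M) :=
  XC_spec (LiftC.ex' D ⟨Vr M i, by simp [Vr_Uc]⟩ (he c) (by simp [Vr_Uc, hij]))

theorem psi_exists (D : Dv S I) {e : C →+* C} (he : ∀ c, InJ I (c - e c)) :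
    ∃ Ψ : SteinbergGroup n C →* SemidirectProduct _ _ (rt n B C), ∀ i j (_ : i ≠ j) c,
      Ψ (x i j c) = ⟨Fx S I e i j c, piu (x i j (e c))⟩ := by
  have sp := fun {i j : Fin n} (hij : i ≠ j) => Fx_spec D he hij
  refine exists_lift (fun i j (h : i ≠ j) c => (⟨Fx S I e i j c, piu (x i j (e c))⟩ :
    SemidirectProduct _ _ (rt n B C))) ?_ ?_ ?_
  · intro i j h r s
    refine SemidirectProduct.ext ?_ ?_
    · funext M
      change _ = Fx S I e i j r M * Fx S I e i j s (M * piu (x i j (e r)))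
      have h1 := sp h s (M * piu (x i j (e r)))
      rw [Uc_ne _ h h, Vr_ne _ h h.symm] at h1
      refine (sp h (r + s) M).unique D ?_
      convert (sp h r M).mul D h1 using 1
      rw [← add_smul, map_add]; congr 1; ring
    · simp only [SemidirectProduct.mul_right, ← map_mul, ← x_add, map_add]
  · intro i j h k hij hhk hjh hik r s
    refine SemidirectProduct.ext ?_ ?_
    · funext M
      change Fx S I e i j r M * Fx S I e h k s (M * piu (x i j (e r))) =
        Fx S I e h k s M * Fx S I e i j r (M * piu (x h k (e s)))
      have h1 := sp hhk s (M * piu (x i j (e r)))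
      have h2 := sp hij r (M * piu (x h k (e s)))
      rw [Uc_ne _ hij hjh.symm, Vr_ne _ hij hik.symm] at h1
      rw [Uc_ne _ hhk hik, Vr_ne _ hhk hjh] at h2
      rw [h1.unique D (sp hhk s M), h2.unique D (sp hij r M)]
      exact LiftC.commute D (sp hhk s M) (sp hij r M) (by simp [Vr_Uc, hjh.symm])
        (by simp [Vr_Uc, hik])
    · simp only [SemidirectProduct.mul_right, ← map_mul]
      rw [(x_comm hjh hik _ _).eq]
  · intro i j k hij hjk hik r s
    refine SemidirectProduct.ext ?_ ?_
    · rw [mul_assoc]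
      funext M
      change Fx S I e i j r M * Fx S I e j k s (M * piu (x i j (e r))) =
        Fx S I e i k (r * s) M * (Fx S I e j k s (M * piu (x i k (e (r * s)))) *
          Fx S I e i j r (M * piu (x i k (e (r * s))) * piu (x j k (e s))))
      have h1 := sp hjk s (M * piu (x i j (e r)))
      have h2 := sp hik (r * s) M
      have h3 := sp hjk s (M * piu (x i k (e (r * s))))
      have h4 := sp hij r (M * piu (x i k (e (r * s))) * piu (x j k (e s)))
      rw [Uc_eq _ hij, Vr_ne _ hij hik.symm] at h1
      rw [map_mul] at h2
      rw [Uc_ne _ hik hjk, Vr_ne _ hik hik.symm] at h3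
      rw [Uc_ne _ hjk hik, Vr_eq _ hjk, Uc_ne _ hik hik, Vr_ne _ hik hij.symm,
        Vr_ne _ hik hik.symm] at h4
      exact LiftC.rel D (vi := Vr M i) (by simp [Vr_Uc]) (by simp [Vr_Uc]) (by simp [Vr_Uc, hij.symm])
        (by simp [Vr_Uc, hij]) (by simp [Vr_Uc, hik]) (by simp [Vr_Uc, hjk]) (he r) (he s)
        (sp hij r M) h1 h2 h3 h4
    · simp only [SemidirectProduct.mul_right, ← map_mul]
      rw [x_mul hij hjk hik, map_mul e]

/-- the matrix of `k` over `C` -/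
noncomputable def pC (C : Type) [CommRing C] [Algebra B C] :
    SteinbergGroup n B →* (Matrix (Fin n) (Fin n) C)ˣ :=
  piu.comp (stmap (algebraMap B C))

theorem pi_map (g : SteinbergGroup n B) :
    pi (stmap (algebraMap B C) g) = (pi g).map (algebraMap B C) := by
  refine st_ind (P := fun g => pi (stmap (algebraMap B C) g) = (pi g).map (algebraMap B C))
    ?_ ?_ g
  · rw [map_one, pi_one, pi_one, Matrix.map_one _ (map_zero _) (map_one _)]
  · intro i j h r g ih
    rw [map_mul, pi_mul, pi_mul, ih, Matrix.map_mul, stmap_x, pi_x h, pi_x h]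
    congr 1
    rw [Matrix.map_add _ (map_add _), Matrix.map_one _ (map_zero _) (map_one _)]
    congr 1
    ext a b; simp only [Matrix.single_apply, Matrix.map_apply]; split_ifs <;> simp

theorem Uc_pC (k : SteinbergGroup n B) (M : (Matrix (Fin n) (Fin n) C)ˣ) (i : Fin n) :
    Uc (pC C k * M) i = (pi k).map (algebraMap B C) *ᵥ Uc M i := by
  rw [Uc, Units.val_mul, ← mulVec_mulVec, ← pi_map]; rfl

theorem Vr_pC (k : SteinbergGroup n B) (M : (Matrix (Fin n) (Fin n) C)ˣ) (i : Fin n) :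
    Vr (pC C k * M) i = Vr M i ᵥ* (pi k⁻¹).map (algebraMap B C) := by
  rw [Vr, _root_.mul_inv_rev, Units.val_mul, ← vecMul_vecMul, ← pi_map, ← map_inv]; rfl

theorem main_inj (D : Dv S I) {e : C →+* C} (he : ∀ c, InJ I (c - e c)) {ε : B →+* B}
    (hε : ∀ b, b - ε b ∈ I) (hc : ∀ b, algebraMap B C (ε b) = e (algebraMap B C b))
    {g : SteinbergGroup n B} (h1 : stmap ε g = 1) (h2 : stmap (algebraMap B C) g = 1) : g = 1 := by
  obtain ⟨Ψ, hΨ⟩ := psi_exists (n := n) (S := S) (I := I) D he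
  have key : ∀ g : SteinbergGroup n B,
      (∀ k M, (Ψ (stmap (algebraMap B C) g)).left (pC C k * M) =
        k * (Ψ (stmap (algebraMap B C) g)).left M * k⁻¹) ∧
      (Ψ (stmap (algebraMap B C) g)).left 1 * stmap ε g = g := by
    intro g
    refine st_ind (P := fun g => (∀ k M, (Ψ (stmap (algebraMap B C) g)).left (pC C k * M) =
        k * (Ψ (stmap (algebraMap B C) g)).left M * k⁻¹) ∧
      (Ψ (stmap (algebraMap B C) g)).left 1 * stmap ε g = g) ?_ ?_ g
    · simp
    · rintro i j hij b g ⟨ih1, ih2⟩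
      have hl : ∀ M, (Ψ (stmap (algebraMap B C) (x i j b * g))).left M =
          Fx S I e i j (algebraMap B C b) M *
            (Ψ (stmap (algebraMap B C) g)).left (M * piu (x i j (e (algebraMap B C b)))) := by
        intro M
        rw [map_mul, map_mul, stmap_x, hΨ i j hij]; rfl
      have sp := fun M => Fx_spec D he hij (algebraMap B C b) M
      constructor
      · intro k M
        rw [hl, hl, mul_assoc, ih1]
        have h3 := sp (pC C k * M)
        have h4 := (sp M).conj k
        rw [Uc_pC, Vr_pC, ← smul_vecMul] at h3
        rw [h3.unique D h4]
        group
      · have h5 : piu (x i j (e (algebraMap B C b))) = pC C (x i j (ε b)) * 1 := by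
          rw [mul_one, pC, MonoidHom.comp_apply, stmap_x, hc]
        rw [hl, one_mul, h5, ih1, map_mul, stmap_x]
        have h6 := sp 1
        have h7 := LiftC.x (C := C) (S := S) hij (hε b)
        have h8 : Fx S I e i j (algebraMap B C b) 1 = x i j (b - ε b) := by
          refine h6.unique D ?_
          convert h7 using 1
          · rw [Uc, Units.val_one, one_mulVec]
          · rw [Vr, inv_one, Units.val_one, vecMul_one, ← Pi.single_smul', smul_eq_mul, mul_one,
              map_sub, hc]
        rw [h8]
        conv_rhs => rw [← sub_add_cancel b (ε b), x_add, ← ih2]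
        group
  have := (key g).2
  rw [h1, h2, map_one] at this
  simpa using this.symm

end psi
end StLG


namespace StLG
open Matrix
set_option linter.unusedSimpArgs false
set_option linter.unusedVariables false
set_option linter.unusedSectionVars false

section inj2
variable {n : ℕ} {B : Type} [CommRing B] [hn : Fact (4 ≤ n)]

theorem main_inj2 {S : Submonoid B} {I : Ideal B} (D : Dv S I) {ε : B →+* B}
    (hε : ∀ b, b - ε b ∈ I) (hS : ∀ s ∈ S, ε s = s)
    {g : SteinbergGroup n B} (h1 : stmap ε g = 1)
    (h2 : stmap (algebraMap B (Localization S)) g = 1) : g = 1 := by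
  have hle : S ≤ S.comap ε := fun s hs => by
    rw [Submonoid.mem_comap, hS s hs]; exact hs
  let e : Localization S →+* Localization S := IsLocalization.map (Localization S) ε hle
  have hc : ∀ b, algebraMap B (Localization S) (ε b) = e (algebraMap B (Localization S) b) :=
    fun b => (IsLocalization.map_eq hle b).symm
  refine main_inj (S := S) (I := I) (C := Localization S) (e := e) D ?_ hε hc h1 h2
  intro c
  obtain ⟨⟨f, s⟩, hf⟩ := IsLocalization.surj S c
  obtain ⟨z, hz, hz'⟩ := D.ex s s.2 _ (hε f)
  refine ⟨z, hz, ?_⟩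
  have hu : IsUnit (algebraMap B (Localization S) s) := IsLocalization.map_units _ s
  apply hu.mul_left_cancel
  have h3 := congrArg e hf
  rw [map_mul, ← hc, hS _ s.2, ← hc] at h3
  rw [← map_mul, hz', map_sub, mul_sub]
  simp only at hf h3
  linear_combination (exp := 1) h3 - hf
end inj2

section germ
open Polynomial Filter
variable {R : Type} [CommRing R] {P : Submonoid R}

instance dirMS : IsDirectedOrder (Multiset P) := ⟨fun a b => ⟨a + b, by simp, by simp⟩⟩

abbrev AZ (R : Type) [CommRing R] : Type := Polynomial (Polynomial R)
abbrev Gm (P : Submonoid R) : Type := Germ (atTop : Filter (Multiset P)) (AZ R)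

/-- scaling -/
noncomputable def sg (r : R) : AZ R →+* AZ R := eval₂RingHom C (C (C r) * X)

theorem sg_coeff (r : R) (p : AZ R) (m : ℕ) : (sg r p).coeff m = p.coeff m * (C r) ^ m :=
  comp_C_mul_X_coeff

theorem sg_C (r : R) (a : Polynomial R) : sg r (C a) = C a := by simp [sg]
theorem sg_X (r : R) : sg r X = C (C r) * X := by simp [sg]

theorem sg_comm (r t : R) (p : AZ R) : sg r (sg t p) = sg t (sg r p) := by
  ext1 m; simp only [sg_coeff]; ring

theorem sg_divX (r : R) (p : AZ R) : (sg r p).divX = C (C r) * sg r p.divX := by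
  ext1 m; simp only [sg_coeff, coeff_divX, coeff_C_mul]; ring

theorem ev_shift {Q : Multiset P → Prop} (r : P) (h : ∀ᶠ k in atTop, Q k) :
    ∀ᶠ k in atTop, ∃ k', k = k' + {r} ∧ Q k' := by
  obtain ⟨k0, hk⟩ := eventually_atTop.1 h
  refine eventually_atTop.2 ⟨k0 + {r}, fun k hk' => ?_⟩
  obtain ⟨m, rfl⟩ := Multiset.le_iff_exists_add.1 hk'
  exact ⟨k0 + m, by abel, hk _ (by simp)⟩

def Coh (q : Multiset P → AZ R) : Prop := ∀ r : P, ∀ᶠ k in atTop, q (k + {r}) = sg (r : R) (q k)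

/-- coherent germs -/
def B0 (P : Submonoid R) : Subring (Gm P) where
  carrier := {b | ∃ q : Multiset P → AZ R, (q : Gm P) = b ∧ Coh q}
  mul_mem' := by
    rintro _ _ ⟨q, rfl, hq⟩ ⟨q', rfl, hq'⟩
    exact ⟨q * q', rfl, fun r => by
      filter_upwards [hq r, hq' r] with k h h'; simp [h, h']⟩
  add_mem' := by
    rintro _ _ ⟨q, rfl, hq⟩ ⟨q', rfl, hq'⟩
    exact ⟨q + q', rfl, fun r => by
      filter_upwards [hq r, hq' r] with k h h'; simp [h, h']⟩
  one_mem' := ⟨1, rfl, fun r => by simp⟩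
  zero_mem' := ⟨0, rfl, fun r => by simp⟩
  neg_mem' := by
    rintro _ ⟨q, rfl, hq⟩
    exact ⟨-q, rfl, fun r => by filter_upwards [hq r] with k h; simp [h]⟩

def mkB (q : Multiset P → AZ R) (hq : Coh q) : B0 P := ⟨(q : Gm P), q, rfl, hq⟩

theorem mkB_surj (b : B0 P) : ∃ q hq, b = mkB q hq := by
  obtain ⟨b, q, rfl, hq⟩ := b; exact ⟨q, hq, rfl⟩

theorem mkB_eq {q q' : Multiset P → AZ R} {hq : Coh q} {hq' : Coh q'} :
    mkB q hq = mkB q' hq' ↔ ∀ᶠ k in atTop, q k = q' k := by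
  exact Subtype.ext_iff.trans Germ.coe_eq

theorem Bext {b b' : B0 P} (q q' : Multiset P → AZ R) (h : b.val = (q : Gm P))
    (h' : b'.val = (q' : Gm P)) (hk : ∀ k, q k = q' k) : b = b' := by
  apply Subtype.ext
  rw [h, h', _root_.funext hk]

theorem coh_zero : Coh (0 : Multiset P → AZ R) := fun r => by simp

/-- families of homs -/
noncomputable def famB {T : Type} [CommRing T] (f : Multiset P → T →+* AZ R)
    (hf : ∀ k r p, f (k + {r}) p = sg (r : R) (f k p)) : T →+* B0 P where
  toFun p := mkB (fun k => f k p) fun r => Eventually.of_forall fun k => hf k r p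
  map_one' := mkB_eq (hq' := fun r => by simp) |>.2 (Eventually.of_forall fun k => map_one (f k))
  map_zero' := mkB_eq (hq' := fun r => by simp) |>.2 (Eventually.of_forall fun k => map_zero (f k))
  map_mul' p p' := Bext _ _ rfl rfl fun k => map_mul (f k) p p'
  map_add' p p' := Bext _ _ rfl rfl fun k => map_add (f k) p p'

noncomputable def e0 : AZ R →+* AZ R := C.comp (constantCoeff)

theorem e0_apply (p : AZ R) : e0 p = C (p.coeff 0) := rfl
theorem e0_sg (r : R) (p : AZ R) : sg r (e0 p) = e0 (sg r p) := by
  rw [e0_apply, e0_apply, sg_C, sg_coeff]; simp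

noncomputable def epsG : Gm P →+* Gm P where
  toFun := Germ.map e0
  map_one' := congrArg _ (_root_.funext fun k => map_one e0)
  map_zero' := congrArg _ (_root_.funext fun k => map_zero e0)
  map_mul' := by
    intro a b
    induction a using Germ.inductionOn
    induction b using Germ.inductionOn
    exact congrArg _ (_root_.funext fun k => map_mul e0 _ _)
  map_add' := by
    intro a b
    induction a using Germ.inductionOn
    induction b using Germ.inductionOn
    exact congrArg _ (_root_.funext fun k => map_add e0 _ _)

theorem coh_e0 {q : Multiset P → AZ R} (hq : Coh q) : Coh fun k => e0 (q k) := fun r => by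
  filter_upwards [hq r] with k h; rw [h, e0_sg]

noncomputable def eps : B0 P →+* B0 P := epsG.restrict (B0 P) (B0 P) (by
  rintro _ ⟨q, rfl, hq⟩
  exact ⟨_, rfl, coh_e0 hq⟩)

theorem eps_mk (q : Multiset P → AZ R) (hq : Coh q) : eps (mkB q hq) = mkB _ (coh_e0 hq) := rfl

noncomputable def cR : R →+* B0 P := famB (fun _ => C.comp C) (fun k r p => by simp [sg_C])

noncomputable def SB (P : Submonoid R) : Submonoid (B0 P) := P.map (cR : R →+* B0 P)

noncomputable def IB (P : Submonoid R) : Ideal (B0 P) := RingHom.ker eps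

theorem mk_mem_IB {q : Multiset P → AZ R} {hq : Coh q} :
    mkB q hq ∈ IB P ↔ ∀ᶠ k in atTop, (q k).coeff 0 = 0 := by
  rw [IB, RingHom.mem_ker, eps_mk]
  have : (0 : B0 P) = mkB 0 coh_zero := rfl
  rw [this]
  refine mkB_eq.trans ?_
  simp [e0_apply]

theorem cR_mul (r : R) (q : Multiset P → AZ R) (hq : Coh q) (q' : Multiset P → AZ R) (hq' : Coh q') :
    cR r * mkB q hq = mkB q' hq' ↔ ∀ᶠ k in atTop, C (C r) * q k = q' k := by
  have h1 : Coh (fun k => C (C r) * q k) := (fun t => by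
    filter_upwards [hq t] with k h; rw [h, map_mul, sg_C])
  have : cR r * mkB q hq = mkB (fun k => C (C r) * q k) h1 := rfl
  rw [this]
  exact mkB_eq

open Classical in
theorem dvB : Dv (SB P) (IB P) where
  ex := by
    rintro _ ⟨r, hr, rfl⟩ b hb
    obtain ⟨q, hq, rfl⟩ := mkB_surj b
    rw [mk_mem_IB] at hb
    let r' : P := ⟨r, hr⟩
    let z : Multiset P → AZ R := fun k => X * sg r (divX (q (k.erase r')))
    have hz : ∀ k, z (k + {r'}) = X * sg r (divX (q k)) := fun k => by
      have : (k + {r'}).erase r' = k := by simp [← Multiset.cons_zero, Multiset.add_cons]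
      simp only [z]; rw [this]
    have hcz : Coh z := fun t => by
      filter_upwards [ev_shift r' (hq t)] with k ⟨k', hk, h⟩
      rw [hk, add_right_comm, hz, hz, h, sg_divX, map_mul, sg_C, map_mul, sg_X, sg_comm]; ring
    refine ⟨mkB z hcz, mk_mem_IB.2 (Eventually.of_forall fun k => by simp [z]), ?_⟩
    refine (cR_mul r z hcz q hq).2 ?_
    filter_upwards [ev_shift r' ((hq r').and hb)] with k ⟨k', hk, h, h0⟩
    rw [hk, hz, h]
    conv_rhs => rw [← divX_mul_X_add (q k'), h0]
    simp only [map_zero, add_zero, map_mul, sg_X]; ring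
  inj := by
    rintro _ ⟨r, hr, rfl⟩ b hb h
    obtain ⟨q, hq, rfl⟩ := mkB_surj b
    rw [mk_mem_IB] at hb
    let r' : P := ⟨r, hr⟩
    have h0 : (0 : B0 P) = mkB 0 coh_zero := rfl
    rw [h0] at h ⊢
    have h' := (cR_mul r q hq _ _).1 h
    refine mkB_eq.2 ?_
    filter_upwards [ev_shift r' ((hq r').and (hb.and h'))] with k ⟨k', hk, h1, h2, h3⟩
    rw [hk, h1]
    ext1 m
    rw [sg_coeff]
    cases m with
    | zero => simp [h2]
    | succ m =>
      have := congrArg (fun p => coeff p (m + 1)) h3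
      simp only [coeff_C_mul, Pi.zero_apply, coeff_zero] at this
      rw [pow_succ]
      simp only [Pi.zero_apply, coeff_zero]
      linear_combination (C r) ^ m * this

theorem eps_sub (b : B0 P) : b - eps b ∈ IB P := by
  obtain ⟨q, hq, rfl⟩ := mkB_surj b
  rw [IB, RingHom.mem_ker, map_sub, eps_mk, eps_mk, sub_eq_zero, mkB_eq]
  exact Eventually.of_forall fun k => by simp [e0_apply]

theorem eps_S (s : B0 P) (hs : s ∈ SB P) : eps s = s := by
  obtain ⟨r, hr, rfl⟩ := hs
  exact (mkB_eq (hq := coh_e0 (fun t => by simp [sg_C])) (hq' := fun t => by simp [sg_C])).2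
    (Eventually.of_forall fun k => by simp [e0_apply])

/-- `X ↦ Y + a Z` -/
noncomputable def ph (a : R) : Polynomial R →+* AZ R :=
  eval₂RingHom (C.comp C) (C X + C (C a) * X)

theorem ph_C (a r : R) : ph a (C r) = C (C r) := by simp [ph]
theorem ph_X (a : R) : ph a X = C X + C (C a) * X := by simp [ph]

theorem sg_ph (a r : R) (p : Polynomial R) : ph (a * r) p = sg r (ph a p) := by
  have : ph (a * r) = (sg r).comp (ph a) := by
    apply Polynomial.ringHom_ext
    · intro t; simp [ph_C, sg_C]
    · simp [ph_X, sg_C, sg_X]; ring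
  exact DFunLike.congr_fun this p

def sk (k : Multiset P) : R := (k.map (fun r : P => (r : R))).prod

noncomputable def ph1 : Polynomial R →+* B0 P := famB (fun k => ph (sk k)) (fun k r p => by
  have : sk (k + {r}) = sk k * r := by simp [sk]
  rw [this, sg_ph])

noncomputable def ph2 : Polynomial R →+* B0 P := famB (fun k => ph 0) (fun k r p => by
  rw [← sg_ph, zero_mul])

theorem e0_ph (a : R) (p : Polynomial R) : e0 (ph a p) = C p := by
  have : e0.comp (ph a) = C := by
    apply Polynomial.ringHom_ext
    · intro t; simp [ph_C, e0_apply]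
    · simp [ph_X, e0_apply]
  exact DFunLike.congr_fun this p

theorem eps_ph1 : (eps (P := P)).comp ph1 = (eps (P := P)).comp ph2 := by
  apply DFunLike.ext
  intro p
  exact Bext (fun k => e0 (ph (sk k) p)) (fun k => e0 (ph 0 p)) rfl rfl
    fun k => (e0_ph _ p).trans (e0_ph _ p).symm

variable {n : ℕ} [hn : Fact (4 ≤ n)]

theorem ph_C_cR (f : Polynomial R →+* B0 P) (hf : ∀ r, f (C r) = cR r)
    {g : SteinbergGroup n (Polynomial R)}
    (hg : stmap (mapRingHom (algebraMap R (Localization P))) g = 1) :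
    stmap (B' := Localization (SB P)) (algebraMap (B0 P) (Localization (SB P))) (stmap f g) = 1 := by
  let θ : Localization P →+* Localization (SB P) := IsLocalization.lift (M := P)
    (g := (algebraMap (B0 P) (Localization (SB P))).comp cR) (fun y =>
      IsLocalization.map_units (Localization (SB P)) (⟨cR y, y, y.2, rfl⟩ : SB P))
  have hθ : ∀ r, θ (algebraMap R _ r) = algebraMap (B0 P) (Localization (SB P)) (cR r) :=
    fun r => IsLocalization.lift_eq _ r
  have : (algebraMap (B0 P) (Localization (SB P))).comp f =
      (eval₂RingHom θ (algebraMap (B0 P) (Localization (SB P)) (f X))).comp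
        (mapRingHom (algebraMap R (Localization P))) := by
    apply Polynomial.ringHom_ext
    · intro r; simp [hθ, hf]
    · simp
  rw [stmap_comp, this, ← stmap_comp, hg, map_one]

theorem ph1_eq_ph2 {g : SteinbergGroup n (Polynomial R)}
    (hg : stmap (mapRingHom (algebraMap R (Localization P))) g = 1) :
    stmap (ph1 (P := P)) g = stmap (ph2 (P := P)) g := by
  rw [← mul_inv_eq_one]
  refine main_inj2 (dvB (P := P)) eps_sub eps_S ?_ ?_
  · rw [map_mul, map_inv, stmap_comp, stmap_comp, eps_ph1, mul_inv_cancel]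
  · rw [map_mul, map_inv, ph_C_cR _ _ hg, ph_C_cR _ _ hg, mul_inv_cancel]
    · intro r; exact Bext _ _ rfl rfl fun k => ph_C _ r
    · intro r; exact Bext _ _ rfl rfl fun k => ph_C _ r

theorem theta_ex : ∃ Θ : SteinbergGroup n (B0 P) →*
    Germ (atTop : Filter (Multiset P)) (SteinbergGroup n (AZ R)),
    ∀ i j (_ : i ≠ j) b, Θ (x i j b) = Germ.map (x i j) (b : B0 P).val := by
  refine exists_lift (fun i j _ b => Germ.map (x i j) (b : B0 P).val) ?_ ?_ ?_
  · intro i j h r s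
    obtain ⟨q, hq, rfl⟩ := mkB_surj r
    obtain ⟨q', hq', rfl⟩ := mkB_surj s
    exact congrArg _ (_root_.funext fun k => x_add _ _ _ _)
  · intro i j h k hij hhk hjh hik r s
    obtain ⟨q, hq, rfl⟩ := mkB_surj r
    obtain ⟨q', hq', rfl⟩ := mkB_surj s
    exact congrArg _ (_root_.funext fun _ => (x_comm hjh hik _ _).eq)
  · intro i j k hij hjk hik r s
    obtain ⟨q, hq, rfl⟩ := mkB_surj r
    obtain ⟨q', hq', rfl⟩ := mkB_surj s
    exact congrArg _ (_root_.funext fun _ => x_mul hij hjk hik _ _)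

theorem theta_fam (Θ : SteinbergGroup n (B0 P) →*
    Germ (atTop : Filter (Multiset P)) (SteinbergGroup n (AZ R)))
    (hΘ : ∀ i j (_ : i ≠ j) b, Θ (x i j b) = Germ.map (x i j) (b : B0 P).val)
    {T : Type} [CommRing T] (f : Multiset P → T →+* AZ R)
    (hf : ∀ k r p, f (k + {r}) p = sg (r : R) (f k p)) (g : SteinbergGroup n T) :
    Θ (stmap (famB f hf) g) = ((fun k => stmap (f k) g : Multiset P → SteinbergGroup n (AZ R)) :
      Germ (atTop : Filter (Multiset P)) (SteinbergGroup n (AZ R))) := by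
  refine st_ind (P := fun g => Θ (stmap (famB f hf) g) =
    ((fun k => stmap (f k) g : Multiset P → SteinbergGroup n (AZ R)) :
      Germ (atTop : Filter (Multiset P)) (SteinbergGroup n (AZ R)))) ?_ ?_ g
  · simp only [map_one]; rfl
  · intro i j h r g ih
    rw [map_mul, map_mul, ih, stmap_x, hΘ i j h]
    exact congrArg _ (_root_.funext fun k => by simp only [map_mul, stmap_x]; rfl)

theorem exists_k {g : SteinbergGroup n (Polynomial R)}
    (hg : stmap (mapRingHom (algebraMap R (Localization P))) g = 1) :
    ∃ a ∈ P, stmap (ph a) g = stmap (ph 0) g := by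
  obtain ⟨Θ, hΘ⟩ := theta_ex (n := n) (P := P)
  have h := congrArg Θ (ph1_eq_ph2 hg)
  rw [ph1, ph2, theta_fam Θ hΘ, theta_fam Θ hΘ] at h
  obtain ⟨k, hk⟩ := (Germ.coe_eq.1 h).exists
  refine ⟨sk k, ?_, hk⟩
  exact P.multiset_prod_mem _ (by
    intro a ha
    obtain ⟨b, -, rfl⟩ := Multiset.mem_map.1 ha
    exact b.2)

/-- Quillen's ideal -/
noncomputable def QI (g : SteinbergGroup n (Polynomial R)) : Ideal R where
  carrier := {a | stmap (ph a) g = stmap (ph 0) g}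
  zero_mem' := rfl
  add_mem' := by
    intro a b ha hb
    simp only [Set.mem_ofPred_eq] at ha hb ⊢
    have h1 : ph (a + b) = (eval₂RingHom (ph b) X).comp (ph a) := by
      apply Polynomial.ringHom_ext
      · intro t; simp [ph_C]
      · simp [ph_X, ph_C]; ring
    have h2 : ph b = (eval₂RingHom (ph b) X).comp (ph 0) := by
      apply Polynomial.ringHom_ext
      · intro t; simp [ph_C]
      · simp [ph_X, ph_C]
    rw [h1, ← stmap_comp, ha, stmap_comp, ← h2, hb]
  smul_mem' := by
    intro c a ha
    simp only [Set.mem_ofPred_eq] at ha ⊢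
    have h1 : ∀ a, ph (c * a) = (sg c).comp (ph a) := fun a => by
      apply Polynomial.ringHom_ext
      · intro t; simp [ph_C, sg_C]
      · simp [ph_X, sg_C, sg_X]; ring
    rw [smul_eq_mul, h1, ← stmap_comp, ha, stmap_comp, ← h1, mul_zero]

theorem final {g : SteinbergGroup n (Polynomial R)} (h0 : stmap (evalRingHom (0 : R)) g = 1)
    (h : ∀ (M : Ideal R) [M.IsMaximal],
      stmap (mapRingHom (algebraMap R (Localization.AtPrime M))) g = 1) : g = 1 := by
  have hQ : QI g = ⊤ := by
    by_contra hne
    obtain ⟨M, hM, hle⟩ := Ideal.exists_le_maximal _ hne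
    obtain ⟨a, ha, ha'⟩ := exists_k (P := M.primeCompl) (h M)
    exact ha (hle ha')
  have h1 : stmap (ph 1) g = stmap (ph 0) g := by
    have : (1 : R) ∈ QI g := by rw [hQ]; trivial
    exact this
  let τ : AZ R →+* Polynomial R := eval₂RingHom (C.comp (evalRingHom 0)) X
  have e1 : τ.comp (ph 1) = RingHom.id _ := by
    apply Polynomial.ringHom_ext
    · intro t; simp [ph_C, τ]
    · simp [ph_X, τ]
  have e2 : τ.comp (ph 0) = C.comp (evalRingHom (0 : R)) := by
    apply Polynomial.ringHom_ext
    · intro t; simp [ph_C, τ]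
    · simp [ph_X, τ]
  have h2 := congrArg (stmap τ) h1
  rw [stmap_comp, stmap_comp, e1, e2, ← stmap_comp, h0, map_one] at h2
  have h3 : stmap (RingHom.id (Polynomial R)) = MonoidHom.id (SteinbergGroup n (Polynomial R)) := by
    apply hom_ext; intros; simp [stmap_x]
  rw [h3] at h2
  exact h2

end germ
end StLG

theorem stmt1 (n : ℕ) (hn : 4 ≤ n) (R : Type) [CommRing R]
    (g : SteinbergGroup n (Polynomial R))
    (ev0 : SteinbergGroup n (Polynomial R) →* SteinbergGroup n R)
    (hev0 : ∀ (i j : Fin n) (hij : i ≠ j) (p : Polynomial R),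
      ev0 (stx n (Polynomial R) i j hij p) = stx n R i j hij (Polynomial.eval 0 p))
    (hg : ev0 g = 1) :
    g = 1 ↔
      ∀ (M : Ideal R) [M.IsMaximal]
        (lM : SteinbergGroup n (Polynomial R) →*
          SteinbergGroup n (Polynomial (Localization.AtPrime M))),
        (∀ (i j : Fin n) (hij : i ≠ j) (p : Polynomial R),
          lM (stx n (Polynomial R) i j hij p) =
            stx n (Polynomial (Localization.AtPrime M)) i j hij
              (p.map (algebraMap R (Localization.AtPrime M)))) →
        lM g = 1 := by
  haveI : Fact (4 ≤ n) := ⟨hn⟩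
  constructor
  · rintro rfl M _ lM _
    exact map_one lM
  · intro h
    refine StLG.final ?_ ?_
    · have : StLG.stmap (Polynomial.evalRingHom (0 : R)) = ev0 := StLG.hom_ext fun i j hij r => by
        rw [StLG.stmap_x, StLG.x_of_ne hij, StLG.x_of_ne hij, hev0]; rfl
      rw [this, hg]
    · intro M _
      refine h M (StLG.stmap (Polynomial.mapRingHom (algebraMap R (Localization.AtPrime M)))) ?_
      intro i j hij p
      rw [← StLG.x_of_ne hij, ← StLG.x_of_ne hij, StLG.stmap_x]; rfl
end
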